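/- arXiv:1911.01302 — 13 statements merged into one kernel-verified Lean document; each statement's English description precedes it below -/
import Mathlib

section
/- (Denjoy–Carleman theorem) Let [a,b] ⊂ ℝ with a < b and let M = (M_n)_{n∈ℕ} be a sequence of positive real numbers with M_0 = 1 and liminf_{n→∞} M_n^{1/n} = ∞. Define β_n = inf_{k≥n, k≥1} M_k^{1/k}. Then the class C_M([a,b]) is quasi-analytic (every f ∈ C_M([a,b]) all of whose derivatives vanish at some point c ∈ [a,b] is identically zero) if and only if the series ∑_{n≥1} 1/β_n diverges. -/
open Set Filter

/-- `f` belongs to the class `C_M([a,b])`: it is infinitely differentiable on `[a,b]`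
and its derivatives satisfy `|f⁽ⁿ⁾(x)| ≤ c · Cⁿ · Mₙ` for some positive constants `c, C`. -/
def MemCM (a b : ℝ) (M : ℕ → ℝ) (f : ℝ → ℝ) : Prop :=
  ContDiffOn ℝ (⊤ : ℕ∞) f (Icc a b) ∧
    ∃ c C : ℝ, 0 < c ∧ 0 < C ∧ ∀ n : ℕ, ∀ x ∈ Icc a b,
      |iteratedDerivWithin n f (Icc a b) x| ≤ c * C ^ n * M n


theorem dc_walk (ν : ℕ → ℝ) (hν : ∀ i, 0 < ν i) (w : ℕ → ℕ) (hw : ∀ i, i < w i)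
    (hw' : ∀ i, w i ≤ w (i+1)) (hmono : ∀ i j, j < w i → ν j ≤ ν i)
    (G : ℕ → ℝ → ℝ) (hG : ∀ j, ∀ t ∈ Icc (0:ℝ) 1, HasDerivWithinAt (G j) (G (j+1) t) (Icc 0 1) t)
    (hG0 : ∀ j, G j 0 = 0) (c : ℝ) (hc : 0 < c)
    (hb : ∀ i, ∀ t ∈ Icc (0:ℝ) 1, |G (w i) t| ≤ c * ∏ k ∈ Finset.range (w i), ν k)
    (hs : ¬ Summable (fun i => 1 / ν i)) : G 0 1 = 0 := by
  set Q : ℕ → ℝ := fun n => ∏ k ∈ Finset.range n, ν k with hQ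
  have hQpos : ∀ n, 0 < Q n := fun n => Finset.prod_pos fun i _ => hν i
  have hQs : ∀ n, Q (n+1) = Q n * ν n := fun n => Finset.prod_range_succ _ _
  -- growth lemma
  have grow : ∀ i D τ, 0 ≤ D → 0 ≤ τ →
      (∀ j, j < w i → |G j τ| ≤ D * (Real.exp j * Q j)) →
      (∀ t ∈ Icc (0:ℝ) 1, |G (w i) t| ≤ D * (Real.exp (w i) * Q (w i))) →
      ∀ m, m ≤ w i → ∀ t, τ ≤ t → t ≤ 1 →
        |G (w i - m) t| ≤ D * (Real.exp ((w i - m : ℕ):ℝ) * Q (w i - m)) *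
          Real.exp (Real.exp 1 * ν i * (t - τ)) := by
    intro i D τ hD hτ h1 h2 m
    induction m with
    | zero =>
      intro _ t ht ht1
      have := h2 t ⟨hτ.trans ht, ht1⟩
      simp only [Nat.sub_zero]
      refine this.trans (le_mul_of_one_le_right ?_ ?_)
      · exact mul_nonneg hD (mul_nonneg (Real.exp_pos _).le (hQpos _).le)
      · apply Real.one_le_exp
        exact mul_nonneg (mul_nonneg (Real.exp_pos _).le (hν i).le) (by linarith)
    | succ m ih =>
      intro hm t ht ht1
      have ih := ih (by omega)
      obtain ⟨j, hj⟩ : ∃ j, j = w i - (m+1) := ⟨_, rfl⟩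
      have hj1 : w i - m = j + 1 := by omega
      rw [← hj]
      rw [hj1] at ih
      have hjw : j < w i := by omega
      set κ := Real.exp 1 * ν i with hκ
      have hκpos : 0 < κ := mul_pos (Real.exp_pos _) (hν i)
      set A := D * (Real.exp (j:ℝ) * Q j) with hA
      have hAn : 0 ≤ A := mul_nonneg hD (mul_nonneg (Real.exp_pos _).le (hQpos _).le)
      have hA1 : D * (Real.exp ((j+1:ℕ):ℝ) * Q (j+1)) ≤ A * κ := by
        rw [hQs, hA, hκ]; push_cast; rw [Real.exp_add]
        have : D * (Real.exp j * Q j) * (Real.exp 1 * ν j) ≤ D * (Real.exp j * Q j) * (Real.exp 1 * ν i) := by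
          gcongr
          exact hmono i j hjw
        linarith
      have hsub : Icc τ 1 ⊆ Icc (0:ℝ) 1 := Icc_subset_Icc_left hτ
      have := image_norm_le_of_norm_deriv_right_le_deriv_boundary (f := G j) (f' := G (j+1))
        (a := τ) (b := 1) (B := fun t => A * Real.exp (κ * (t - τ)))
        (B' := fun t => A * κ * Real.exp (κ * (t - τ)))
        (fun x hx => ((hG j x (hsub hx)).continuousWithinAt).mono hsub)
        (fun x hx => (hG j x (hsub (Ico_subset_Icc_self hx))).mono_of_mem_nhdsWithin ?_)
        (by simpa using h1 j hjw) ?_ ?_ (x := t) ⟨ht, ht1⟩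
      · simpa using this
      · exact mem_of_superset (Icc_mem_nhdsGE hx.2) (Icc_subset_Icc_left (hτ.trans hx.1))
      · intro x
        have := (((((hasDerivAt_id x).sub_const τ).const_mul κ).exp).const_mul A)
        exact this.congr_deriv (by simp only [id]; ring)
      · intro x hx
        refine (ih x hx.1 hx.2.le).trans ?_
        gcongr
  -- the walk
  have walk : ∀ P i, i ≤ P → ∀ t, 0 ≤ t → t ≤ 1 →
      t ≤ ∑ k ∈ Finset.Ico i P, 1 / (Real.exp 1 * ν k) →
      ∀ j, j < w i → |G j t| ≤ c * Real.exp (-(i:ℝ)) * (Real.exp j * Q j) := by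
    intro P i hi
    induction hi using Nat.decreasingInduction with
    | self =>
      intro t h0 h1 ht j hj
      have : t = 0 := by simp at ht; linarith
      rw [this, hG0]
      simp only [abs_zero]
      have := hQpos j
      positivity
    | of_succ i hi ih =>
      intro t h0 h1 ht j hj
      have hle : c * Real.exp (-((i+1:ℕ):ℝ)) ≤ c * Real.exp (-(i:ℝ)) := by
        gcongr; simp
      have hT0 : 0 ≤ ∑ k ∈ Finset.Ico (i+1) P, 1 / (Real.exp 1 * ν k) :=
        Finset.sum_nonneg fun k _ => by have := hν k; positivity
      rw [Finset.sum_eq_sum_Ico_succ_bot hi] at ht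
      set T := ∑ k ∈ Finset.Ico (i+1) P, 1 / (Real.exp 1 * ν k) with hT
      have hEQ : ∀ j : ℕ, 0 ≤ Real.exp (j:ℝ) * Q j := fun j =>
        mul_nonneg (Real.exp_pos _).le (hQpos _).le
      rcases le_or_gt t T with h | h
      · exact (ih t h0 h1 h j (hj.trans_le (hw' i))).trans
          (mul_le_mul_of_nonneg_right hle (hEQ j))
      · have := grow i (c * Real.exp (-((i+1:ℕ):ℝ))) T (by positivity) hT0
          (fun j hj => ih T hT0 (by linarith) le_rfl j (hj.trans_le (hw' i))) ?_ (w i - j)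
          (by omega) t h.le h1
        · have e1 : w i - (w i - j) = j := by omega
          rw [e1] at this
          refine this.trans ?_
          have hk : Real.exp 1 * ν i * (t - T) ≤ 1 := by
            have hp : 0 < Real.exp 1 * ν i := mul_pos (Real.exp_pos _) (hν i)
            calc _ ≤ Real.exp 1 * ν i * (1 / (Real.exp 1 * ν i)) := by
                  gcongr; linarith
              _ = 1 := mul_one_div_cancel hp.ne'
          calc _ ≤ c * Real.exp (-((i+1:ℕ):ℝ)) * (Real.exp j * Q j) * Real.exp 1 := by
                exact mul_le_mul_of_nonneg_left (Real.exp_le_exp.2 hk)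
                  (mul_nonneg (by positivity) (hEQ j))
            _ = c * (Real.exp (-((i+1:ℕ):ℝ)) * Real.exp 1) * (Real.exp j * Q j) := by ring
            _ = _ := by rw [← Real.exp_add]; congr 3; push_cast; ring
        · intro t ht
          refine (hb i t ht).trans ?_
          have : c * Real.exp (-((i+1:ℕ):ℝ)) * (Real.exp (w i) * Q (w i))
              = c * Q (w i) * Real.exp ((w i:ℝ) - ((i+1:ℕ):ℝ)) := by
            rw [sub_eq_add_neg, Real.exp_add]; ring
          rw [this]
          refine le_mul_of_one_le_right (mul_pos hc (hQpos _)).le (Real.one_le_exp ?_)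
          have : i + 1 ≤ w i := hw i
          have : ((i+1:ℕ):ℝ) ≤ w i := by exact_mod_cast this
          linarith
  have fin : ∀ i : ℕ, |G 0 1| ≤ c * Real.exp (-(i:ℝ)) := by
    intro i
    have hs2 : ¬ Summable (fun k => 1 / (Real.exp 1 * ν (k + i))) := by
      intro h
      apply hs
      rw [← summable_nat_add_iff i]
      refine (h.mul_left (Real.exp 1)).congr fun k => ?_
      have := (hν (k+i)).ne'
      field_simp
    have ht := (not_summable_iff_tendsto_nat_atTop_of_nonneg
      (fun k => by have := hν (k+i); positivity)).1 hs2
    obtain ⟨n, hn⟩ := (ht.eventually_ge_atTop 1).exists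
    have := walk (i+n) i (by omega) 1 zero_le_one le_rfl (by
      rw [Finset.sum_Ico_eq_sum_range]
      simp only [Nat.add_sub_cancel_left]
      refine hn.trans_eq (Finset.sum_congr rfl fun k _ => by rw [add_comm])) 0 (by have := hw i; omega)
    simpa [hQ] using this
  have hlim : Tendsto (fun i : ℕ => c * Real.exp (-(i:ℝ))) atTop (nhds (c * 0)) :=
    ((Real.tendsto_exp_neg_atTop_nhds_zero).comp tendsto_natCast_atTop_atTop).const_mul c
  have := ge_of_tendsto' hlim fin
  simpa using this

theorem dc_minorant (M : ℕ → ℝ) (hMpos : ∀ n, 0 < M n) (hM0 : M 0 = 1)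
    (hlim : Tendsto (fun n : ℕ => (M n) ^ (1 / (n : ℝ))) atTop atTop) :
    ∃ (ν : ℕ → ℝ) (w : ℕ → ℕ), (∀ i, 0 < ν i) ∧ (∀ i, i < w i) ∧ (∀ i, w i ≤ w (i+1)) ∧
      (∀ i j, j < w i → ν j ≤ ν i) ∧ (∀ i, ∏ k ∈ Finset.range (w i), ν k = M (w i)) ∧
      (∀ n, ∏ k ∈ Finset.range n, ν k ≤ M n) := by
  have hlog : Tendsto (fun n : ℕ => Real.log (M n) / n) atTop atTop := by
    refine (Real.tendsto_log_atTop.comp hlim).congr fun n => ?_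
    simp only [Function.comp]
    rw [Real.log_rpow (hMpos n)]; ring
  set σ : ℕ → ℕ → ℝ := fun q k => (Real.log (M k) - Real.log (M q)) / ((k:ℝ) - q) with hσ
  have hex : ∀ q, ∃ k, q < k ∧ ∀ k', q < k' → σ q k ≤ σ q k' := by
    intro q
    have ht : Tendsto (fun k => σ q k) atTop atTop := by
      have h1 : Tendsto (fun k : ℕ => Real.log (M k) / k - |Real.log (M q)|) atTop atTop :=
        tendsto_atTop_add_const_right _ _ hlog
      refine tendsto_atTop_mono' _ ?_ h1
      filter_upwards [eventually_gt_atTop q, hlog.eventually_ge_atTop 0, eventually_gt_atTop 0]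
        with k hk hk0 hkp
      have hk' : (q:ℝ) + 1 ≤ k := by exact_mod_cast hk
      have hkp' : (0:ℝ) < k := by exact_mod_cast hkp
      have hd : 0 < (k:ℝ) - q := by linarith
      have hl : 0 ≤ Real.log (M k) := by
        have := mul_nonneg hk0 hkp'.le
        rwa [div_mul_cancel₀ _ hkp'.ne'] at this
      simp only [hσ]
      rw [sub_div]
      have e1 : Real.log (M k) / k ≤ Real.log (M k) / ((k:ℝ) - q) := by
        apply div_le_div_of_nonneg_left hl hd
        have : (0:ℝ) ≤ q := by positivity
        linarith
      have e2 : Real.log (M q) / ((k:ℝ) - q) ≤ |Real.log (M q)| := by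
        rw [div_le_iff₀ hd]
        calc _ ≤ |Real.log (M q)| * 1 := by rw [mul_one]; exact le_abs_self _
          _ ≤ _ := by gcongr; linarith
      linarith
    obtain ⟨N, hN⟩ := (eventually_atTop.1 (ht.eventually_ge_atTop (σ q (q+1))))
    obtain ⟨k, hk, hmin⟩ := Finset.exists_min_image (Finset.Ioc q (max N (q+1))) (σ q)
      ⟨q+1, by simp⟩
    simp only [Finset.mem_Ioc] at hk hmin
    refine ⟨k, hk.1, fun k' hk' => ?_⟩
    by_cases h : k' ≤ max N (q+1)
    · exact hmin k' ⟨hk', h⟩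
    · exact (hmin (q+1) (by simp)).trans (hN k' (by have := le_max_left N (q+1); omega))
  choose nx hnx hnxmin using hex
  set b : ℕ → ℕ := fun i => Nat.rec 0 (fun i bi => if i + 1 = nx bi then i + 1 else bi) i with hb
  have hb0 : b 0 = 0 := rfl
  have hbs : ∀ i, b (i+1) = if i + 1 = nx (b i) then i + 1 else b i := fun i => rfl
  have hbi : ∀ i, b i ≤ i ∧ i < nx (b i) := by
    intro i
    induction i with
    | zero => rw [hb0]; exact ⟨le_rfl, hnx 0⟩
    | succ i ih =>
      rw [hbs]
      split_ifs with h
      · exact ⟨le_rfl, hnx _⟩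
      · exact ⟨by omega, by omega⟩
  set s : ℕ → ℝ := fun i => σ (b i) (nx (b i)) with hs
  have lowlog : ∀ q k, q < k → Real.log (M q) + σ q (nx q) * ((k:ℝ) - q) ≤ Real.log (M k) := by
    intro q k hk
    have hd : 0 < (k:ℝ) - q := by
      have : (q:ℝ) < k := by exact_mod_cast hk
      linarith
    have := hnxmin q k hk
    have h2 : σ q k * ((k:ℝ)-q) = Real.log (M k) - Real.log (M q) := div_mul_cancel₀ _ hd.ne'
    have := mul_le_mul_of_nonneg_right this hd.le
    linarith
  have eqlog : ∀ q, Real.log (M (nx q)) = Real.log (M q) + σ q (nx q) * ((nx q:ℝ) - q) := by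
    intro q
    have hd : 0 < (nx q:ℝ) - q := by
      have : (q:ℝ) < nx q := by exact_mod_cast hnx q
      linarith
    have h2 : σ q (nx q) * ((nx q:ℝ)-q) = Real.log (M (nx q)) - Real.log (M q) :=
      div_mul_cancel₀ _ hd.ne'
    linarith
  have smono : Monotone s := by
    refine monotone_nat_of_le_succ fun i => ?_
    simp only [hs]
    rw [hbs]
    split_ifs with h
    · rw [h]
      set q := b i
      set p := nx q
      set r := nx p
      have h1 := lowlog q r ((hnx q).trans (hnx p))
      have h2 := eqlog q
      have h3 := eqlog p
      have hd : 0 < (r:ℝ) - p := by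
        have : (p:ℝ) < r := by exact_mod_cast hnx p
        linarith
      refine le_of_mul_le_mul_right ?_ hd
      simp only [p, r] at *
      nlinarith
    · exact le_rfl
  have hsum : ∀ n, ∑ k ∈ Finset.range n, s k = Real.log (M (b n)) + s n * ((n:ℝ) - b n) := by
    intro n
    induction n with
    | zero => simp [hb0, hM0]
    | succ n ih =>
      rw [Finset.sum_range_succ, ih]
      by_cases h : n + 1 = nx (b n)
      · have e : b (n+1) = n+1 := by rw [hbs, if_pos h]
        rw [e]
        have := eqlog (b n)
        rw [← h] at this
        rw [this]
        simp only [hs]; rw [← h]; push_cast; ring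
      · have e : b (n+1) = b n := by rw [hbs, if_neg h]
        have e2 : s (n+1) = s n := by simp only [hs, e]
        rw [e, e2]; push_cast; ring
  have hprod : ∀ n, ∏ k ∈ Finset.range n, Real.exp (s k) = Real.exp (∑ k ∈ Finset.range n, s k) :=
    fun n => (Real.exp_sum _ _).symm
  have hblk : ∀ i d, i + d < nx (b i) → b (i+d) = b i := by
    intro i d
    induction d with
    | zero => intro _; rfl
    | succ d ih =>
      intro h
      have := ih (by omega)
      rw [← add_assoc, hbs, this, if_neg (by omega)]
  refine ⟨fun i => Real.exp (s i), fun i => nx (b i), fun i => Real.exp_pos _, fun i => (hbi i).2,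
    ?_, ?_, ?_, ?_⟩
  · intro i
    simp only
    rw [hbs]
    split_ifs with h
    · rw [← h]; exact (hnx _).le
    · exact le_rfl
  · intro i j hj
    simp only
    refine Real.exp_le_exp.2 ?_
    rcases le_total j i with h | h
    · exact smono h
    · obtain ⟨d, rfl⟩ := Nat.exists_eq_add_of_le h
      simp only [hs]
      rw [hblk i d hj]
  · intro i
    rw [hprod, hsum]
    obtain ⟨d, hd⟩ := Nat.exists_eq_add_of_le (Nat.succ_le_of_lt (hbi i).2)
    have e : b (nx (b i)) = nx (b i) := by
      have h1 : nx (b i) = (i + d) + 1 := by omega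
      have h2 := hblk i d (by omega)
      conv_lhs => rw [h1]
      rw [hbs, h2, if_pos h1.symm, h1]
    rw [e]; simp [Real.exp_log (hMpos _)]
  · intro n
    rw [hprod, hsum, ← Real.le_log_iff_exp_le (hMpos _)]
    rcases (hbi n).1.eq_or_lt with h | h
    · rw [h]; simp
    · exact lowlog _ _ h

theorem dc_carleman (ν : ℕ → ℝ) (hν : ∀ i, 0 < ν i) (y : ℕ → ℝ) (hy : ∀ n, 0 ≤ y n)
    (h : ∀ n, y n ^ (n+1) ≤ ∏ k ∈ Finset.range (n+1), 1 / ν k)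
    (hs : Summable fun i => 1 / ν i) : Summable y := by
  set a : ℕ → ℝ := fun i => 1 / ν i with ha
  have hap : ∀ i, 0 < a i := fun i => by have := hν i; positivity
  set S : ℕ → ℝ := fun n => ∑ i ∈ Finset.range n, ((i:ℝ)+1) * a i with hS
  have hSn : ∀ n, 0 ≤ S n := fun n => Finset.sum_nonneg fun i _ => by have := hap i; positivity
  have key : ∀ n, y n ≤ Real.exp 1 * 2 * (S (n+1) / (((n:ℝ)+1) * (n+2))) := by
    intro n
    have hn : (0:ℝ) < (n:ℝ)+1 := by positivity
    have h1 : ∏ i ∈ Finset.range (n+1), (((i:ℝ)+1) * a i) ≤ (S (n+1) / (n+1)) ^ (n+1) := by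
      have := Real.geom_mean_le_arith_mean_weighted (Finset.range (n+1)) (fun _ => 1/((n:ℝ)+1))
        (fun i => ((i:ℝ)+1) * a i) (fun _ _ => by positivity) (by simp; field_simp)
        (fun i _ => by have := hap i; positivity)
      rw [Real.finsetProd_rpow _ _ (fun i _ => by have := hap i; positivity), ← Finset.mul_sum] at this
      have h0 : 0 ≤ ∏ i ∈ Finset.range (n+1), (((i:ℝ)+1) * a i) :=
        Finset.prod_nonneg fun i _ => by have := hap i; positivity
      have h2 := pow_le_pow_left₀ (Real.rpow_nonneg h0 _) this (n+1)
      rw [← Real.rpow_natCast, ← Real.rpow_mul h0] at h2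
      have e : 1 / ((n:ℝ)+1) * ((n+1:ℕ):ℝ) = 1 := by push_cast; field_simp
      rw [e, Real.rpow_one] at h2
      refine h2.trans_eq ?_
      congr 1; rw [hS]; ring
    have h2 : ∏ i ∈ Finset.range (n+1), (((i:ℝ)+1) * a i) =
        ((n+1).factorial : ℝ) * ∏ i ∈ Finset.range (n+1), a i := by
      rw [Finset.prod_mul_distrib]; congr 1
      rw [← Finset.prod_range_add_one_eq_factorial]; push_cast; rfl
    have h3 := Real.pow_div_factorial_le_exp ((n+1:ℕ):ℝ) (by positivity) (n+1)
    have hf : (0:ℝ) < ((n+1).factorial : ℝ) := by positivity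
    rw [div_le_iff₀ hf] at h3
    have h4 : y n ^ (n+1) ≤ (Real.exp 1 * S (n+1) / ((n:ℝ)+1)^2) ^ (n+1) := by
      refine (h n).trans ?_
      rw [h2] at h1
      have hP : 0 ≤ ∏ i ∈ Finset.range (n+1), a i := Finset.prod_nonneg fun i _ => (hap i).le
      have e : (Real.exp 1 * S (n+1) / ((n:ℝ)+1)^2) ^ (n+1) =
          Real.exp ((n+1:ℕ):ℝ) * (S (n+1) / (n+1)) ^ (n+1) / (((n+1:ℕ):ℝ))^(n+1) := by
        rw [← Real.exp_one_pow, ← mul_pow, ← div_pow]; congr 1; push_cast; field_simp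
      rw [e, le_div_iff₀ (by positivity)]
      calc _ ≤ (∏ i ∈ Finset.range (n+1), a i) * (Real.exp ((n+1:ℕ):ℝ) * ((n+1).factorial : ℝ)) :=
            mul_le_mul_of_nonneg_left h3 hP
        _ = Real.exp ((n+1:ℕ):ℝ) * (((n+1).factorial : ℝ) * ∏ i ∈ Finset.range (n+1), a i) := by ring
        _ ≤ _ := by gcongr
    have h5 := le_of_pow_le_pow_left₀ (Nat.succ_ne_zero n)
      (div_nonneg (mul_nonneg (Real.exp_pos _).le (hSn _)) (by positivity)) h4
    refine h5.trans ?_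
    have e : Real.exp 1 * 2 * (S (n+1) / (((n:ℝ)+1) * (n+2))) =
      Real.exp 1 * S (n+1) * (2 / (((n:ℝ)+1) * (n+2))) := by ring
    rw [e, div_eq_mul_inv]
    refine mul_le_mul_of_nonneg_left ?_ (mul_nonneg (Real.exp_pos _).le (hSn _))
    rw [inv_eq_one_div, div_le_div_iff₀ (by positivity) (by positivity)]
    nlinarith
  have tele : ∀ N, ∑ n ∈ Finset.range N, S (n+1) / (((n:ℝ)+1) * (n+2)) =
      ∑ i ∈ Finset.range (N+1), a i - S (N+1) / (N+1) := by
    intro N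
    induction N with
    | zero => simp [hS]
    | succ N ih =>
      rw [Finset.sum_range_succ, ih, Finset.sum_range_succ _ (N+1)]
      have : S (N+1+1) = S (N+1) + ((N:ℝ)+1+1) * a (N+1) := by
        simp only [hS]; rw [Finset.sum_range_succ _ (N+1)]; push_cast; rfl
      rw [this]; push_cast
      have : (N:ℝ)+1 ≠ 0 := by positivity
      have : (N:ℝ)+2 ≠ 0 := by positivity
      have : (N:ℝ)+1+1 ≠ 0 := by positivity
      field_simp
      ring
  have hsum : Summable fun n : ℕ => S (n+1) / (((n:ℝ)+1) * (n+2)) := by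
    refine summable_of_sum_range_le (c := ∑' i, a i) (fun n => div_nonneg (hSn _) (by positivity)) ?_
    intro N
    rw [tele]
    have h1 := hs.sum_le_tsum (Finset.range (N+1)) (fun i _ => (hap i).le)
    have h2 : 0 ≤ S (N+1) / ((N:ℝ)+1) := div_nonneg (hSn _) (by positivity)
    linarith
  exact Summable.of_nonneg_of_le hy key (hsum.mul_left _)

/-- averaging operator -/
noncomputable def dcA (a : ℝ) (u : ℝ → ℝ) (x : ℝ) : ℝ := ∫ s in (0:ℝ)..1, u (x - a * s)

theorem dcA_abs_sub (a : ℝ) (u v : ℝ → ℝ) (hu : Continuous u) (hv : Continuous v) (x y d : ℝ)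
    (h : ∀ s ∈ Icc (0:ℝ) 1, |u (x - a * s) - v (y - a * s)| ≤ d) :
    |dcA a u x - dcA a v y| ≤ d := by
  unfold dcA
  rw [← intervalIntegral.integral_sub]
  · have := intervalIntegral.norm_integral_le_of_norm_le_const (a := (0:ℝ)) (b := 1) (C := d)
      (f := fun s => u (x - a * s) - v (y - a * s)) (fun s hs => h s (by
        rw [uIoc_of_le zero_le_one] at hs; exact ⟨hs.1.le, hs.2⟩))
    simpa using this
  · exact (by fun_prop : Continuous fun s => u (x - a * s)).intervalIntegrable _ _
  · exact (by fun_prop : Continuous fun s => v (y - a * s)).intervalIntegrable _ _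

theorem dcA_const (a c x : ℝ) : dcA a (fun _ => c) x = c := by simp [dcA]

theorem dcA_hasDerivAt (a : ℝ) (ha : 0 < a) (u : ℝ → ℝ) (hu : Continuous u) (x : ℝ) :
    HasDerivAt (dcA a u) (a⁻¹ * (u x - u (x - a))) x := by
  have e : dcA a u = fun x => a⁻¹ * ((∫ t in (0:ℝ)..x, u t) - ∫ t in (0:ℝ)..(x - a), u t) := by
    funext x
    unfold dcA
    rw [intervalIntegral.integral_interval_sub_left (hu.intervalIntegrable _ _)
      (hu.intervalIntegrable _ _)]
    have := intervalIntegral.integral_comp_sub_mul (a := (0:ℝ)) (b := 1) u ha.ne' x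
    rw [this]; simp
  rw [e]
  have h1 : ∀ y, HasDerivAt (fun x => ∫ t in (0:ℝ)..x, u t) (u y) y := fun y =>
    intervalIntegral.integral_hasDerivAt_right (hu.intervalIntegrable _ _)
      hu.stronglyMeasurable.stronglyMeasurableAtFilter hu.continuousAt
  have h2 : HasDerivAt (fun x => ∫ t in (0:ℝ)..(x-a), u t) (u (x - a)) x :=
    HasDerivAt.comp_sub_const x a (h1 (x-a))
  exact ((h1 x).sub h2).const_mul _

theorem dc_F (a : ℕ → ℝ) (ha : ∀ i, 0 < a i) (hs : Summable a) :
    ∃ F : ℕ → ℝ → ℝ, (∀ k, Continuous (F k)) ∧ (∀ k x, |F k x| ≤ 1) ∧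
      (∀ k, F k = dcA (a k) (F (k+1))) ∧ (∀ k x, x ≤ 0 → F k x = 0) ∧
      (∀ x, |F 0 x - max 0 (min x 1)| ≤ ∑' i, a i) := by
  set φ : ℝ → ℝ := fun x => max 0 (min x 1) with hφ
  -- H m k = A_k ... A_{k+m-1} φ
  set H : ℕ → ℕ → ℝ → ℝ := fun m => Nat.rec (fun _ => φ)
    (fun _ Hm k => dcA (a k) (Hm (k+1))) m with hH
  have H0 : ∀ k, H 0 k = φ := fun k => rfl
  have Hs : ∀ m k, H (m+1) k = dcA (a k) (H m (k+1)) := fun m k => rfl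
  have lipφ : ∀ x y, |φ x - φ y| ≤ |x - y| := by
    intro x y
    have h1 := abs_max_sub_max_le_abs (min x 1) (min y 1) 0
    have h2 := abs_min_sub_min_le_max x 1 y 1
    simp only [hφ]
    rw [max_comm 0, max_comm 0]
    refine h1.trans (h2.trans ?_)
    simp
  have cont_of_lip : ∀ u : ℝ → ℝ, (∀ x y, |u x - u y| ≤ |x - y|) → Continuous u := by
    intro u hu
    have : LipschitzWith 1 u := LipschitzWith.of_dist_le_mul fun x y => by
      simpa [Real.dist_eq] using hu x y
    exact this.continuous
  have Hlip : ∀ m k x y, |H m k x - H m k y| ≤ |x - y| := by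
    intro m
    induction m with
    | zero => intro k; exact lipφ
    | succ m ih =>
      intro k x y
      rw [Hs]
      have hc := cont_of_lip _ (ih (k+1))
      refine dcA_abs_sub _ _ _ hc hc x y _ fun s _ => ?_
      refine (ih _ _ _).trans_eq ?_
      congr 1; ring
  have Hc : ∀ m k, Continuous (H m k) := fun m k => cont_of_lip _ (Hlip m k)
  have Hb : ∀ m k x, |H m k x| ≤ 1 := by
    intro m
    induction m with
    | zero =>
      intro k x
      rw [H0]; simp only [hφ]
      rw [abs_of_nonneg (le_max_left _ _)]
      exact max_le zero_le_one (min_le_right _ _)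
    | succ m ih =>
      intro k x
      rw [Hs]
      have := dcA_abs_sub (a k) (H m (k+1)) (fun _ => 0) (Hc _ _) continuous_const x x 1
        (fun s _ => by simpa using ih _ _)
      simpa [dcA_const] using this
  have Hz : ∀ m k x, x ≤ 0 → H m k x = 0 := by
    intro m
    induction m with
    | zero =>
      intro k x hx
      rw [H0]; simp only [hφ]
      exact max_eq_left ((min_le_left _ _).trans hx)
    | succ m ih =>
      intro k x hx
      rw [Hs]
      have := dcA_abs_sub (a k) (H m (k+1)) (fun _ => 0) (Hc _ _) continuous_const x x 0
        (fun s hs' => by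
          rw [ih (k+1) _ (by nlinarith [ha k, hs'.1, mul_nonneg (ha k).le hs'.1])]; simp)
      simpa [dcA_const] using this
  have Hd : ∀ m k x, |H m k x - H (m+1) k x| ≤ a (k+m) := by
    intro m
    induction m with
    | zero =>
      intro k x
      rw [Hs, H0]
      have := dcA_abs_sub (a k) (fun _ => φ x) (H 0 (k+1)) continuous_const (Hc 0 (k+1)) x x (a k)
        (fun s hs' => by
          rw [H0]
          refine (lipφ _ _).trans ?_
          have h0 := mul_nonneg (ha k).le hs'.1
          rw [show x - (x - a k * s) = a k * s by ring, abs_of_nonneg h0]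
          nlinarith [ha k, hs'.2])
      simpa [dcA_const] using this
    | succ m ih =>
      intro k x
      rw [Hs, Hs (m+1)]
      refine dcA_abs_sub (a k) _ _ (Hc m (k+1)) (Hc (m+1) (k+1)) x x _ fun s _ => ?_
      refine (ih _ _).trans_eq ?_
      congr 1; ring
  have hsk : ∀ k, Summable fun m => a (k+m) := fun k => by
    have := (summable_nat_add_iff k).2 hs
    exact this.congr fun m => by rw [add_comm]
  have hex : ∀ k x, ∃ l, Tendsto (fun m => H m k x) atTop (nhds l) := by
    intro k x
    refine cauchySeq_tendsto_of_complete (cauchySeq_of_dist_le_of_summable (fun m => a (k+m)) ?_ (hsk k))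
    intro m
    rw [Real.dist_eq]; exact Hd m k x
  choose F hF using hex
  have Fb : ∀ k x, |F k x| ≤ 1 := fun k x =>
    le_of_tendsto' ((hF k x).abs) fun m => Hb m k x
  refine ⟨F, fun k => cont_of_lip _ fun x y =>
      le_of_tendsto' ((hF k x).sub (hF k y)).abs fun m => Hlip m k x y, Fb, ?_, ?_, ?_⟩
  · intro k
    funext x
    refine tendsto_nhds_unique ((hF k x).comp (tendsto_add_atTop_nat 1)) ?_
    have := intervalIntegral.tendsto_integral_filter_of_dominated_convergence
      (μ := MeasureTheory.volume) (a := (0:ℝ)) (b := 1) (l := atTop)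
      (F := fun m s => H m (k+1) (x - a k * s)) (f := fun s => F (k+1) (x - a k * s))
      (fun _ => 1)
      (Eventually.of_forall fun m => by
        have := Hc m (k+1)
        exact (by fun_prop : Continuous fun s => H m (k+1) (x - a k * s)).aestronglyMeasurable)
      (Eventually.of_forall fun m => Eventually.of_forall fun s _ => Hb _ _ _)
      (by simp)
      (Eventually.of_forall fun s _ => hF _ _)
    exact this
  · intro k x hx
    refine tendsto_nhds_unique (hF k x) ?_
    simp only [Hz _ k x hx]
    exact tendsto_const_nhds
  · intro x
    have := dist_le_tsum_of_dist_le_of_tendsto₀ (f := fun m => H m 0 x) (fun m => a m)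
      (fun m => by rw [Real.dist_eq]; simpa using Hd m 0 x) hs (hF 0 x)
    rw [Real.dist_eq, abs_sub_comm] at this
    exact this

/-- iterated differences -/
noncomputable def dcD (a : ℕ → ℝ) : ℕ → (ℝ → ℝ) → ℝ → ℝ
  | 0, u => u
  | n+1, u => dcD a n (fun x => (a n)⁻¹ * (u x - u (x - a n)))

theorem dcD_bound (a : ℕ → ℝ) (ha : ∀ i, 0 < a i) (n : ℕ) : ∀ (u : ℝ → ℝ) (B : ℝ),
    (∀ x, |u x| ≤ B) → ∀ x, |dcD a n u x| ≤ (∏ i ∈ Finset.range n, (2 * (a i)⁻¹)) * B := by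
  induction n with
  | zero => intro u B h x; simpa [dcD] using h x
  | succ n ih =>
    intro u B h x
    rw [dcD, Finset.prod_range_succ, mul_assoc]
    refine ih _ _ (fun x => ?_) x
    have := inv_pos.2 (ha n)
    rw [abs_mul, abs_of_pos this]
    have h1 := (abs_sub (u x) (u (x - a n))).trans (add_le_add (h x) (h _))
    nlinarith

theorem dcD_zero (a : ℕ → ℝ) (ha : ∀ i, 0 < a i) (n : ℕ) : ∀ (u : ℝ → ℝ),
    (∀ x, x ≤ 0 → u x = 0) → ∀ x, x ≤ 0 → dcD a n u x = 0 := by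
  induction n with
  | zero => intro u h x; simpa [dcD] using h x
  | succ n ih =>
    intro u h
    rw [dcD]
    refine ih _ (fun x hx => ?_)
    rw [h x hx, h _ (by linarith [ha n])]; simp

theorem dcD_deriv (a : ℕ → ℝ) (n : ℕ) : ∀ (u u' : ℝ → ℝ),
    (∀ x, HasDerivAt u (u' x) x) → ∀ x, HasDerivAt (dcD a n u) (dcD a n u' x) x := by
  induction n with
  | zero => intro u u' h x; simpa [dcD] using h x
  | succ n ih =>
    intro u u' h
    simp only [dcD]
    refine ih _ _ fun x => ?_
    exact ((h x).sub (HasDerivAt.comp_sub_const x (a n) (h _))).const_mul _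

theorem dc_construct (a : ℕ → ℝ) (ha : ∀ i, 0 < a i) (hs : Summable a) :
    ∃ G : ℕ → ℝ → ℝ, (∀ n x, HasDerivAt (G n) (G (n+1) x) x) ∧ (∀ n, G n 0 = 0) ∧
      (∀ n x, |G n x| ≤ ∏ i ∈ Finset.range n, (2 * (a i)⁻¹)) ∧
      (∀ x, |G 0 x - max 0 (min x 1)| ≤ ∑' i, a i) := by
  obtain ⟨F, hc, hb, hA, hz, hne⟩ := dc_F a ha hs
  refine ⟨fun n => dcD a n (F n), fun n x => ?_, fun n => ?_, fun n x => ?_, hne⟩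
  · refine dcD_deriv a n _ _ (fun x => ?_) x
    rw [hA n]
    exact dcA_hasDerivAt (a n) (ha n) _ (hc _) x
  · exact dcD_zero a ha n _ (hz n) 0 le_rfl
  · simpa using dcD_bound a ha n _ 1 (hb n) x

theorem dc_iter (G : ℕ → ℝ → ℝ) (hG : ∀ n x, HasDerivAt (G n) (G (n+1) x) x) :
    ∀ n, iteratedDeriv n (G 0) = G n := by
  intro n
  induction n with
  | zero => exact iteratedDeriv_zero
  | succ n ih => rw [iteratedDeriv_succ, ih]; funext x; exact (hG n x).deriv

theorem dc_div (a b : ℝ) (hab : a < b) (M : ℕ → ℝ) (hMpos : ∀ n, 0 < M n)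
    (hM0 : M 0 = 1)
    (hliminf : Filter.Tendsto (fun n : ℕ => (M n) ^ (1 / (n : ℝ)))
      Filter.atTop Filter.atTop)
    (β : ℕ → ℝ)
    (hβ : ∀ n : ℕ, β n = sInf {y : ℝ | ∃ k : ℕ, n ≤ k ∧ 1 ≤ k ∧ y = (M k) ^ (1 / (k : ℝ))})
    (hns : ¬ Summable (fun n : ℕ => 1 / β (n + 1))) (f : ℝ → ℝ) (hf : MemCM a b M f)
    (c : ℝ) (hc : c ∈ Icc a b) (h0 : ∀ n : ℕ, iteratedDerivWithin n f (Icc a b) c = 0)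
    (y : ℝ) (hy : y ∈ Icc a b) : f y = 0 := by
  obtain ⟨hsm, c₀, C, hc₀, hC, hbd⟩ := hf
  obtain ⟨ν, w, hν, hw, hw', hmono, hvert, hlow⟩ := dc_minorant M hMpos hM0 hliminf
  have hνm : Monotone ν := monotone_nat_of_le_succ fun i => by
    rcases lt_or_ge i (w (i+1)) with h | h
    · exact hmono _ _ h
    · exact absurd (hw (i+1)) (by omega)
  have hνs : ¬ Summable fun i => 1 / ν i := by
    intro hs
    apply hns
    have hr : ∀ n, ∃ r : ℝ, 0 < r ∧ r ^ (n+1) = ∏ k ∈ Finset.range (n+1), ν k := by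
      intro n
      have hp : 0 < ∏ k ∈ Finset.range (n+1), ν k := Finset.prod_pos fun i _ => hν i
      refine ⟨(∏ k ∈ Finset.range (n+1), ν k) ^ (1 / ((n+1:ℕ):ℝ)), Real.rpow_pos_of_pos hp _, ?_⟩
      rw [one_div]
      exact Real.rpow_inv_natCast_pow hp.le (Nat.succ_ne_zero n)
    choose r hrp hr using hr
    have hrβ : ∀ n, r n ≤ β (n+1) := by
      intro n
      rw [hβ]
      refine le_csInf ⟨_, n+1, le_rfl, by omega, rfl⟩ ?_
      rintro z ⟨k, hk, hk1, rfl⟩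
      have hrν : ∀ k, n + 1 ≤ k → r n ≤ ν k := by
        intro k hk
        refine le_of_pow_le_pow_left₀ (Nat.succ_ne_zero n) (hν k).le ?_
        rw [Nat.succ_eq_add_one, hr]
        calc _ ≤ ∏ _i ∈ Finset.range (n+1), ν k := by
              refine Finset.prod_le_prod (fun i _ => (hν i).le) fun i hi => hνm ?_
              have := Finset.mem_range.1 hi
              omega
          _ = _ := by simp
      have hk2 : r n ^ k ≤ ∏ i ∈ Finset.range k, ν i := by
        induction k, hk using Nat.le_induction with
        | base => exact (hr n).le
        | succ k hk ih =>
          rw [pow_succ, Finset.prod_range_succ]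
          have := ih (by omega)
          exact mul_le_mul this (hrν k hk) (hrp n).le ((pow_pos (hrp n) _).le.trans this)
      have hk3 := hk2.trans (hlow k)
      have := Real.rpow_le_rpow (pow_pos (hrp n) _).le hk3 (z := 1/(k:ℝ)) (by positivity)
      rw [one_div, Real.pow_rpow_inv_natCast (hrp n).le (by omega)] at this
      rwa [one_div]
    refine dc_carleman ν hν _ (fun n => ?_) (fun n => ?_) hs
    · have := (hrp n).trans_le (hrβ n)
      positivity
    · calc (1 / β (n+1)) ^ (n+1) ≤ (1 / r n) ^ (n+1) := by
            have h1 := hrp n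
            have h2 := hrβ n
            have h3 := h1.trans_le h2
            gcongr
        _ = _ := by rw [div_pow, hr]; simp
  set L := b - a with hL
  have hLp : 0 < L := by rw [hL]; linarith
  set K := C * L with hK
  have hKp : 0 < K := mul_pos hC hLp
  have hyc : |y - c| ≤ L := by
    rw [abs_le, hL]; constructor <;> linarith [hc.1, hc.2, hy.1, hy.2]
  have huniq : UniqueDiffOn ℝ (Icc a b) := uniqueDiffOn_Icc hab
  have hmaps : MapsTo (fun t : ℝ => c + t * (y - c)) (Icc 0 1) (Icc a b) := by
    intro t ht
    have := (convex_Icc a b) hc hy (sub_nonneg.2 ht.2) ht.1 (by ring)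
    convert this using 1
    simp; ring
  have main := dc_walk (fun i => K * ν i) (fun i => mul_pos hKp (hν i)) w hw hw'
    (fun i j hj => mul_le_mul_of_nonneg_left (hmono i j hj) hKp.le)
    (fun j t => (y - c)^j * iteratedDerivWithin j f (Icc a b) (c + t * (y - c)))
    ?_ (fun j => by simp [h0]) c₀ hc₀ ?_ ?_
  · simpa using main
  · intro j t ht
    have hd := (hsm.differentiableOn_iteratedDerivWithin (m := j)
      (by exact_mod_cast WithTop.coe_lt_top j) huniq _ (hmaps ht)).hasDerivWithinAt
    rw [← iteratedDerivWithin_succ] at hd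
    have h2 : HasDerivWithinAt (fun t : ℝ => c + t * (y - c)) (y - c) (Icc 0 1) t := by
      have := (((hasDerivAt_id t).mul_const (y - c)).const_add c).hasDerivWithinAt (s := Icc 0 1)
      simpa using this
    have := (hd.scomp t h2 hmaps).const_mul ((y-c)^j)
    exact this.congr_deriv (by simp only [smul_eq_mul]; ring)
  · intro i t ht
    rw [Finset.prod_mul_distrib, hvert, abs_mul, abs_pow]
    simp only [Finset.prod_const, Finset.card_range]
    calc _ ≤ L ^ (w i) * (c₀ * C ^ (w i) * M (w i)) := by
          gcongr
          exact hbd _ _ (hmaps ht)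
      _ = _ := by rw [hK, mul_pow]; ring
  · intro h
    apply hνs
    refine (h.mul_left K).congr fun i => ?_
    have := (hν i).ne'
    field_simp

theorem dc_conv (a b : ℝ) (hab : a < b) (M : ℕ → ℝ) (hMpos : ∀ n, 0 < M n)
    (hM0 : M 0 = 1)
    (hliminf : Filter.Tendsto (fun n : ℕ => (M n) ^ (1 / (n : ℝ)))
      Filter.atTop Filter.atTop)
    (β : ℕ → ℝ)
    (hβ : ∀ n : ℕ, β n = sInf {y : ℝ | ∃ k : ℕ, n ≤ k ∧ 1 ≤ k ∧ y = (M k) ^ (1 / (k : ℝ))})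
    (hs : Summable (fun n : ℕ => 1 / β (n + 1))) :
    ∃ f, MemCM a b M f ∧ (∀ n : ℕ, iteratedDerivWithin n f (Icc a b) a = 0) ∧ f b ≠ 0 := by
  have hbdd : ∀ n : ℕ, BddBelow {y : ℝ | ∃ k : ℕ, n ≤ k ∧ 1 ≤ k ∧ y = (M k) ^ (1 / (k : ℝ))} := by
    intro n
    refine ⟨0, ?_⟩
    rintro z ⟨k, _, _, rfl⟩
    exact Real.rpow_nonneg (hMpos k).le _
  have hβle : ∀ n k, n ≤ k → 1 ≤ k → β n ≤ (M k) ^ (1 / (k:ℝ)) := by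
    intro n k h1 h2
    rw [hβ]
    exact csInf_le (hbdd n) ⟨k, h1, h2, rfl⟩
  have hβm : Monotone β := by
    intro m n hmn
    rw [hβ n]
    refine le_csInf ⟨_, n+1, by omega, by omega, rfl⟩ ?_
    rintro z ⟨k, h1, h2, rfl⟩
    exact hβle m k (hmn.trans h1) h2
  have hβpos : ∀ n, 0 < β n := by
    -- a positive lower bound for all roots
    obtain ⟨N, hN⟩ := eventually_atTop.1 (hliminf.eventually_ge_atTop 1)
    obtain ⟨k, hk, hmin⟩ := Finset.exists_min_image (Finset.range (N+1))
      (fun k : ℕ => (M k) ^ (1 / (k:ℝ))) ⟨0, by simp⟩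
    intro n
    have hp : 0 < min 1 ((M k) ^ (1 / (k:ℝ))) := lt_min one_pos (Real.rpow_pos_of_pos (hMpos k) _)
    refine hp.trans_le ?_
    rw [hβ n]
    refine le_csInf ⟨_, n+1, by omega, by omega, rfl⟩ ?_
    rintro z ⟨k', h1, h2, rfl⟩
    by_cases h : k' < N + 1
    · exact (min_le_right _ _).trans (hmin k' (Finset.mem_range.2 h))
    · exact (min_le_left _ _).trans (hN k' (by omega))
  have hβM : ∀ n, ∏ i ∈ Finset.range n, β (i+1) ≤ M n := by
    intro n
    rcases Nat.eq_zero_or_pos n with rfl | hn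
    · simp [hM0]
    · calc _ ≤ ∏ _i ∈ Finset.range n, β n := by
            refine Finset.prod_le_prod (fun i _ => (hβpos _).le) fun i hi => hβm ?_
            have := Finset.mem_range.1 hi
            omega
        _ = β n ^ n := by simp
        _ ≤ ((M n) ^ (1 / (n:ℝ))) ^ n := by
            have := hβpos n
            have := hβle n n le_rfl hn
            gcongr
        _ = M n := by
            rw [one_div]; exact Real.rpow_inv_natCast_pow (hMpos n).le (by omega)
  set T := ∑' n, 1 / β (n+1) with hT
  have hT0 : 0 ≤ T := tsum_nonneg fun n => by have := hβpos (n+1); positivity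
  set l := min (b - a) 1 with hl
  have hlp : 0 < l := lt_min (by linarith) one_pos
  set ε := l / (T + 1) with hε
  have hεp : 0 < ε := by positivity
  have hεT : ε * T < l := by
    rw [hε, div_mul_eq_mul_div, div_lt_iff₀ (by positivity)]
    nlinarith
  obtain ⟨G, hG, hG0, hGb, hGne⟩ := dc_construct (fun i => ε * (1 / β (i+1)))
    (fun i => by have := hβpos (i+1); positivity) (hs.mul_left ε)
  set g : ℕ → ℝ → ℝ := fun n x => G n (x - a) with hg
  have hgd : ∀ n x, HasDerivAt (g n) (g (n+1) x) x := fun n x =>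
    HasDerivAt.comp_sub_const x a (hG n (x - a))
  have hit := dc_iter g hgd
  have hsm : ContDiff ℝ (⊤ : ℕ∞) (g 0) := by
    refine contDiff_of_differentiable_iteratedDeriv fun m _ => ?_
    rw [hit]
    exact fun x => (hgd m x).differentiableAt
  have hitw : ∀ n, ∀ x ∈ Icc a b, iteratedDerivWithin n (g 0) (Icc a b) x = g n x := by
    intro n x hx
    rw [iteratedDerivWithin_eq_iteratedDeriv (uniqueDiffOn_Icc hab)
      ((hsm.of_le (by exact_mod_cast le_top)).contDiffAt) hx, hit]
  refine ⟨g 0, ⟨hsm.contDiffOn, 1, 2 / ε, one_pos, by positivity, ?_⟩, ?_, ?_⟩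
  · intro n x hx
    rw [hitw n x hx]
    refine (hGb n (x - a)).trans ?_
    have e : ∏ i ∈ Finset.range n, (2 * (ε * (1 / β (i+1)))⁻¹) =
        (2 / ε)^n * ∏ i ∈ Finset.range n, β (i+1) := by
      have : ∀ i, 2 * (ε * (1 / β (i+1)))⁻¹ = (2/ε) * β (i+1) := by
        intro i
        have := (hβpos (i+1)).ne'
        field_simp
      simp only [this]
      rw [Finset.prod_mul_distrib, Finset.prod_const, Finset.card_range]
    rw [e, one_mul]
    exact mul_le_mul_of_nonneg_left (hβM n) (by positivity)
  · intro n
    rw [hitw n a (left_mem_Icc.2 hab.le)]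
    simp [hg, hG0]
  · have h1 := hGne (b - a)
    rw [tsum_mul_left, ← hT, ← hl, max_eq_right hlp.le] at h1
    simp only [hg]
    intro h
    rw [h, zero_sub, abs_neg, abs_of_pos hlp] at h1
    linarith

/-- The Denjoy–Carleman theorem: with `βₙ = inf_{k ≥ n, k ≥ 1} Mₖ^{1/k}`, the class
`C_M([a,b])` is quasi-analytic iff `∑ 1/βₙ` diverges. The hypothesis
`liminf Mₙ^{1/n} = ∞` is phrased as `Mₙ^{1/n} → ∞`. -/
theorem stmt_2 (a b : ℝ) (hab : a < b) (M : ℕ → ℝ) (hMpos : ∀ n, 0 < M n)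
    (hM0 : M 0 = 1)
    (hliminf : Filter.Tendsto (fun n : ℕ => (M n) ^ (1 / (n : ℝ)))
      Filter.atTop Filter.atTop)
    (β : ℕ → ℝ)
    (hβ : ∀ n : ℕ, β n = sInf {y : ℝ | ∃ k : ℕ, n ≤ k ∧ 1 ≤ k ∧ y = (M k) ^ (1 / (k : ℝ))}) :
    (∀ f : ℝ → ℝ, MemCM a b M f →
      ∀ c ∈ Icc a b, (∀ n : ℕ, iteratedDerivWithin n f (Icc a b) c = 0) →
        ∀ x ∈ Icc a b, f x = 0)
    ↔ ¬ Summable (fun n : ℕ => 1 / β (n + 1)) := by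
  constructor
  · intro h hs
    obtain ⟨f, hf, h0, hne⟩ := dc_conv a b hab M hMpos hM0 hliminf β hβ hs
    exact hne (h f hf a (left_mem_Icc.2 hab.le) h0 b (right_mem_Icc.2 hab.le))
  · intro hns f hf c hc h0 x hx
    exact dc_div a b hab M hMpos hM0 hliminf β hβ hns f hf c hc h0 x hx
end

section
/- Let N = (N_n)_{n∈ℕ} be a log-convex sequence of positive real numbers with N_0 = 1. Then the series ∑_{n≥1} 1/N_n^{1/n} diverges if and only if the series ∑_{n≥1} N_{n-1}/N_n diverges. -/
theorem aux_sum (x : ℕ → ℝ) (M : ℕ) :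
    ∑ n ∈ Finset.range M, (1 / (((n:ℝ)+1)*((n:ℝ)+2))) * ∑ i ∈ Finset.range (n+1), x i
      = ∑ i ∈ Finset.range M, x i / ((i:ℝ)+1) - (1/((M:ℝ)+1)) * ∑ i ∈ Finset.range M, x i := by
  induction M with
  | zero => simp
  | succ M ih =>
    rw [Finset.sum_range_succ, ih, Finset.sum_range_succ x M,
      Finset.sum_range_succ (fun i => x i / ((i:ℝ)+1)) M]
    push_cast
    have h1 : (M:ℝ)+1 ≠ 0 := by positivity
    have h2 : (M:ℝ)+2 ≠ 0 := by positivity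
    have h3 : (M:ℝ)+1+1 ≠ 0 := by positivity
    field_simp
    ring

theorem aux_prod (N : ℕ → ℝ) (hNpos : ∀ n, 0 < N n) (hN0 : N 0 = 1) (n : ℕ) :
    ∏ i ∈ Finset.range n, (N i / N (i+1) * (((i:ℝ)+2)^(i+1) / ((i:ℝ)+1)^i))
      = ((n:ℝ)+1)^n / N n := by
  induction n with
  | zero => simp [hN0]
  | succ n ih =>
    rw [Finset.prod_range_succ, ih]
    have h1 : (n:ℝ)+1 ≠ 0 := by positivity
    have := (hNpos n).ne'
    have := (hNpos (n+1)).ne'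
    push_cast
    have h3 : (n:ℝ)+1+1 = n+2 := by ring
    rw [h3]
    field_simp

theorem aux_term (N : ℕ → ℝ) (hNpos : ∀ n, 0 < N n) (hN0 : N 0 = 1) (n : ℕ) :
    1 / (N (n + 1)) ^ (1 / ((n : ℝ) + 1)) ≤ (1 / (((n:ℝ)+1)*((n:ℝ)+2))) *
      ∑ i ∈ Finset.range (n+1), (N i / N (i+1) * (((i:ℝ)+2)^(i+1) / ((i:ℝ)+1)^i)) := by
  have h := Real.geom_mean_le_arith_mean (Finset.range (n+1)) (fun _ => 1)
    (fun i => N i / N (i+1) * (((i:ℝ)+2)^(i+1) / ((i:ℝ)+1)^i)) (by simp)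
    (by simp; positivity)
    (by
      intro i _
      have := hNpos i
      have := hNpos (i+1)
      positivity)
  simp only [Real.rpow_one, one_mul] at h
  rw [aux_prod N hNpos hN0] at h
  have h3 : ((n:ℝ)+1+1) = n+2 := by ring
  simp only [Finset.sum_const, Finset.card_range, nsmul_eq_mul, mul_one] at h
  rw [Real.div_rpow (by positivity) (hNpos _).le,
    Real.pow_rpow_inv_natCast (by positivity) (by omega)] at h
  push_cast at h
  rw [h3] at h
  have hp : 0 < N (n + 1) ^ (1 / ((n : ℝ) + 1)) := Real.rpow_pos_of_pos (hNpos _) _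
  rw [← one_div] at h
  have e1 : 1 / (N (n + 1)) ^ (1 / ((n : ℝ) + 1))
    = (1/((n:ℝ)+2)) * (((n:ℝ)+2) / (N (n + 1)) ^ (1 / ((n : ℝ) + 1))) := by
    field_simp
  rw [e1]
  refine (mul_le_mul_of_nonneg_left h (by positivity)).trans (le_of_eq ?_)
  field_simp

theorem aux_c (i : ℕ) : (((i:ℝ)+2)^(i+1) / ((i:ℝ)+1)^i) / ((i:ℝ)+1) ≤ Real.exp 1 := by
  have e : (((i:ℝ)+2)^(i+1) / ((i:ℝ)+1)^i) / ((i:ℝ)+1) = (1/((i:ℝ)+1) + 1)^(i+1) := by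
    rw [div_div, ← pow_succ, ← div_pow]
    congr 1
    field_simp
    ring
  rw [e]
  refine (pow_le_pow_left₀ (by positivity) (Real.add_one_le_exp _) _).trans (le_of_eq ?_)
  rw [← Real.exp_nat_mul]
  congr 1
  push_cast
  field_simp

theorem stmt_5 (N : ℕ → ℝ) (hNpos : ∀ n, 0 < N n) (hN0 : N 0 = 1)
    (hlogconvex : ∀ n : ℕ, 1 ≤ n → (N n) ^ 2 ≤ N (n - 1) * N (n + 1)) :
    (¬ Summable (fun n : ℕ => 1 / (N (n + 1)) ^ (1 / ((n : ℝ) + 1))))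
      ↔ ¬ Summable (fun n : ℕ => N n / N (n + 1)) := by
  have hapos : ∀ n, 0 < N n / N (n+1) := fun n => div_pos (hNpos _) (hNpos _)
  rw [not_iff_not]
  constructor
  · intro h
    refine Summable.of_nonneg_of_le (fun n => (hapos n).le) (fun n => ?_) h
    have anti : Antitone (fun n => N n / N (n+1)) := by
      refine antitone_nat_of_succ_le fun n => ?_
      have := hlogconvex (n+1) (by omega)
      simp only [Nat.add_sub_cancel] at this
      rw [div_le_div_iff₀ (hNpos _) (hNpos _)]
      linarith [sq (N (n+1))]
    have key : ∀ m, m ≤ n + 1 → (N n / N (n+1))^m ≤ 1 / N m := by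
      intro m
      induction m with
      | zero => simp [hN0]
      | succ m ih =>
        intro hm
        have h1 := ih (by omega)
        have h2 : N n / N (n+1) ≤ N m / N (m+1) := anti (by omega : m ≤ n)
        rw [pow_succ]
        refine (mul_le_mul h1 h2 (hapos n).le (by have := hNpos m; positivity)).trans
          (le_of_eq ?_)
        have := (hNpos m).ne'
        field_simp
    have k := key (n+1) le_rfl
    have k2 := Real.rpow_le_rpow (pow_nonneg (hapos n).le _) k
      (by positivity : (0:ℝ) ≤ (((n+1:ℕ):ℝ))⁻¹)
    rw [Real.pow_rpow_inv_natCast (hapos n).le (by omega),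
      Real.div_rpow zero_le_one (hNpos _).le, Real.one_rpow, ← one_div] at k2
    push_cast at k2
    exact k2
  · intro h
    refine summable_of_sum_range_le (c := Real.exp 1 * ∑' n, N n / N (n+1))
      (fun n => by have := Real.rpow_pos_of_pos (hNpos (n+1)) (1 / ((n : ℝ) + 1)); positivity)
      (fun M => ?_)
    refine (Finset.sum_le_sum fun n _ => aux_term N hNpos hN0 n).trans ?_
    rw [aux_sum]
    have hnn : 0 ≤ (1/((M:ℝ)+1)) * ∑ i ∈ Finset.range M,
        (N i / N (i+1) * (((i:ℝ)+2)^(i+1) / ((i:ℝ)+1)^i)) := by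
      refine mul_nonneg (by positivity) (Finset.sum_nonneg fun i _ => ?_)
      exact mul_nonneg (hapos i).le (by positivity)
    refine (sub_le_self _ hnn).trans ?_
    refine le_trans ?_ (mul_le_mul_of_nonneg_left
      (h.sum_le_tsum (Finset.range M) (fun i _ => (hapos i).le)) (Real.exp_pos 1).le)
    rw [Finset.mul_sum]
    refine Finset.sum_le_sum fun i _ => ?_
    rw [mul_div_assoc, mul_comm]
    exact mul_le_mul_of_nonneg_right (aux_c i) (hapos i).le
end

section
/- Let N = (N_n)_{n∈ℕ} be a log-convex sequence of positive real numbers with N_0 = 1. Then ∑_{n=1}^∞ 1/N_n^{1/n} ≤ e · ∑_{n=1}^∞ N_{n-1}/N_n (an inequality between values in [0,∞]). -/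
/-- Weights in the proof of Carleman's inequality (Pólya). -/
noncomputable def carlX (N : ℕ → ℝ) (i : ℕ) : ℝ :=
  ((i : ℝ) + 2) ^ (i + 1) / ((i : ℝ) + 1) ^ i * (N i / N (i + 1))

theorem carlX_pos (N : ℕ → ℝ) (h : ∀ n, 0 < N n) (i : ℕ) : 0 < carlX N i := by
  have h1 := h i
  have h2 := h (i + 1)
  unfold carlX
  positivity

theorem carlX_prod (N : ℕ → ℝ) (h : ∀ n, 0 < N n) (h0 : N 0 = 1) (m : ℕ) :
    ∏ i ∈ Finset.range m, carlX N i = ((m : ℝ) + 1) ^ m / N m := by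
  induction m with
  | zero => simp [h0]
  | succ m ih =>
    have h1 := (h m).ne'
    have h2 := (h (m + 1)).ne'
    have h3 : (m : ℝ) + 1 ≠ 0 := by positivity
    rw [Finset.prod_range_succ, ih, carlX]
    push_cast
    have h4 : (m : ℝ) + 1 + 1 = m + 2 := by ring
    rw [h4]
    field_simp

theorem carl_term (N : ℕ → ℝ) (h : ∀ n, 0 < N n) (h0 : N 0 = 1) (n : ℕ) :
    1 / (N (n + 1)) ^ (1 / ((n : ℝ) + 1)) ≤
      (∑ i ∈ Finset.range (n + 1), carlX N i) / (((n : ℝ) + 1) * ((n : ℝ) + 2)) := by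
  have key := Real.geom_mean_le_arith_mean (Finset.range (n + 1)) (fun _ => (1 : ℝ)) (carlX N)
    (fun _ _ => zero_le_one) (by simp; positivity) (fun i _ => (carlX_pos N h i).le)
  simp only [Real.rpow_one, one_mul, carlX_prod N h h0, Finset.sum_const, Finset.card_range,
    nsmul_eq_mul, mul_one] at key
  have hN := h (n + 1)
  have e1 : (((n + 1 : ℕ) : ℝ) + 1) = n + 2 := by push_cast; ring
  have hp : (0 : ℝ) ≤ (n : ℝ) + 2 := by positivity
  rw [e1, Real.div_rpow (by positivity) hN.le, Real.pow_rpow_inv_natCast hp (by omega)] at key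
  push_cast at key
  rw [one_div ((n : ℝ) + 1)]
  have hR : 0 < N (n + 1) ^ ((n : ℝ) + 1)⁻¹ := Real.rpow_pos_of_pos hN _
  rw [← div_div, le_div_iff₀ (by positivity)]
  calc _ = ((n : ℝ) + 2) / N (n + 1) ^ ((n : ℝ) + 1)⁻¹ := by ring
    _ ≤ _ := key

theorem carl_sum (x : ℕ → ℝ) (M : ℕ) :
    ∑ n ∈ Finset.range M, (∑ i ∈ Finset.range (n + 1), x i) / (((n : ℝ) + 1) * ((n : ℝ) + 2))
      = ∑ i ∈ Finset.range M, x i / ((i : ℝ) + 1)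
        - (∑ i ∈ Finset.range M, x i) / ((M : ℝ) + 1) := by
  induction M with
  | zero => simp
  | succ M ih =>
    rw [Finset.sum_range_succ, ih, Finset.sum_range_succ _ M, Finset.sum_range_succ _ M]
    push_cast
    have h3 : (M : ℝ) + 1 ≠ 0 := by positivity
    have h4 : (M : ℝ) + 2 ≠ 0 := by positivity
    have h5 : (M : ℝ) + 1 + 1 = M + 2 := by ring
    rw [h5]
    field_simp
    ring

theorem carl_exp (N : ℕ → ℝ) (h : ∀ n, 0 < N n) (i : ℕ) :
    carlX N i / ((i : ℝ) + 1) ≤ Real.exp 1 * (N i / N (i + 1)) := by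
  have h3 : (0 : ℝ) < (i : ℝ) + 1 := by positivity
  have e : carlX N i / ((i : ℝ) + 1)
      = (1 / ((i : ℝ) + 1) + 1) ^ (i + 1) * (N i / N (i + 1)) := by
    have : 1 / ((i : ℝ) + 1) + 1 = ((i : ℝ) + 2) / ((i : ℝ) + 1) := by field_simp; ring
    rw [this, carlX, div_pow, pow_succ ((i : ℝ) + 1) i]
    field_simp
  rw [e]
  refine mul_le_mul_of_nonneg_right ?_ (div_pos (h i) (h (i + 1))).le
  calc (1 / ((i : ℝ) + 1) + 1) ^ (i + 1) ≤ Real.exp (1 / ((i : ℝ) + 1)) ^ (i + 1) :=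
        pow_le_pow_left₀ (by positivity) (Real.add_one_le_exp _) _
    _ = Real.exp 1 := by
        rw [← Real.exp_nat_mul]
        congr 1
        push_cast
        field_simp

theorem stmt_6 (N : ℕ → ℝ) (hNpos : ∀ n, 0 < N n) (hN0 : N 0 = 1)
    (hlogconvex : ∀ n : ℕ, 1 ≤ n → (N n) ^ 2 ≤ N (n - 1) * N (n + 1)) :
    ∑' n : ℕ, ENNReal.ofReal (1 / (N (n + 1)) ^ (1 / ((n : ℝ) + 1)))
      ≤ ENNReal.ofReal (Real.exp 1) * ∑' n : ℕ, ENNReal.ofReal (N n / N (n + 1)) := by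
  have hq : ∀ i, 0 ≤ N i / N (i + 1) := fun i => (div_pos (hNpos i) (hNpos (i + 1))).le
  rw [ENNReal.tsum_eq_iSup_nat]
  refine iSup_le fun M => ?_
  rw [← ENNReal.ofReal_sum_of_nonneg
    (fun i _ => one_div_nonneg.2 (Real.rpow_nonneg (hNpos (i + 1)).le _))]
  have hreal : ∑ n ∈ Finset.range M, 1 / (N (n + 1)) ^ (1 / ((n : ℝ) + 1))
      ≤ Real.exp 1 * ∑ n ∈ Finset.range M, N n / N (n + 1) := by
    calc _ ≤ _ := Finset.sum_le_sum fun n _ => carl_term N hNpos hN0 n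
      _ = _ := carl_sum _ M
      _ ≤ ∑ i ∈ Finset.range M, carlX N i / ((i : ℝ) + 1) :=
        sub_le_self _ (div_nonneg (Finset.sum_nonneg fun i _ => (carlX_pos N hNpos i).le)
          (by positivity))
      _ ≤ ∑ i ∈ Finset.range M, Real.exp 1 * (N i / N (i + 1)) :=
        Finset.sum_le_sum fun i _ => carl_exp N hNpos i
      _ = _ := (Finset.mul_sum _ _ _).symm
  refine (ENNReal.ofReal_le_ofReal hreal).trans ?_
  rw [ENNReal.ofReal_mul (Real.exp_pos 1).le, ENNReal.ofReal_sum_of_nonneg (fun i _ => hq i)]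
  gcongr
  exact ENNReal.sum_le_tsum _
end

section
/- Let [a,b] ⊂ ℝ with a < b and let M = (M_n)_{n∈ℕ} be a log-convex sequence of positive real numbers with M_0 = 1 such that ∑_{n=0}^∞ M_n/M_{n+1} = ∞. Let f be an infinitely differentiable function on [a,b] with |f^(n)(t)| ≤ M_n for all n ∈ ℕ and all t ∈ [a,b]. If there exists t_0 ∈ [a,b] such that f^(n)(t_0) = 0 for all n ∈ ℕ, then f is identically zero on [a,b]. -/
open Set

lemma dc_ratio (M : ℕ → ℝ) (hMpos : ∀ n, 0 < M n)
    (hlc : ∀ n : ℕ, 1 ≤ n → (M n) ^ 2 ≤ M (n - 1) * M (n + 1)) (j k : ℕ) (h : j ≤ k) :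
    M (j + 1) / M j ≤ M (k + 1) / M k := by
  have : Monotone (fun n => M (n + 1) / M n) := by
    apply monotone_nat_of_le_succ
    intro n
    have h1 := hlc (n + 1) (by omega)
    simp only [Nat.add_sub_cancel] at h1
    rw [div_le_div_iff₀ (hMpos _) (hMpos _)]
    nlinarith
  exact this h

/-- One step of Bang's argument, to the right. -/
lemma dc_step (b : ℝ) (a : ℝ) (M : ℕ → ℝ) (hMpos : ∀ n, 0 < M n)
    (hlc : ∀ n : ℕ, 1 ≤ n → (M n) ^ 2 ≤ M (n - 1) * M (n + 1))
    (g : ℕ → ℝ → ℝ)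
    (hg : ∀ n, ∀ t ∈ Icc a b, HasDerivWithinAt (g n) (g (n + 1) t) (Icc a b) t)
    (hb : ∀ n, ∀ t ∈ Icc a b, |g n t| ≤ M n)
    (k : ℕ) (x y : ℝ) (hx : a ≤ x) (hxy : x ≤ y) (hy : y ≤ b)
    (hP : ∀ j, |g j x| ≤ Real.exp ((j : ℝ) - (k + 1 : ℕ)) * M j)
    (hd : y - x ≤ M k / M (k + 1) / Real.exp 1) :
    ∀ j, |g j y| ≤ Real.exp ((j : ℝ) - k) * M j := by
  set c : ℝ := Real.exp 1 * (M (k + 1) / M k) with hc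
  have hMk := hMpos k
  have hMk1 := hMpos (k + 1)
  have hc0 : 0 < c := by positivity
  have key : ∀ i j : ℕ, j + i = k + 1 → ∀ s ∈ Icc x b,
      |g j s| ≤ Real.exp ((j : ℝ) - (k + 1 : ℕ)) * M j * Real.exp (c * (s - x)) := by
    intro i
    induction i with
    | zero =>
      intro j hj s hs
      have hj' : j = k + 1 := by omega
      subst hj'
      have h1 := hb (k + 1) s ⟨hx.trans hs.1, hs.2⟩
      have h2 : 1 ≤ Real.exp (c * (s - x)) :=
        Real.one_le_exp (mul_nonneg hc0.le (sub_nonneg.2 hs.1))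
      simp only [sub_self, Real.exp_zero, one_mul]
      nlinarith
    | succ i ih =>
      intro j hj s hs
      have ih' := ih (j + 1) (by omega)
      have hsub : Icc x b ⊆ Icc a b := Icc_subset_Icc_left hx
      have hMj := hMpos j
      have hr := dc_ratio M hMpos hlc j k (by omega)
      have := image_norm_le_of_norm_deriv_right_le_deriv_boundary (f := g j) (a := x) (b := b)
        (f' := g (j + 1))
        (B := fun s => Real.exp ((j : ℝ) - (k + 1 : ℕ)) * M j * Real.exp (c * (s - x)))
        (B' := fun s => Real.exp ((j : ℝ) - (k + 1 : ℕ)) * M j * (Real.exp (c * (s - x)) * c))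
        (fun t ht => ((hg j t (hsub ht)).continuousWithinAt).mono hsub)
        (fun t ht => by
          have h1 := hg j t (hsub ⟨ht.1, ht.2.le⟩)
          exact h1.mono_of_mem_nhdsWithin
            (Filter.mem_of_superset (Icc_mem_nhdsGE_of_mem ht) hsub))
        (by simpa using hP j)
        (fun t => by
          have h1 : HasDerivAt (fun s : ℝ => c * (s - x)) c t := by
            simpa using ((hasDerivAt_id t).sub_const x).const_mul c
          exact h1.exp.const_mul _)
        (fun t ht => by
          refine (ih' t ⟨ht.1, ht.2.le⟩).trans ?_
          have e1 : Real.exp (((j + 1 : ℕ) : ℝ) - (k + 1 : ℕ))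
              = Real.exp 1 * Real.exp ((j : ℝ) - (k + 1 : ℕ)) := by
            rw [← Real.exp_add]; congr 1; push_cast; ring
          have e2 : M (j + 1) ≤ M (k + 1) / M k * M j := (div_le_iff₀ hMj).1 hr
          rw [e1, hc]
          calc _ ≤ Real.exp 1 * Real.exp ((j : ℝ) - (k + 1 : ℕ)) * (M (k + 1) / M k * M j)
                * Real.exp (Real.exp 1 * (M (k + 1) / M k) * (t - x)) := by gcongr
            _ = _ := by ring) hs
      simpa using this
  intro j
  have hya : y ∈ Icc a b := ⟨hx.trans hxy, hy⟩
  have hMj := hMpos j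
  rcases le_or_gt j (k + 1) with hj | hj
  · refine (key (k + 1 - j) j (by omega) y ⟨hxy, hy⟩).trans ?_
    have h1 : c * (y - x) ≤ 1 := by
      calc c * (y - x) ≤ c * (M k / M (k + 1) / Real.exp 1) := by gcongr
        _ = 1 := by rw [hc]; field_simp
    calc _ ≤ Real.exp ((j : ℝ) - (k + 1 : ℕ)) * M j * Real.exp 1 := by gcongr
      _ = Real.exp ((j : ℝ) - (k + 1 : ℕ)) * Real.exp 1 * M j := by ring
      _ = _ := by rw [← Real.exp_add]; congr 2; push_cast; ring
  · refine (hb j y hya).trans ?_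
    have h1 : (1 : ℝ) ≤ Real.exp ((j : ℝ) - k) := by
      apply Real.one_le_exp
      have : (k : ℝ) ≤ j := by exact_mod_cast (by omega : k ≤ j)
      linarith
    nlinarith

lemma dc_right (a b : ℝ) (M : ℕ → ℝ) (hMpos : ∀ n, 0 < M n)
    (hlc : ∀ n : ℕ, 1 ≤ n → (M n) ^ 2 ≤ M (n - 1) * M (n + 1))
    (hdiv : ¬ Summable (fun n : ℕ => M n / M (n + 1)))
    (g : ℕ → ℝ → ℝ)
    (hg : ∀ n, ∀ t ∈ Icc a b, HasDerivWithinAt (g n) (g (n + 1) t) (Icc a b) t)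
    (hb : ∀ n, ∀ t ∈ Icc a b, |g n t| ≤ M n)
    (t₀ : ℝ) (ht₀ : t₀ ∈ Icc a b) (hz : ∀ n, g n t₀ = 0)
    (y : ℝ) (hy : y ∈ Icc t₀ b) : g 0 y = 0 := by
  have hP : ∀ i k : ℕ, ∀ s ∈ Icc t₀ b,
      s - t₀ ≤ (∑ n ∈ Finset.range i, M (k + n) / M (k + n + 1)) / Real.exp 1 →
      ∀ j, |g j s| ≤ Real.exp ((j : ℝ) - k) * M j := by
    intro i
    induction i with
    | zero =>
      intro k s hs h j
      simp only [Finset.range_zero, Finset.sum_empty, zero_div] at h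
      have : s = t₀ := le_antisymm (by linarith) hs.1
      rw [this, hz]
      have := hMpos j
      simp only [abs_zero]
      positivity
    | succ i ih =>
      intro k s hs h
      rw [Finset.sum_range_succ', add_div] at h
      simp only [add_zero] at h
      have hMk := hMpos k
      have hMk1 := hMpos (k + 1)
      have hd0 : 0 < M k / M (k + 1) / Real.exp 1 := by positivity
      have hx1 : max t₀ (s - M k / M (k + 1) / Real.exp 1) ≤ s :=
        max_le hs.1 (by linarith)
      refine dc_step b a M hMpos hlc g hg hb k (max t₀ (s - M k / M (k + 1) / Real.exp 1)) s
        (ht₀.1.trans (le_max_left _ _)) hx1 hs.2 ?_ ?_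
      · refine ih (k + 1) _ ⟨le_max_left _ _, hx1.trans hs.2⟩ ?_
        have e : ∑ n ∈ Finset.range i, M (k + (n + 1)) / M (k + (n + 1) + 1)
            = ∑ n ∈ Finset.range i, M (k + 1 + n) / M (k + 1 + n + 1) :=
          Finset.sum_congr rfl fun n _ => by rw [show k + (n + 1) = k + 1 + n by omega]
        rw [e] at h
        have hnn : 0 ≤ (∑ n ∈ Finset.range i, M (k + 1 + n) / M (k + 1 + n + 1)) / Real.exp 1 :=
          div_nonneg (Finset.sum_nonneg fun n _ => (div_pos (hMpos _) (hMpos _)).le)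
            (Real.exp_pos _).le
        rcases max_cases t₀ (s - M k / M (k + 1) / Real.exp 1) with h1 | h1 <;> linarith
      · linarith [le_max_right t₀ (s - M k / M (k + 1) / Real.exp 1)]
  have hall : ∀ k : ℕ, |g 0 y| ≤ Real.exp (-(k : ℝ)) * M 0 := by
    intro k
    have h1 : ¬ Summable (fun n : ℕ => M (k + n) / M (k + n + 1)) := by
      intro h
      apply hdiv
      rw [← summable_nat_add_iff k]
      simpa [add_comm, add_left_comm, add_assoc] using h
    have h2 := (not_summable_iff_tendsto_nat_atTop_of_nonneg
      (fun n => (div_pos (hMpos (k + n)) (hMpos (k + n + 1))).le)).1 h1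
    obtain ⟨i, hi⟩ := (h2.eventually_ge_atTop ((y - t₀) * Real.exp 1)).exists
    have := hP i k y hy ((le_div_iff₀ (Real.exp_pos 1)).2 hi) 0
    simpa using this
  have hlim : Filter.Tendsto (fun k : ℕ => Real.exp (-(k : ℝ)) * M 0) Filter.atTop (nhds 0) := by
    have := (Real.tendsto_exp_neg_atTop_nhds_zero.comp
      (tendsto_natCast_atTop_atTop (R := ℝ))).mul_const (M 0)
    simpa using this
  have h3 : |g 0 y| ≤ 0 := ge_of_tendsto' hlim hall
  exact abs_nonpos_iff.1 h3

theorem stmt_10 (a b : ℝ) (hab : a < b) (M : ℕ → ℝ) (hMpos : ∀ n, 0 < M n)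
    (hM0 : M 0 = 1)
    (hlogconvex : ∀ n : ℕ, 1 ≤ n → (M n) ^ 2 ≤ M (n - 1) * M (n + 1))
    (hdiv : ¬ Summable (fun n : ℕ => M n / M (n + 1)))
    (f : ℝ → ℝ) (hf : ContDiffOn ℝ (⊤ : ℕ∞) f (Icc a b))
    (hbound : ∀ n : ℕ, ∀ t ∈ Icc a b, |iteratedDerivWithin n f (Icc a b) t| ≤ M n)
    (t₀ : ℝ) (ht₀ : t₀ ∈ Icc a b)
    (hzero : ∀ n : ℕ, iteratedDerivWithin n f (Icc a b) t₀ = 0) :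
    ∀ x ∈ Icc a b, f x = 0 := by
  intro x hx
  have hg : ∀ n, ∀ t ∈ Icc a b, HasDerivWithinAt (iteratedDerivWithin n f (Icc a b))
      (iteratedDerivWithin (n + 1) f (Icc a b) t) (Icc a b) t := by
    intro n t ht
    rw [iteratedDerivWithin_succ]
    exact ((hf.differentiableOn_iteratedDerivWithin (m := n)
      (by exact_mod_cast ENat.natCast_lt_top n) (uniqueDiffOn_Icc hab)) t ht).hasDerivWithinAt
  rcases le_total t₀ x with h | h
  · have := dc_right a b M hMpos hlogconvex hdiv _ hg hbound t₀ ht₀ hzero x ⟨h, hx.2⟩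
    simpa using this
  · have := dc_right (-b) (-a) M hMpos hlogconvex hdiv
      (fun n t => (-1) ^ n * iteratedDerivWithin n f (Icc a b) (-t))
      (fun n t ht => by
        have ht' : -t ∈ Icc a b := ⟨by linarith [ht.2], by linarith [ht.1]⟩
        have h1 := (hg n (-t) ht').scomp t (hasDerivAt_neg t).hasDerivWithinAt
          (s := Icc (-b) (-a)) (fun u hu => ⟨by linarith [hu.2], by linarith [hu.1]⟩)
        have h2 := h1.const_mul ((-1 : ℝ) ^ n)
        refine h2.congr_deriv ?_
        simp only [smul_eq_mul]
        ring)
      (fun n t ht => by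
        have ht' : -t ∈ Icc a b := ⟨by linarith [ht.2], by linarith [ht.1]⟩
        simpa [abs_mul] using hbound n (-t) ht')
      (-t₀) ⟨by linarith [ht₀.2], by linarith [ht₀.1]⟩
      (fun n => by simp [hzero]) (-x) ⟨by linarith, by linarith [hx.1]⟩
    simpa using this
end

section
/- (Gontcharoff) Let [a,b] ⊂ ℝ with a < b and let f be a real-analytic function on [a,b]. Let (x_n)_{n∈ℕ} be a sequence of points of [a,b] such that the series ∑_{n=1}^∞ |x_{n-1} − x_n| converges. If f^(n)(x_n) = 0 for all n ∈ ℕ, then f is identically zero on [a,b]. -/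
open Set

lemma gon_int (J : Set ℝ) (hJ : Convex ℝ J) (g g' : ℝ → ℝ)
    (hg : ∀ t ∈ J, HasDerivWithinAt g (g' t) J t) (p y : ℝ) (hp : p ∈ J) (hy : y ∈ J)
    (h0 : g p = 0) (M s : ℝ) (hM : 0 ≤ M) (hs : 0 ≤ s) (k : ℕ)
    (hb : ∀ t ∈ J, |g' t| ≤ M * (|t - p| + s) ^ k / (k.factorial : ℝ)) :
    |g y| ≤ M * (|y - p| + s) ^ (k + 1) / ((k + 1).factorial : ℝ) := by
  have hmap : MapsTo (fun u : ℝ => p + u * (y - p)) (Icc 0 1) J := by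
    intro u hu
    have := hJ.add_smul_sub_mem hp hy hu
    simpa using this
  have hd : ∀ u ∈ Icc (0 : ℝ) 1, HasDerivWithinAt (fun u : ℝ => g (p + u * (y - p)))
      (g' (p + u * (y - p)) * (y - p)) (Icc 0 1) u := by
    intro u hu
    have h1 : HasDerivWithinAt (fun u : ℝ => p + u * (y - p)) (y - p) (Icc 0 1) u := by
      have := ((hasDerivAt_id u).mul_const (y - p)).const_add p
      simpa using this.hasDerivWithinAt
    exact (hg _ (hmap hu)).comp u h1 hmap
  have hk : ((k + 1).factorial : ℝ) = (k + 1) * (k.factorial : ℝ) := by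
    rw [Nat.factorial_succ]; push_cast; ring
  have hkpos : (0 : ℝ) < k.factorial := by positivity
  have hB : ∀ u : ℝ, HasDerivAt
      (fun u : ℝ => M * (u * |y - p| + s) ^ (k + 1) / ((k + 1).factorial : ℝ))
      (M * (u * |y - p| + s) ^ k / (k.factorial : ℝ) * |y - p|) u := by
    intro u
    have h1 : HasDerivAt (fun u : ℝ => u * |y - p| + s) (|y - p|) u := by
      have := ((hasDerivAt_id u).mul_const (|y - p|)).add_const s
      simpa using this
    have h2 := ((h1.pow (k + 1)).const_mul M).div_const ((k + 1).factorial : ℝ)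
    refine h2.congr_deriv ?_
    rw [hk]
    field_simp
    push_cast
    ring
  have := image_norm_le_of_norm_deriv_right_le_deriv_boundary'
    (f := fun u : ℝ => g (p + u * (y - p))) (a := 0) (b := 1)
    (f' := fun u => g' (p + u * (y - p)) * (y - p))
    (B := fun u : ℝ => M * (u * |y - p| + s) ^ (k + 1) / ((k + 1).factorial : ℝ))
    (B' := fun u => M * (u * |y - p| + s) ^ k / (k.factorial : ℝ) * |y - p|)
    (fun u hu => (hd u hu).continuousWithinAt)
    (fun u hu => (hd u (Ico_subset_Icc_self hu)).mono_of_mem_nhdsWithin (Icc_mem_nhdsGE_of_mem hu))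
    (by simp [h0]; positivity)
    (fun u _ => (hB u).continuousAt.continuousWithinAt)
    (fun u _ => (hB u).hasDerivWithinAt)
    (by
      intro u hu
      have h3 := hb _ (hmap (Ico_subset_Icc_self hu))
      simp only [add_sub_cancel_left, abs_mul, abs_of_nonneg hu.1] at h3
      rw [Real.norm_eq_abs, abs_mul]
      gcongr)
    (right_mem_Icc.2 zero_le_one)
  simpa using this

lemma gon_iter (J : Set ℝ) (hJ : Convex ℝ J) (F : ℕ → ℝ → ℝ)
    (hF : ∀ n, ∀ t ∈ J, HasDerivWithinAt (F n) (F (n + 1) t) J t)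
    (N : ℕ) (x : ℕ → ℝ) (hx : ∀ n, N ≤ n → x n ∈ J) (h0 : ∀ n, F n (x n) = 0)
    (T : ℕ → ℝ) (hT0 : ∀ n, 0 ≤ T n) (hT : ∀ n, |x n - x (n + 1)| + T (n + 1) ≤ T n)
    (k : ℕ) : ∀ n, N ≤ n → ∀ M, 0 ≤ M → (∀ t ∈ J, |F (n + k) t| ≤ M) →
      ∀ y ∈ J, |F n y| ≤ M * (|y - x n| + T n) ^ k / (k.factorial : ℝ) := by
  induction k with
  | zero => intro n _ M _ hb y hy; simpa using hb y hy
  | succ k ih =>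
    intro n hn M hM hb y hy
    refine gon_int J hJ (F n) (F (n + 1)) (hF n) (x n) y (hx n hn) hy (h0 n) M (T n) hM (hT0 n) k ?_
    intro t ht
    refine (ih (n + 1) (by omega) M hM (by
      have e : n + 1 + k = n + (k + 1) := by omega
      rwa [e]) t ht).trans ?_
    have h1 : |t - x (n + 1)| + T (n + 1) ≤ |t - x n| + T n := by
      have := abs_sub_le t (x n) (x (n + 1))
      linarith [hT n]
    have h2 := hT0 (n + 1)
    gcongr

lemma gon_cauchy (g : ℝ → ℝ) (L : ℝ) (hg : AnalyticAt ℝ g L) :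
    ∃ C r : ℝ, 0 ≤ C ∧ 0 < r ∧ ∀ y, |y - L| ≤ r → AnalyticAt ℝ g y ∧ ∀ n : ℕ,
      |iteratedDeriv n g y| ≤ C * (n.factorial : ℝ) / r ^ n := by
  obtain ⟨p, R, hp⟩ := hg
  obtain ⟨r, hr0, hrR⟩ := ENNReal.lt_iff_exists_nnreal_btwn.1 hp.r_pos
  have hr0' : 0 < r := by exact_mod_cast hr0
  have hsum : ((r / 2 : NNReal) + (r / 2 : NNReal) : ENNReal) < p.radius := by
    have : ((r / 2 : NNReal) + (r / 2 : NNReal) : ENNReal) = r := by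
      rw [← ENNReal.coe_add, add_halves]
    rw [this]
    exact hrR.trans_le hp.r_le
  have hS := p.changeOriginSeries_summable_aux₁ hsum
  set ρ : NNReal := r / 2 with hρ
  have hρ0 : 0 < ρ := by positivity
  have hρr : ρ < r := by rw [hρ]; exact NNReal.half_lt_self hr0'.ne'
  refine ⟨(∑' s : (Σ k l : ℕ, { s : Finset (Fin (k + l)) // s.card = l }),
      ‖p (s.1 + s.2.1)‖₊ * ρ ^ s.2.1 * ρ ^ s.1 : NNReal), ρ, NNReal.coe_nonneg _, hρ0, ?_⟩
  intro y hy
  have hyn : ‖y - L‖₊ ≤ ρ := by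
    rw [← NNReal.coe_le_coe]; simpa using hy
  have hyR : (‖y - L‖₊ : ENNReal) < R :=
    (ENNReal.coe_lt_coe.2 (hyn.trans_lt hρr)).trans hrR
  have hc := hp.changeOrigin hyR
  rw [add_sub_cancel] at hc
  refine ⟨hc.analyticAt, fun n => ?_⟩
  have hfac := hc.factorial_smul 1 n
  rw [iteratedDeriv_eq_iteratedFDeriv, ← hfac]
  have h1 : ‖p.changeOrigin (y - L) n fun _ => (1 : ℝ)‖ ≤ ‖p.changeOrigin (y - L) n‖ := by
    refine (ContinuousMultilinearMap.le_opNorm _ _).trans ?_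
    simp
  have h2 := p.nnnorm_changeOrigin_le n (hyR.trans_le hp.r_le)
  have hsig := NNReal.summable_sigma.1 hS
  have haux : Summable fun s : (Σ l : ℕ, { s : Finset (Fin (n + l)) // s.card = l }) =>
      ‖p (n + s.1)‖₊ * ρ ^ s.1 :=
    p.changeOriginSeries_summable_aux₂ ((ENNReal.coe_lt_coe.2 hρr).trans (hrR.trans_le hp.r_le)) n
  have h3 : (∑' s : (Σ l : ℕ, { s : Finset (Fin (n + l)) // s.card = l }),
      ‖p (n + s.1)‖₊ * ‖y - L‖₊ ^ s.1) ≤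
      ∑' s : (Σ l : ℕ, { s : Finset (Fin (n + l)) // s.card = l }), ‖p (n + s.1)‖₊ * ρ ^ s.1 := by
    refine Summable.tsum_le_tsum (fun s => by gcongr) ?_ haux
    exact NNReal.summable_of_le (fun s => by gcongr) haux
  have h4 : (∑' s : (Σ l : ℕ, { s : Finset (Fin (n + l)) // s.card = l }),
      ‖p (n + s.1)‖₊ * ρ ^ s.1) * ρ ^ n ≤
      ∑' s : (Σ k l : ℕ, { s : Finset (Fin (k + l)) // s.card = l }),
      ‖p (s.1 + s.2.1)‖₊ * ρ ^ s.2.1 * ρ ^ s.1 := by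
    rw [← NNReal.tsum_mul_right]
    rw [hS.tsum_sigma' hsig.1]
    exact hsig.2.le_tsum n (fun _ _ => zero_le)
  have h5 : ‖p.changeOrigin (y - L) n‖₊ * ρ ^ n ≤ _ :=
    (mul_le_mul_left (h2.trans h3) _).trans h4
  have h6 := NNReal.coe_le_coe.2 h5
  rw [NNReal.coe_mul, NNReal.coe_pow, coe_nnnorm] at h6
  have hpow : (0 : ℝ) < (ρ : ℝ) ^ n := by positivity
  rw [le_div_iff₀ hpow, nsmul_eq_mul, abs_mul, Nat.abs_cast, ← Real.norm_eq_abs]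
  calc _ ≤ (n.factorial : ℝ) * ‖p.changeOrigin (y - L) n‖ * (ρ : ℝ) ^ n := by gcongr
    _ = (‖p.changeOrigin (y - L) n‖ * (ρ : ℝ) ^ n) * (n.factorial : ℝ) := by ring
    _ ≤ _ := by gcongr

lemma gon_local (a b : ℝ) (hab : a < b) (f : ℝ → ℝ)
    (hf : AnalyticOn ℝ f (Icc a b)) (L : ℝ) (hL : L ∈ Icc a b) :
    ∃ C r ρ : ℝ, 0 ≤ C ∧ 0 < r ∧ 0 < ρ ∧ ∀ y ∈ Icc a b, |y - L| ≤ ρ → ∀ n : ℕ,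
      |iteratedDerivWithin n f (Icc a b) y| ≤ C * (n.factorial : ℝ) / r ^ n := by
  obtain ⟨g, hfg, hg⟩ := analyticWithinAt_iff_exists_analyticAt.1 (hf L hL)
  rw [insert_eq_of_mem hL] at hfg
  obtain ⟨C, r, hC, hr, hb⟩ := gon_cauchy g L hg
  obtain ⟨ε, hε, hball⟩ := Metric.mem_nhdsWithin_iff.1 hfg
  refine ⟨C, r, min r (ε / 2), hC, hr, by positivity, ?_⟩
  intro y hy hyL n
  have hyr := hb y (hyL.trans (min_le_left _ _))
  have hyε : y ∈ Metric.ball L ε := by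
    rw [Metric.mem_ball, Real.dist_eq]
    linarith [hyL.trans (min_le_right _ _)]
  have he : f =ᶠ[nhdsWithin y (Icc a b)] g := by
    filter_upwards [self_mem_nhdsWithin,
      mem_nhdsWithin_of_mem_nhds (Metric.isOpen_ball.mem_nhds hyε)] with z h1 h2
    exact hball ⟨h2, h1⟩
  rw [he.iteratedDerivWithin_eq (hball ⟨hyε, hy⟩),
    iteratedDerivWithin_eq_iteratedDeriv (uniqueDiffOn_Icc hab) hyr.1.contDiffAt hy]
  exact hyr.2 n

theorem stmt_11 (a b : ℝ) (hab : a < b) (f : ℝ → ℝ)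
    (hf : AnalyticOn ℝ f (Icc a b))
    (x : ℕ → ℝ) (hx : ∀ n, x n ∈ Icc a b)
    (hconv : Summable (fun n : ℕ => |x n - x (n + 1)|))
    (hzero : ∀ n : ℕ, iteratedDerivWithin n f (Icc a b) (x n) = 0) :
    ∀ y ∈ Icc a b, f y = 0 := by
  have hu := uniqueDiffOn_Icc hab
  set F : ℕ → ℝ → ℝ := fun n => iteratedDerivWithin n f (Icc a b) with hFdef
  have hcd : ContDiffOn ℝ ⊤ f (Icc a b) := hf.contDiffOn hu
  have hF : ∀ n, ∀ t ∈ Icc a b, HasDerivWithinAt (F n) (F (n + 1) t) (Icc a b) t := by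
    intro n t ht
    simp only [hFdef]
    rw [iteratedDerivWithin_succ]
    exact (hcd.differentiableOn_iteratedDerivWithin (by exact_mod_cast WithTop.coe_lt_top _) hu
      t ht).hasDerivWithinAt
  -- limit
  obtain ⟨L, hlim⟩ := cauchySeq_tendsto_of_complete
    (cauchySeq_of_summable_dist (f := x) (by simpa [Real.dist_eq] using hconv))
  have hL : L ∈ Icc a b := isClosed_Icc.mem_of_tendsto hlim (Filter.Eventually.of_forall hx)
  obtain ⟨C, r, ρ, hC, hr, hρ, hb⟩ := gon_local a b hab f hf L hL
  set η := min ρ (r / 16) with hη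
  have hη0 : 0 < η := by positivity
  set T : ℕ → ℝ := fun n => ∑' j, |x (j + n) - x (j + n + 1)| with hTdef
  have hTlim : Filter.Tendsto T Filter.atTop (nhds 0) :=
    tendsto_sum_nat_add (fun n => |x n - x (n + 1)|)
  have hT0 : ∀ n, 0 ≤ T n := fun n => tsum_nonneg fun _ => abs_nonneg _
  have hT : ∀ n, |x n - x (n + 1)| + T (n + 1) ≤ T n := by
    intro n
    have h1 : Summable (fun j => |x (j + n) - x (j + n + 1)|) :=
      (summable_nat_add_iff (f := fun n => |x n - x (n + 1)|) n).2 hconv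
    have h2 := h1.tsum_eq_zero_add
    simp only [hTdef]
    rw [h2]
    simp only [zero_add]
    refine le_of_eq ?_
    congr 1
    refine tsum_congr fun j => ?_
    have e : j + (n + 1) = j + 1 + n := by omega
    rw [e]
  obtain ⟨N, hN⟩ : ∃ N, ∀ n, N ≤ n → |x n - L| < η ∧ T n < r / 16 := by
    have e1 := (Metric.tendsto_nhds.1 hlim) η hη0
    have e2 := hTlim.eventually (gt_mem_nhds (show (0 : ℝ) < r / 16 by positivity))
    obtain ⟨N, hN⟩ := Filter.eventually_atTop.1 (e1.and e2)
    exact ⟨N, fun n hn => by simpa [Real.dist_eq] using hN n hn⟩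
  set J := Icc a b ∩ Metric.closedBall L η with hJdef
  have hJ : Convex ℝ J := (convex_Icc a b).inter (convex_closedBall L η)
  have hvan : ∀ y ∈ J, F N y = 0 := by
    intro y hy
    have hyL : |y - L| ≤ η := by simpa [Real.dist_eq] using hy.2
    have hδ : |y - x N| + T N ≤ r / 4 := by
      have h1 := abs_sub_le y L (x N)
      have h2 := (hN N le_rfl).1
      rw [abs_sub_comm] at h2
      have h3 : η ≤ r / 16 := min_le_right _ _
      linarith [(hN N le_rfl).2]
    have key : ∀ k : ℕ, |F N y| ≤ C * (N.factorial : ℝ) * (2 / r) ^ N * (1 / 2) ^ k := by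
      intro k
      have h := gon_iter J hJ F (fun n t ht => (hF n t ht.1).mono inter_subset_left) N x
        (fun n hn => ⟨hx n, by simpa [Real.dist_eq] using (hN n hn).1.le⟩) hzero T hT0 hT k N le_rfl
        (C * ((N + k).factorial : ℝ) / r ^ (N + k)) (by positivity)
        (fun t ht => hb t ht.1 (by
          have : |t - L| ≤ η := by simpa [Real.dist_eq] using ht.2
          exact this.trans (min_le_left _ _)) _) y hy
      have hch : ((N + k).factorial : ℝ) ≤ 2 ^ (N + k) * (N.factorial : ℝ) * (k.factorial : ℝ) := by
        have h1 := Nat.add_choose_mul_factorial_mul_factorial N k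
        have h2 := Nat.choose_le_two_pow (N + k) k
        rw [← h1]
        push_cast
        gcongr
        exact_mod_cast h2
      have hpos : 0 ≤ |y - x N| + T N := add_nonneg (abs_nonneg _) (hT0 N)
      calc |F N y| ≤ _ := h
        _ ≤ C * (2 ^ (N + k) * (N.factorial : ℝ) * (k.factorial : ℝ)) / r ^ (N + k)
            * (r / 4) ^ k / (k.factorial : ℝ) := by gcongr
        _ = _ := by
          have : (4 : ℝ) ^ k = 2 ^ k * 2 ^ k := by rw [← mul_pow]; norm_num
          simp only [pow_add, div_pow, one_pow, this]
          field_simp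
    have hl : Filter.Tendsto (fun k : ℕ => C * (N.factorial : ℝ) * (2 / r) ^ N * (1 / 2 : ℝ) ^ k)
        Filter.atTop (nhds 0) := by
      have := (tendsto_pow_atTop_nhds_zero_of_lt_one (r := (1 / 2 : ℝ)) (by norm_num)
        (by norm_num)).const_mul (C * (N.factorial : ℝ) * (2 / r) ^ N)
      simpa using this
    have := ge_of_tendsto' hl key
    exact abs_nonpos_iff.1 this
  -- propagate to the whole interval
  have hall : ∀ y ∈ Icc a b, F N y = 0 := by
    have han : AnalyticOnNhd ℝ (F N) (Ioo a b) := by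
      rw [← isOpen_Ioo.analyticOn_iff_analyticOnNhd]
      have h1 := (hf.iteratedFDerivWithin hu N).mono (Ioo_subset_Icc_self)
      exact (ContinuousMultilinearMap.apply ℝ (fun _ : Fin N => ℝ) ℝ (fun _ => 1)).comp_analyticOn h1
    have hcl : L ∈ closure (Ioo a b) := by rwa [closure_Ioo hab.ne]
    obtain ⟨z, hz, hzL⟩ := Metric.mem_closure_iff.1 hcl η hη0
    have hzero' : F N =ᶠ[nhds z] 0 := by
      rw [dist_comm] at hzL
      filter_upwards [isOpen_Ioo.mem_nhds hz, Metric.isOpen_ball.mem_nhds hzL] with w h1 h2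
      exact hvan w ⟨Ioo_subset_Icc_self h1, Metric.ball_subset_closedBall h2⟩
    have heq := han.eqOn_zero_of_preconnected_of_eventuallyEq_zero isPreconnected_Ioo hz hzero'
    have hcont : ContinuousOn (F N) (Icc a b) := fun t ht => (hF N t ht).continuousWithinAt
    exact heq.of_subset_closure hcont continuousOn_const Ioo_subset_Icc_self
      (by rw [closure_Ioo hab.ne])
  -- descend
  have hdesc : ∀ j, j ≤ N → ∀ y ∈ Icc a b, F (N - j) y = 0 := by
    intro j
    induction j with
    | zero => intro _; simpa using hall
    | succ j ih =>
      intro hj y hy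
      have e : N - (j + 1) + 1 = N - j := by omega
      have hih := ih (by omega)
      have := gon_int (Icc a b) (convex_Icc a b) (F (N - (j + 1))) (F (N - (j + 1) + 1)) (hF _)
        (x (N - (j + 1))) y (hx _) hy (hzero _) 0 0 le_rfl le_rfl 0 (by
          intro t ht
          rw [e, hih t ht]; simp)
      simpa using this
  intro y hy
  have := hdesc N le_rfl y hy
  simpa [hFdef] using this
end

section
/- (Bang) Let [a,b] ⊂ ℝ with a < b and let M = (M_n)_{n∈ℕ} be a log-convex sequence of positive real numbers with M_0 = 1 such that ∑_{n=1}^∞ M_{n-1}/M_n = ∞. Let f be an infinitely differentiable function on [a,b] with sup_{t∈[a,b]} |f^(n)(t)| ≤ M_n for all n ∈ ℕ. Suppose there is a sequence (x_n)_{n∈ℕ} of points of [a,b] such that f^(n)(x_n) = 0 for all n ∈ ℕ and the series ∑_{n=1}^∞ |x_{n-1} − x_n| converges. Then f is identically zero on [a,b]. -/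
open Set

/-- Bang's Lemma: growth of weighted derivative bounds along a segment. -/
theorem bang_step (a b : ℝ) (M : ℕ → ℝ) (hMpos : ∀ n, 0 < M n)
    (hmono : Monotone (fun n => M (n + 1) / M n))
    (F : ℕ → ℝ → ℝ)
    (hF : ∀ n, ∀ t ∈ Icc a b, HasDerivWithinAt (F n) (F (n + 1) t) (Icc a b) t)
    (hbound : ∀ n : ℕ, ∀ t ∈ Icc a b, |F n t| ≤ M n)
    (m k : ℕ) (x : ℝ) (hx : x ∈ Icc a b) (C : ℝ) (hC : Real.exp (-((m : ℝ) + 1)) ≤ C)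
    (hB : ∀ j, k ≤ j → |F j x| ≤ C * Real.exp j * M j) :
    ∀ y ∈ Icc a b, ∀ j, k ≤ j →
      |F j y| ≤ C * Real.exp (Real.exp 1 * (M (m + 1) / M m) * |y - x|) * Real.exp j * M j := by
  have hCpos : 0 < C := lt_of_lt_of_le (Real.exp_pos _) hC
  set μ := M (m + 1) / M m with hμ
  have hμpos : 0 < μ := div_pos (hMpos _) (hMpos _)
  have hlarge : ∀ j, m + 1 ≤ j → ∀ y ∈ Icc a b,
      |F j y| ≤ C * Real.exp (Real.exp 1 * μ * |y - x|) * Real.exp j * M j := by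
    intro j hj y hy
    have h1 : 1 ≤ Real.exp (Real.exp 1 * μ * |y - x|) := Real.one_le_exp (by positivity)
    have h2 : 1 ≤ C * Real.exp j := by
      calc (1 : ℝ) ≤ Real.exp (-((m : ℝ) + 1)) * Real.exp j := by
            rw [← Real.exp_add]
            apply Real.one_le_exp
            have : ((m + 1 : ℕ) : ℝ) ≤ j := by exact_mod_cast hj
            push_cast at this
            linarith
        _ ≤ _ := by gcongr
    have h3 : 1 ≤ C * Real.exp (Real.exp 1 * μ * |y - x|) * Real.exp j := by nlinarith
    have := hbound j y hy
    have := hMpos j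
    nlinarith
  have hdown : ∀ d j, j + d = m + 1 → k ≤ j → ∀ y ∈ Icc a b,
      |F j y| ≤ C * Real.exp (Real.exp 1 * μ * |y - x|) * Real.exp j * M j := by
    intro d
    induction d with
    | zero => intro j hj _ y hy; exact hlarge j (by omega) y hy
    | succ d ih =>
      intro j hj hk y hy
      have ih' := ih (j + 1) (by omega) (by omega)
      have hseg : ∀ t ∈ Icc (0 : ℝ) 1, x + t * (y - x) ∈ Icc a b := by
        intro t ht
        have := (convex_Icc a b).add_smul_sub_mem hx hy ht
        simpa using this
      have hder : ∀ t ∈ Icc (0 : ℝ) 1, HasDerivWithinAt (fun t => F j (x + t * (y - x)))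
          (F (j + 1) (x + t * (y - x)) * (y - x)) (Icc 0 1) t := by
        intro t ht
        have hin : HasDerivWithinAt (fun t : ℝ => x + t * (y - x)) (y - x) (Icc 0 1) t := by
          simpa using (((hasDerivAt_id t).mul_const (y - x)).const_add x).hasDerivWithinAt
        exact (hF j _ (hseg t ht)).comp t hin (fun s hs => hseg s hs)
      have key := image_norm_le_of_norm_deriv_right_le_deriv_boundary
        (f := fun t => F j (x + t * (y - x)))
        (f' := fun t => F (j + 1) (x + t * (y - x)) * (y - x)) (a := 0) (b := 1)
        (B := fun t => C * Real.exp (Real.exp 1 * μ * (t * |y - x|)) * Real.exp j * M j)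
        (B' := fun t => C * (Real.exp (Real.exp 1 * μ * (t * |y - x|)) *
          (Real.exp 1 * μ * |y - x|)) * Real.exp j * M j)
        (fun t ht => (hder t ht).continuousWithinAt)
        (fun t ht => ((hder t ⟨ht.1, ht.2.le⟩).mono_of_mem_nhdsWithin
          (Icc_mem_nhdsGE_of_mem ht)))
        (by simpa using hB j hk)
        (by
          intro t
          have h1 : HasDerivAt (fun t : ℝ => Real.exp 1 * μ * (t * |y - x|))
              (Real.exp 1 * μ * |y - x|) t := by
            simpa using ((hasDerivAt_id t).mul_const (|y - x|)).const_mul (Real.exp 1 * μ)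
          exact ((h1.exp.const_mul C).mul_const _).mul_const _)
        (by
          intro t ht
          have h := ih' _ (hseg t ⟨ht.1, ht.2.le⟩)
          have he : |x + t * (y - x) - x| = t * |y - x| := by
            rw [add_sub_cancel_left, abs_mul, abs_of_nonneg ht.1]
          rw [he] at h
          have hM : M (j + 1) ≤ μ * M j := by
            have := hmono (show j ≤ m by omega)
            simp only at this
            rwa [← hμ, div_le_iff₀ (hMpos j)] at this
          rw [Real.norm_eq_abs, abs_mul]
          push_cast at h
          rw [Real.exp_add] at h
          calc _ ≤ (C * Real.exp (Real.exp 1 * μ * (t * |y - x|)) *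
                (Real.exp j * Real.exp 1) * M (j + 1)) * |y - x| := by gcongr
            _ ≤ (C * Real.exp (Real.exp 1 * μ * (t * |y - x|)) *
                (Real.exp j * Real.exp 1) * (μ * M j)) * |y - x| := by gcongr
            _ = _ := by ring)
        (show (1 : ℝ) ∈ Icc (0 : ℝ) 1 by simp)
      simpa using key
  intro y hy j hj
  rcases le_total (m + 1) j with h | h
  · exact hlarge j h y hy
  · exact hdown (m + 1 - j) j (by omega) hj y hy

/-- `BangState` : remaining budget at least `R` at point `x`, for derivatives of order `≥ k`. -/
def BangState (M : ℕ → ℝ) (F : ℕ → ℝ → ℝ) (k : ℕ) (x R : ℝ) : Prop :=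
  ∃ (m : ℕ) (s : ℝ), 0 ≤ s ∧ s ≤ M m / (Real.exp 1 * M (m + 1)) ∧
    R ≤ (∑ i ∈ Finset.range (m + 1), M i / (Real.exp 1 * M (i + 1))) - s ∧
    ∀ j, k ≤ j → |F j x| ≤
      Real.exp (-((m : ℝ) + 1)) * Real.exp (Real.exp 1 * (M (m + 1) / M m) * s) * Real.exp j * M j

theorem bangState_move (a b : ℝ) (M : ℕ → ℝ) (hMpos : ∀ n, 0 < M n)
    (hmono : Monotone (fun n => M (n + 1) / M n))
    (F : ℕ → ℝ → ℝ)
    (hF : ∀ n, ∀ t ∈ Icc a b, HasDerivWithinAt (F n) (F (n + 1) t) (Icc a b) t)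
    (hbound : ∀ n : ℕ, ∀ t ∈ Icc a b, |F n t| ≤ M n)
    (k : ℕ) (x y R : ℝ) (hx : x ∈ Icc a b) (hy : y ∈ Icc a b)
    (hS : BangState M F k x R) (hR : |y - x| ≤ R) :
    BangState M F k y (R - |y - x|) := by
  obtain ⟨m, s, hs0, hs1, hRs, hB⟩ := hS
  induction m generalizing x s R with
  | zero =>
    have hstep := bang_step a b M hMpos hmono F hF hbound 0 k x hx _
      (le_mul_of_one_le_right (Real.exp_pos _).le (Real.one_le_exp (by
        have := hMpos 0; have := hMpos 1; positivity))) hB y hy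
    refine ⟨0, s + |y - x|, by positivity, ?_, by linarith, ?_⟩
    · simp at hRs ⊢; linarith
    · intro j hj
      refine (hstep j hj).trans (le_of_eq ?_)
      rw [mul_assoc (Real.exp (-(((0 : ℕ) : ℝ) + 1))), ← Real.exp_add, ← mul_add]
  | succ m ih =>
    have hp0 := hMpos (m + 1)
    have hp1 := hMpos (m + 1 + 1)
    have hpm := hMpos m
    have hstep := bang_step a b M hMpos hmono F hF hbound (m + 1) k x hx _
      (le_mul_of_one_le_right (Real.exp_pos _).le (Real.one_le_exp (by positivity))) hB
    by_cases hc : s + |y - x| ≤ M (m + 1) / (Real.exp 1 * M (m + 1 + 1))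
    · refine ⟨m + 1, s + |y - x|, by positivity, hc, by linarith, ?_⟩
      intro j hj
      refine (hstep y hy j hj).trans (le_of_eq ?_)
      rw [mul_assoc (Real.exp (-(((m + 1 : ℕ) : ℝ) + 1))), ← Real.exp_add, ← mul_add]
    · push Not at hc
      set l := M (m + 1) / (Real.exp 1 * M (m + 1 + 1)) with hl
      have hpos : 0 < |y - x| := by linarith
      set t := (l - s) / |y - x| with ht
      have ht0 : 0 ≤ t := div_nonneg (by linarith) hpos.le
      have ht1 : t ≤ 1 := by rw [ht, div_le_one hpos]; linarith
      have htm : t * |y - x| = l - s := by rw [ht]; field_simp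
      set z := x + t * (y - x) with hz
      have hzm : z ∈ Icc a b := by
        have := (convex_Icc a b).add_smul_sub_mem hx hy (⟨ht0, ht1⟩ : t ∈ Icc (0:ℝ) 1)
        simpa using this
      have hzx : |z - x| = l - s := by
        rw [hz, add_sub_cancel_left, abs_mul, abs_of_nonneg ht0, htm]
      have hyz : |y - z| = |y - x| - (l - s) := by
        have : y - z = (1 - t) * (y - x) := by rw [hz]; ring
        rw [this, abs_mul, abs_of_nonneg (by linarith : 0 ≤ 1 - t), sub_mul, htm, one_mul]
      have := ih z (R - (l - s)) hzm (by rw [hyz]; linarith) 0 le_rfl (by positivity)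
        (by rw [Finset.sum_range_succ] at hRs; linarith) (by
          intro j hj
          refine (hstep z hzm j hj).trans (le_of_eq ?_)
          rw [mul_assoc (Real.exp (-(((m + 1 : ℕ) : ℝ) + 1))), ← Real.exp_add, ← mul_add, hzx]
          have : Real.exp 1 * (M (m + 1 + 1) / M (m + 1)) * (s + (l - s)) = 1 := by
            rw [hl]
            have := Real.exp_pos 1
            field_simp
            ring
          rw [this, ← Real.exp_add, mul_zero, Real.exp_zero, mul_one]
          congr 3
          push_cast
          ring)
      rw [hyz] at this
      convert this using 1
      ring

theorem bang_abstract (a b : ℝ) (M : ℕ → ℝ) (hMpos : ∀ n, 0 < M n)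
    (hM0 : M 0 = 1)
    (hmono : Monotone (fun n => M (n + 1) / M n))
    (hdiv : ¬ Summable (fun n : ℕ => M n / M (n + 1)))
    (F : ℕ → ℝ → ℝ)
    (hF : ∀ n, ∀ t ∈ Icc a b, HasDerivWithinAt (F n) (F (n + 1) t) (Icc a b) t)
    (hbound : ∀ n : ℕ, ∀ t ∈ Icc a b, |F n t| ≤ M n)
    (x : ℕ → ℝ) (hx : ∀ n, x n ∈ Icc a b)
    (hzero : ∀ n : ℕ, F n (x n) = 0)
    (hconv : Summable (fun n : ℕ => |x n - x (n + 1)|)) :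
    ∀ y ∈ Icc a b, F 0 y = 0 := by
  intro y hy
  set L : ℕ → ℝ := fun n => ∑ i ∈ Finset.range n, M i / (Real.exp 1 * M (i + 1)) with hL
  have hLmono : Monotone L := by
    apply monotone_nat_of_le_succ
    intro n
    simp only [hL, Finset.sum_range_succ]
    have := hMpos n; have := hMpos (n + 1)
    have : 0 ≤ M n / (Real.exp 1 * M (n + 1)) := by positivity
    linarith
  have hLtop : Filter.Tendsto L Filter.atTop Filter.atTop := by
    refine (not_summable_iff_tendsto_nat_atTop_of_nonneg ?_).1 ?_
    · intro n
      have := hMpos n; have := hMpos (n + 1)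
      positivity
    · intro h
      apply hdiv
      refine (h.mul_left (Real.exp 1)).congr fun n => ?_
      have := hMpos (n + 1)
      have := Real.exp_pos 1
      field_simp
  set S : ℕ → ℝ := fun n => ∑ i ∈ Finset.range n, |x i - x (i + 1)| with hSdef
  set T := ∑' i, |x i - x (i + 1)| with hT
  have hST : ∀ n, S n ≤ T := fun n => hconv.sum_le_tsum _ (fun _ _ => abs_nonneg _)
  have hS0 : ∀ n, 0 ≤ S n := fun n => Finset.sum_nonneg (fun _ _ => abs_nonneg _)
  have hsmall : ∀ m0 : ℕ, |F 0 y| ≤ Real.exp (-(m0 : ℝ)) := by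
    intro m0
    obtain ⟨n, hn⟩ := (hLtop.eventually_gt_atTop (L m0 + T + |y - x 0|)).exists
    have hLm0 : 0 ≤ L m0 := by have := hLmono (Nat.zero_le m0); simpa [hL] using this
    have hn0 : n ≠ 0 := by
      rintro rfl
      have h1 : L 0 = 0 := by simp [hL]
      have h2 := hST 0
      have h3 := hS0 0
      have h4 := abs_nonneg (y - x 0)
      linarith
    obtain ⟨n, rfl⟩ := Nat.exists_eq_succ_of_ne_zero hn0
    have hpath : ∀ d i, i + d = n + 1 → BangState M F i (x i) (L (n + 1) - (S (n + 1) - S i)) := by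
      intro d
      induction d with
      | zero =>
        intro i hi
        obtain rfl : i = n + 1 := by omega
        have h1 := hMpos n
        have h2 := hMpos (n + 1)
        refine ⟨n, 0, le_rfl, by positivity, by simp [hL], ?_⟩
        intro j hj
        refine (hbound j _ (hx _)).trans ?_
        rw [mul_zero, Real.exp_zero, mul_one, ← Real.exp_add]
        apply le_mul_of_one_le_left (hMpos j).le
        apply Real.one_le_exp
        have : ((n + 1 : ℕ) : ℝ) ≤ j := by exact_mod_cast hj
        push_cast at this
        linarith
      | succ d ih =>
        intro i hi
        have h := ih (i + 1) (by omega)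
        have hSi : S (i + 1) = S i + |x i - x (i + 1)| := by
          simp only [hSdef, Finset.sum_range_succ]
        have h4 := abs_nonneg (y - x 0)
        have hmv := bangState_move a b M hMpos hmono F hF hbound (i + 1) (x (i + 1)) (x i) _
          (hx _) (hx _) h (by
            have := hST (n + 1)
            have := hS0 i
            have : L (n + 1) > L m0 + T + |y - x 0| := hn
            linarith)
        obtain ⟨m, s, hs0, hs1, hR, hB⟩ := hmv
        refine ⟨m, s, hs0, hs1, by linarith, ?_⟩
        intro j hj
        rcases hj.eq_or_lt with rfl | hj
        · rw [hzero, abs_zero]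
          have := hMpos i
          positivity
        · exact hB j hj
    have h0 := hpath (n + 1) 0 (by omega)
    have hn' : L (n + 1) > L m0 + T + |y - x 0| := hn
    have hTn := hST (n + 1)
    have hS00 : S 0 = 0 := by simp [hSdef]
    obtain ⟨m, s, hs0, hs1, hR, hB⟩ := bangState_move a b M hMpos hmono F hF hbound 0 (x 0) y _
      (hx _) hy h0 (by linarith)
    have hm : m0 ≤ m := by
      by_contra hlt
      have := hLmono (show m + 1 ≤ m0 by omega)
      have h5 : L (m + 1) = ∑ i ∈ Finset.range (m + 1), M i / (Real.exp 1 * M (i + 1)) := rfl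
      linarith
    have h6 := hB 0 le_rfl
    rw [hM0, mul_one, Nat.cast_zero, Real.exp_zero, mul_one, ← Real.exp_add] at h6
    refine h6.trans (Real.exp_le_exp.2 ?_)
    have hp := hMpos m
    have hp' := hMpos (m + 1)
    have h7 : Real.exp 1 * (M (m + 1) / M m) * s ≤ 1 := by
      calc _ ≤ Real.exp 1 * (M (m + 1) / M m) * (M m / (Real.exp 1 * M (m + 1))) := by gcongr
        _ = 1 := by
          have := Real.exp_pos 1
          field_simp
    have : (m0 : ℝ) ≤ m := by exact_mod_cast hm
    linarith
  have hlim : Filter.Tendsto (fun n : ℕ => Real.exp (-(n : ℝ))) Filter.atTop (nhds 0) :=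
    Real.tendsto_exp_neg_atTop_nhds_zero.comp tendsto_natCast_atTop_atTop
  have := ge_of_tendsto' hlim hsmall
  exact abs_nonpos_iff.1 this

theorem stmt_12 (a b : ℝ) (hab : a < b) (M : ℕ → ℝ) (hMpos : ∀ n, 0 < M n)
    (hM0 : M 0 = 1)
    (hlogconvex : ∀ n : ℕ, 1 ≤ n → (M n) ^ 2 ≤ M (n - 1) * M (n + 1))
    (hdiv : ¬ Summable (fun n : ℕ => M n / M (n + 1)))
    (f : ℝ → ℝ) (hf : ContDiffOn ℝ (⊤ : ℕ∞) f (Icc a b))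
    (hbound : ∀ n : ℕ, ∀ t ∈ Icc a b, |iteratedDerivWithin n f (Icc a b) t| ≤ M n)
    (x : ℕ → ℝ) (hx : ∀ n, x n ∈ Icc a b)
    (hzero : ∀ n : ℕ, iteratedDerivWithin n f (Icc a b) (x n) = 0)
    (hconv : Summable (fun n : ℕ => |x n - x (n + 1)|)) :
    ∀ y ∈ Icc a b, f y = 0 := by
  have hmono : Monotone (fun n => M (n + 1) / M n) := by
    apply monotone_nat_of_le_succ
    intro n
    have h := hlogconvex (n + 1) (by omega)
    rw [Nat.add_sub_cancel] at h
    rw [div_le_div_iff₀ (hMpos _) (hMpos _)]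
    nlinarith
  have hF : ∀ n, ∀ t ∈ Icc a b, HasDerivWithinAt (iteratedDerivWithin n f (Icc a b))
      (iteratedDerivWithin (n + 1) f (Icc a b) t) (Icc a b) t := by
    intro n t ht
    rw [iteratedDerivWithin_succ]
    have hd := hf.differentiableOn_iteratedDerivWithin (m := n)
      (by exact_mod_cast WithTop.coe_lt_top n) (uniqueDiffOn_Icc hab)
    exact (hd t ht).hasDerivWithinAt
  intro y hy
  have := bang_abstract a b M hMpos hM0 hmono hdiv (fun n => iteratedDerivWithin n f (Icc a b))
    hF hbound x hx hzero hconv y hy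
  simpa using this
end

section
/- Let [a,b] ⊂ ℝ with a < b, let M = (M_n)_{n∈ℕ} be a log-convex sequence of positive real numbers with M_0 = 1, and let f be an infinitely differentiable function on [a,b] with sup_{t∈[a,b]} |f^(n)(t)| ≤ M_n for all n ∈ ℕ. For n ∈ ℕ and t ∈ [a,b] define B_{f,n}(t) = sup_{j≥n} |f^(j)(t)|/(e^j M_j). Then for every n ∈ ℕ, every integer q > n, and all t, t+τ ∈ [a,b]: B_{f,n}(t+τ) ≤ max(B_{f,n}(t), e^{-q}) · exp(e·|τ|·M_q/M_{q-1}). -/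
open Set

/-- `B_{f,n}(t) = sup_{j ≥ n} |f⁽ʲ⁾(t)|/(eʲ Mⱼ)`. -/
noncomputable def Bfn (a b : ℝ) (M : ℕ → ℝ) (f : ℝ → ℝ) (n : ℕ) (t : ℝ) : ℝ :=
  ⨆ j : {j : ℕ // n ≤ j},
    |iteratedDerivWithin (j : ℕ) f (Icc a b) t| / (Real.exp (j : ℕ) * M j)

theorem stmt_13 (a b : ℝ) (hab : a < b) (M : ℕ → ℝ) (hMpos : ∀ n, 0 < M n)
    (hM0 : M 0 = 1)
    (hlogconvex : ∀ n : ℕ, 1 ≤ n → (M n) ^ 2 ≤ M (n - 1) * M (n + 1))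
    (f : ℝ → ℝ) (hf : ContDiffOn ℝ (⊤ : ℕ∞) f (Icc a b))
    (hbound : ∀ n : ℕ, ∀ t ∈ Icc a b, |iteratedDerivWithin n f (Icc a b) t| ≤ M n) :
    ∀ (n q : ℕ), n < q → ∀ t τ : ℝ, t ∈ Icc a b → t + τ ∈ Icc a b →
      Bfn a b M f n (t + τ) ≤
        max (Bfn a b M f n t) (Real.exp (-(q : ℝ))) *
          Real.exp (Real.exp 1 * |τ| * (M q / M (q - 1))) := by
  intro n q hnq t τ ht htτ
  set D : ℕ → ℝ → ℝ := fun j => iteratedDerivWithin j f (Icc a b) with hD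
  have hterm : ∀ j : ℕ, ∀ s ∈ Icc a b,
      |D j s| / (Real.exp (j : ℕ) * M j) ≤ Real.exp (-(j : ℝ)) := by
    intro j s hs
    have := hMpos j
    rw [div_le_iff₀ (by positivity), ← mul_assoc, ← Real.exp_add]
    simpa using hbound j s hs
  have hbdd : ∀ s ∈ Icc a b, BddAbove (range fun j : {j : ℕ // n ≤ j} =>
      |D j s| / (Real.exp (j : ℕ) * M j)) := by
    intro s hs
    refine ⟨1, ?_⟩
    rintro _ ⟨j, rfl⟩
    refine (hterm j s hs).trans ?_
    rw [Real.exp_le_one_iff]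
    simp
  have hmono : Monotone fun j => M (j + 1) / M j := by
    refine monotone_nat_of_le_succ fun j => ?_
    have h := hlogconvex (j + 1) (by omega)
    rw [div_le_div_iff₀ (hMpos _) (hMpos _)]
    simp only [Nat.add_sub_cancel] at h
    nlinarith
  set C := max (Bfn a b M f n t) (Real.exp (-(q : ℝ))) with hC
  have hCq : Real.exp (-(q : ℝ)) ≤ C := le_max_right _ _
  have hCpos : 0 < C := (Real.exp_pos _).trans_le hCq
  set R := M q / M (q - 1) with hR
  have hRpos : 0 < R := div_pos (hMpos _) (hMpos _)
  have hpath : ∀ x ∈ Icc (0 : ℝ) 1, t + x * τ ∈ Icc a b := by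
    intro x hx
    have := (convex_Icc a b).add_smul_mem ht htτ hx
    simpa using this
  have hlow : ∀ j, n ≤ j → |D j t| ≤ Real.exp j * M j * C := by
    intro j hj
    have h1 : |D j t| / (Real.exp (j : ℕ) * M j) ≤ Bfn a b M f n t :=
      le_ciSup (hbdd t ht) ⟨j, hj⟩
    have := hMpos j
    have h2 := h1.trans (le_max_left _ (Real.exp (-(q : ℝ))))
    rw [div_le_iff₀ (by positivity)] at h2
    linarith
  have hhigh : ∀ j, q ≤ j → ∀ s ∈ Icc a b, |D j s| ≤ Real.exp j * M j * C := by
    intro j hj s hs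
    have h1 := hterm j s hs
    have := hMpos j
    have h3 : Real.exp (-(j : ℝ)) ≤ Real.exp (-(q : ℝ)) := by
      have : (q : ℝ) ≤ j := by exact_mod_cast hj
      exact Real.exp_le_exp.2 (by linarith)
    have h2 := h1.trans (h3.trans hCq)
    rw [div_le_iff₀ (by positivity)] at h2
    linarith
  have hder : ∀ j, ∀ s ∈ Icc a b, HasDerivWithinAt (D j) (D (j + 1) s) (Icc a b) s := by
    intro j s hs
    have hd := hf.differentiableOn_iteratedDerivWithin (m := j)
      (by exact_mod_cast ENat.coe_lt_top j) (uniqueDiffOn_Icc hab)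
    have := (hd s hs).hasDerivWithinAt
    rwa [← iteratedDerivWithin_succ] at this
  have key : ∀ k j, n ≤ j → q ≤ j + k → ∀ x ∈ Icc (0 : ℝ) 1,
      |D j (t + x * τ)| ≤ Real.exp j * M j * C * Real.exp (Real.exp 1 * |τ| * R * x) := by
    have big : ∀ j, q ≤ j → ∀ x ∈ Icc (0 : ℝ) 1,
      |D j (t + x * τ)| ≤ Real.exp j * M j * C * Real.exp (Real.exp 1 * |τ| * R * x) := by
      intro j hj x hx
      refine (hhigh j hj _ (hpath x hx)).trans ?_
      have := hMpos j
      have hx0 := hx.1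
      exact le_mul_of_one_le_right (by positivity) (Real.one_le_exp (by positivity))
    intro k
    induction k with
    | zero => intro j _ hj; exact big j hj
    | succ k ih =>
      intro j hnj hj
      by_cases hjq : q ≤ j
      · exact big j hjq
      push Not at hjq
      have ih' := ih (j + 1) (by omega) (by omega)
      have hMj := hMpos j
      have hrat : M (j + 1) ≤ R * M j := by
        have h := hmono (show j ≤ q - 1 by omega)
        simp only [Nat.sub_add_cancel (show 1 ≤ q by omega)] at h
        rwa [div_le_iff₀ (hMpos j)] at h
      have hcomp : ∀ x ∈ Icc (0 : ℝ) 1, HasDerivWithinAt (fun x => D j (t + x * τ))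
          (D (j + 1) (t + x * τ) * τ) (Icc 0 1) x := by
        intro x hx
        have hl : HasDerivWithinAt (fun x : ℝ => t + x * τ) τ (Icc 0 1) x := by
          simpa using (((hasDerivAt_id x).mul_const τ).const_add t).hasDerivWithinAt
        exact (hder j _ (hpath x hx)).comp x hl hpath
      have hB : ∀ x : ℝ, HasDerivAt
          (fun x => Real.exp j * M j * C * Real.exp (Real.exp 1 * |τ| * R * x))
          (Real.exp j * M j * C * (Real.exp (Real.exp 1 * |τ| * R * x)
            * (Real.exp 1 * |τ| * R))) x := by
        intro x
        have h0 : HasDerivAt (fun x : ℝ => Real.exp 1 * |τ| * R * x)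
            (Real.exp 1 * |τ| * R) x := by
          simpa using (hasDerivAt_id x).const_mul (Real.exp 1 * |τ| * R)
        exact h0.exp.const_mul _
      intro x hx
      have := image_norm_le_of_norm_deriv_right_le_deriv_boundary (a := 0) (b := 1)
        (f := fun x => D j (t + x * τ)) (f' := fun x => D (j + 1) (t + x * τ) * τ)
        (fun x hx => (hcomp x hx).continuousWithinAt)
        (fun x hx => ((hcomp x (Ico_subset_Icc_self hx)).mono_of_mem_nhdsWithin
          (Icc_mem_nhdsGE_of_mem hx)))
        (by simpa using hlow j hnj) hB ?_ hx
      · simpa using this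
      intro x hx
      rw [Real.norm_eq_abs, abs_mul]
      refine (mul_le_mul_of_nonneg_right (ih' x (Ico_subset_Icc_self hx))
        (abs_nonneg τ)).trans ?_
      push_cast
      rw [Real.exp_add]
      have h := mul_le_mul_of_nonneg_left hrat (show 0 ≤ Real.exp j * Real.exp 1 * C *
        Real.exp (Real.exp 1 * |τ| * R * x) * |τ| by positivity)
      linarith
  haveI : Nonempty {j : ℕ // n ≤ j} := ⟨⟨n, le_rfl⟩⟩
  refine ciSup_le fun j => ?_
  have h := key q j j.2 (by omega) 1 (by simp)
  have := hMpos j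
  rw [div_le_iff₀ (by positivity)]
  simp only [one_mul, mul_one] at h
  refine h.trans (le_of_eq ?_)
  ring
end

section
/- Let [a,b] ⊂ ℝ with a < b and let M = (M_n)_{n∈ℕ} be a log-convex sequence of positive real numbers with M_0 = 1 such that ∑_{n=1}^∞ M_{n-1}/M_n = ∞. Let f be an infinitely differentiable function on [a,b] with sup_{t∈[a,b]} |f^(n)(t)| ≤ M_n for all n ∈ ℕ. If f^(n)(a) > 0 for all n ∈ ℕ, then f^(n)(x) > 0 for all n ∈ ℕ and all x ∈ [a,b]. -/
open Set

lemma dc_core (a b : ℝ) (g : ℕ → ℝ → ℝ) (M : ℕ → ℝ) (hM : ∀ n, 0 < M n)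
    (hd : ∀ n, ∀ x ∈ Icc a b, HasDerivWithinAt (g n) (g (n+1) x) (Icc a b) x)
    (hb : ∀ n, ∀ x ∈ Icc a b, |g n x| ≤ M n) (K n : ℕ) (r C : ℝ) (hr : 0 < r)
    (hrM : ∀ k < K, M (k+1) ≤ r * M k) (hC : Real.exp (-(K:ℝ)) ≤ C)
    (x : ℝ) (hx : x ∈ Icc a b) (hgx : ∀ j, n ≤ j → |g j x| ≤ C * Real.exp j * M j) :
    ∀ d j : ℕ, n ≤ j → K ≤ j + d → ∀ y ∈ Icc a b,
      |g j y| ≤ C * Real.exp j * M j * Real.exp (Real.exp 1 * r * |y - x|) := by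
  have hC0 : 0 < C := lt_of_lt_of_le (Real.exp_pos _) hC
  have htriv : ∀ j : ℕ, K ≤ j → ∀ y ∈ Icc a b,
      |g j y| ≤ C * Real.exp j * M j * Real.exp (Real.exp 1 * r * |y - x|) := by
    intro j hj y hy
    have h1 : 1 ≤ C * Real.exp j := by
      calc (1:ℝ) ≤ Real.exp (-(K:ℝ) + j) := by
            apply Real.one_le_exp
            have : (K:ℝ) ≤ j := by exact_mod_cast hj
            linarith
        _ = Real.exp (-(K:ℝ)) * Real.exp j := Real.exp_add _ _
        _ ≤ _ := by gcongr
    have h2 : 1 ≤ Real.exp (Real.exp 1 * r * |y - x|) := Real.one_le_exp (by positivity)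
    calc |g j y| ≤ M j := hb j y hy
      _ = 1 * M j * 1 := by ring
      _ ≤ _ := by
        have := (hM j).le
        gcongr
  intro d
  induction d with
  | zero => intro j _ hK; exact htriv j (by simpa using hK)
  | succ d ih =>
    intro j hj hK y hy
    by_cases hKj : K ≤ j
    · exact htriv j hKj y hy
    push Not at hKj
    have hmem : ∀ s ∈ Icc (0:ℝ) 1, x + s * (y - x) ∈ Icc a b := by
      intro s hs
      have := (convex_Icc a b).add_smul_sub_mem hx hy hs
      simpa using this
    have hline : ∀ s : ℝ, HasDerivAt (fun s : ℝ => x + s * (y - x)) (y - x) s := by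
      intro s
      simpa using ((hasDerivAt_id s).mul_const (y - x)).const_add x
    have hder : ∀ s ∈ Icc (0:ℝ) 1, HasDerivWithinAt (fun s => g j (x + s * (y - x)))
        (g (j+1) (x + s * (y - x)) * (y - x)) (Icc 0 1) s := by
      intro s hs
      exact (hd j _ (hmem s hs)).comp s (hline s).hasDerivWithinAt hmem
    have key := image_norm_le_of_norm_deriv_right_le_deriv_boundary
      (f := fun s => g j (x + s * (y - x)))
      (f' := fun s => g (j+1) (x + s * (y - x)) * (y - x)) (a := 0) (b := 1)
      (B := fun s => C * Real.exp j * M j * Real.exp (Real.exp 1 * r * |y - x| * s))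
      (B' := fun s => C * Real.exp j * M j *
        (Real.exp (Real.exp 1 * r * |y - x| * s) * (Real.exp 1 * r * |y - x|)))
      (fun s hs => (hder s hs).continuousWithinAt)
      (fun s hs => (hder s ⟨hs.1, hs.2.le⟩).mono_of_mem_nhdsWithin (Icc_mem_nhdsGE_of_mem hs))
      (by simpa using hgx j hj)
      (by
        intro s
        have h := ((hasDerivAt_id s).const_mul (Real.exp 1 * r * |y - x|)).exp.const_mul
          (C * Real.exp j * M j)
        simpa using h)
      (by
        intro s hs
        have h1 := ih (j+1) (by omega) (by omega) _ (hmem s ⟨hs.1, hs.2.le⟩)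
        have h2 : |x + s * (y - x) - x| = |y - x| * s := by
          rw [add_sub_cancel_left, abs_mul, abs_of_nonneg hs.1, mul_comm]
        rw [h2, ← mul_assoc] at h1
        rw [Real.norm_eq_abs, abs_mul]
        have h3 := hrM j hKj
        have h4 : Real.exp ((j+1:ℕ):ℝ) = Real.exp j * Real.exp 1 := by
          push_cast; exact Real.exp_add _ _
        calc _ ≤ C * Real.exp ((j+1:ℕ):ℝ) * M (j+1) *
              Real.exp (Real.exp 1 * r * |y - x| * s) * |y - x| := by gcongr
          _ ≤ C * Real.exp ((j+1:ℕ):ℝ) * (r * M j) *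
              Real.exp (Real.exp 1 * r * |y - x| * s) * |y - x| := by gcongr
          _ = _ := by rw [h4]; ring)
    have := key (x := 1) (by simp)
    simpa using this

lemma dc_ratio_s14 (M : ℕ → ℝ) (hM : ∀ n, 0 < M n)
    (hlc : ∀ n : ℕ, M (n+1) ^ 2 ≤ M n * M (n + 2)) (K : ℕ) :
    ∀ k < K + 1, M (k+1) ≤ M (K+1) / M K * M k := by
  have hmono : Monotone (fun n => M (n+1) / M n) := by
    apply monotone_nat_of_le_succ
    intro n
    rw [div_le_div_iff₀ (hM _) (hM _)]
    have := hlc n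
    nlinarith
  intro k hk
  have h := hmono (Nat.lt_succ_iff.mp hk)
  simp only at h
  rwa [div_le_iff₀ (hM k)] at h

lemma dc_move (a b : ℝ) (g : ℕ → ℝ → ℝ) (M : ℕ → ℝ) (hM : ∀ n, 0 < M n)
    (hlc : ∀ n : ℕ, M (n+1) ^ 2 ≤ M n * M (n + 2))
    (hd : ∀ n, ∀ x ∈ Icc a b, HasDerivWithinAt (g n) (g (n+1) x) (Icc a b) x)
    (hb : ∀ n, ∀ x ∈ Icc a b, |g n x| ≤ M n) (n : ℕ) (y : ℝ) (hy : y ∈ Icc a b) :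
    ∀ (K : ℕ) (θ x : ℝ), x ∈ Icc a b → 0 ≤ θ → θ ≤ 1 →
      (∀ j, n ≤ j → |g j x| ≤ Real.exp (-((K+1:ℕ):ℝ) + θ) * Real.exp j * M j) →
      Real.exp 1 * |y - x| ≤ ∑ i ∈ Finset.range (K+1), M i / M (i+1) - θ * (M K / M (K+1)) →
      ∃ (K' : ℕ) (θ' : ℝ), 0 ≤ θ' ∧ θ' ≤ 1 ∧
        ∑ i ∈ Finset.range (K'+1), M i / M (i+1) - θ' * (M K' / M (K'+1)) =
          ∑ i ∈ Finset.range (K+1), M i / M (i+1) - θ * (M K / M (K+1)) - Real.exp 1 * |y - x| ∧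
        (∀ j, n ≤ j → |g j y| ≤ Real.exp (-((K'+1:ℕ):ℝ) + θ') * Real.exp j * M j) := by
  have hstep : ∀ (K : ℕ) (θ x z : ℝ), x ∈ Icc a b → z ∈ Icc a b → 0 ≤ θ →
      (∀ j, n ≤ j → |g j x| ≤ Real.exp (-((K+1:ℕ):ℝ) + θ) * Real.exp j * M j) →
      ∀ j, n ≤ j → |g j z| ≤
        Real.exp (-((K+1:ℕ):ℝ) + (θ + Real.exp 1 * |z - x| / (M K / M (K+1)))) *
          Real.exp j * M j := by
    intro K θ x z hx hz hθ h j hj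
    have := dc_core a b g M hM hd hb (K+1) n (M (K+1) / M K) (Real.exp (-((K+1:ℕ):ℝ) + θ))
      (div_pos (hM _) (hM _)) (dc_ratio_s14 M hM hlc K) (Real.exp_le_exp.mpr (by linarith)) x hx h
      (K+1) j hj (by omega) z hz
    refine this.trans (le_of_eq ?_)
    have h1 : Real.exp 1 * |z - x| / (M K / M (K+1)) =
      Real.exp 1 * (M (K+1) / M K) * |z - x| := by
      have := hM K; have := hM (K+1)
      field_simp
    rw [← add_assoc, Real.exp_add _ (_ / _), h1]
    ring
  intro K
  induction K with
  | zero =>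
    intro θ x hx h0 h1 h hle
    have hτ : 0 < M 0 / M (0+1) := div_pos (hM _) (hM _)
    refine ⟨0, θ + Real.exp 1 * |y - x| / (M 0 / M (0+1)), by positivity, ?_, ?_,
      hstep 0 θ x y hx hy h0 h⟩
    · simp only [zero_add, Finset.sum_range_one] at hle hτ ⊢
      have : Real.exp 1 * |y - x| / (M 0 / M 1) ≤ 1 - θ := by
        rw [div_le_iff₀ hτ]; linarith
      linarith
    · rw [add_mul, div_mul_cancel₀ _ hτ.ne']; ring
  | succ K ih =>
    intro θ x hx h0 h1 h hle
    have hτ : 0 < M (K+1) / M (K+1+1) := div_pos (hM _) (hM _)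
    by_cases hc : Real.exp 1 * |y - x| ≤ (1 - θ) * (M (K+1) / M (K+1+1))
    · refine ⟨K+1, θ + Real.exp 1 * |y - x| / (M (K+1) / M (K+1+1)), by positivity, ?_, ?_,
        hstep (K+1) θ x y hx hy h0 h⟩
      · have : Real.exp 1 * |y - x| / (M (K+1) / M (K+1+1)) ≤ 1 - θ := by
          rw [div_le_iff₀ hτ]; linarith
        linarith
      · rw [add_mul, div_mul_cancel₀ _ hτ.ne']; ring
    · push Not at hc
      have hp : 0 ≤ (1 - θ) * (M (K+1) / M (K+1+1)) := mul_nonneg (by linarith) hτ.le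
      have hD : 0 < Real.exp 1 * |y - x| := lt_of_le_of_lt hp hc
      obtain ⟨s, hs⟩ : ∃ s, s = (1 - θ) * (M (K+1) / M (K+1+1)) / (Real.exp 1 * |y - x|) :=
        ⟨_, rfl⟩
      have hs0 : 0 ≤ s := by rw [hs]; positivity
      have hs1 : s ≤ 1 := by rw [hs, div_le_one hD]; exact hc.le
      have hsD : s * (Real.exp 1 * |y - x|) = (1 - θ) * (M (K+1) / M (K+1+1)) := by
        rw [hs, div_mul_cancel₀ _ hD.ne']
      have hz : x + s * (y - x) ∈ Icc a b := by
        simpa using (convex_Icc a b).add_smul_sub_mem hx hy ⟨hs0, hs1⟩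
      have e1 : |x + s * (y - x) - x| = s * |y - x| := by
        rw [add_sub_cancel_left, abs_mul, abs_of_nonneg hs0]
      have e2 : |y - (x + s * (y - x))| = (1 - s) * |y - x| := by
        rw [show y - (x + s * (y - x)) = (1 - s) * (y - x) by ring, abs_mul,
          abs_of_nonneg (by linarith)]
      have hst := hstep (K+1) θ x _ hx hz h0 h
      have e3 : Real.exp 1 * |x + s * (y - x) - x| / (M (K+1) / M (K+1+1)) = 1 - θ := by
        rw [e1, div_eq_iff hτ.ne', ← hsD]; ring
      rw [e3] at hst
      have hsum := Finset.sum_range_succ (fun i => M i / M (i+1)) (K+1)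
      have e4 : Real.exp 1 * |y - (x + s * (y - x))| =
          Real.exp 1 * |y - x| - (1 - θ) * (M (K+1) / M (K+1+1)) := by
        rw [e2, ← hsD]; ring
      obtain ⟨K', θ', a1, a2, a3, a4⟩ := ih 0 _ hz le_rfl zero_le_one
        (by
          intro j hj
          refine (hst j hj).trans (le_of_eq ?_)
          congr 3
          push_cast; ring)
        (by rw [e4]; rw [hsum] at hle; linarith)
      refine ⟨K', θ', a1, a2, ?_, a4⟩
      rw [a3, e4, hsum]; ring

lemma dc_bang (a b : ℝ) (g : ℕ → ℝ → ℝ) (M : ℕ → ℝ) (hM : ∀ n, 0 < M n)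
    (hlc : ∀ n : ℕ, M (n+1) ^ 2 ≤ M n * M (n + 2))
    (hdiv : ¬ Summable (fun n : ℕ => M n / M (n + 1)))
    (hd : ∀ n, ∀ x ∈ Icc a b, HasDerivWithinAt (g n) (g (n+1) x) (Icc a b) x)
    (hb : ∀ n, ∀ x ∈ Icc a b, |g n x| ≤ M n) (x : ℕ → ℝ) (hx : ∀ n, x n ∈ Icc a b)
    (hanti : ∀ n, x (n+1) ≤ x n) (hz : ∀ n, g n (x n) = 0) : g 0 a = 0 := by
  have hab : a ≤ b := (hx 0).1.trans (hx 0).2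
  have hτ : ∀ n, 0 < M n / M (n+1) := fun n => div_pos (hM _) (hM _)
  have hxa : Antitone x := antitone_nat_of_succ_le hanti
  obtain ⟨S, hS⟩ : ∃ S : ℕ → ℝ, S = fun K => ∑ i ∈ Finset.range K, M i / M (i+1) := ⟨_, rfl⟩
  have hSmono : Monotone S := by
    rw [hS]; apply monotone_nat_of_le_succ; intro n
    rw [Finset.sum_range_succ]; linarith [hτ n]
  have hStop : Filter.Tendsto S Filter.atTop Filter.atTop := by
    rw [hS]; exact (not_summable_iff_tendsto_nat_atTop_of_nonneg (fun n => (hτ n).le)).mp hdiv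
  have hSeq : ∀ K, ∑ i ∈ Finset.range K, M i / M (i+1) = S K := by intro K; rw [hS]
  have hmove := dc_move a b g M hM hlc hd hb
  simp only [hSeq] at hmove
  have hmain : ∀ m : ℕ, |g 0 a| ≤ Real.exp (-(m:ℝ)) * M 0 := by
    intro m
    obtain ⟨N, hN⟩ := (hStop.eventually_ge_atTop (S (m+1) + 2 * Real.exp 1 * (b - a) + 1)).exists
    have hN' : S (m+1) + 2 * Real.exp 1 * (b - a) + 1 ≤ S (N+1) :=
      hN.trans (hSmono (Nat.le_succ N))
    have hSm : 0 ≤ S (m+1) := by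
      have := hSmono (Nat.zero_le (m+1))
      have h0 : S 0 = 0 := by rw [hS]; simp
      linarith
    have he := Real.exp_pos 1
    have chain : ∀ d n : ℕ, n + d = N + 1 → ∃ (K : ℕ) (θ : ℝ), 0 ≤ θ ∧ θ ≤ 1 ∧
        S (K+1) - θ * (M K / M (K+1)) = S (N+1) - Real.exp 1 * (x n - x (N+1)) ∧
        ∀ j, n ≤ j → |g j (x n)| ≤ Real.exp (-((K+1:ℕ):ℝ) + θ) * Real.exp j * M j := by
      intro d
      induction d with
      | zero =>
        intro n hn
        obtain rfl : n = N + 1 := by omega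
        refine ⟨N, 0, le_rfl, zero_le_one, by simp, ?_⟩
        intro j hj
        refine (hb j _ (hx _)).trans ?_
        have h1 : 1 ≤ Real.exp (-((N+1:ℕ):ℝ) + 0) * Real.exp j := by
          rw [← Real.exp_add]; apply Real.one_le_exp
          have : ((N+1:ℕ):ℝ) ≤ j := by exact_mod_cast hj
          linarith
        nlinarith [hM j]
      | succ d ih =>
        intro n hn
        obtain ⟨K, θ, a1, a2, a3, a4⟩ := ih (n+1) (by omega)
        have hab1 : |x n - x (n+1)| = x n - x (n+1) := abs_of_nonneg (by linarith [hanti n])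
        have hle : Real.exp 1 * (x n - x (N+1)) ≤ Real.exp 1 * (b - a) := by
          have := (hx n).2; have := (hx (N+1)).1
          gcongr
        have hba : 0 ≤ Real.exp 1 * (b - a) := mul_nonneg he.le (by linarith)
        obtain ⟨K', θ', b1, b2, b3, b4⟩ := hmove (n+1) (x n) (hx n) K θ (x (n+1)) (hx _) a1 a2 a4
          (by rw [a3, hab1]; nlinarith)
        refine ⟨K', θ', b1, b2, ?_, ?_⟩
        · rw [b3, a3, hab1]; ring
        · intro j hj
          rcases Nat.eq_or_lt_of_le hj with h | h
          · subst h
            rw [hz, abs_zero]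
            have := hM n
            positivity
          · exact b4 j h
    obtain ⟨K, θ, a1, a2, a3, a4⟩ := chain (N+1) 0 (by omega)
    have hle : Real.exp 1 * (x 0 - x (N+1)) ≤ Real.exp 1 * (b - a) := by
      have := (hx 0).2; have := (hx (N+1)).1
      gcongr
    have hle2 : Real.exp 1 * |a - x 0| ≤ Real.exp 1 * (b - a) := by
      have := (hx 0).2; have := (hx 0).1
      rw [abs_of_nonpos (by linarith)]
      gcongr
      linarith
    obtain ⟨K', θ', b1, b2, b3, b4⟩ := hmove 0 a ⟨le_rfl, hab⟩ K θ (x 0) (hx _) a1 a2 a4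
      (by rw [a3]; nlinarith)
    have hK : m + 1 ≤ K' + 1 := by
      by_contra hcon
      have h1 := hSmono (show K' + 1 ≤ m + 1 by omega)
      have h2 : 0 ≤ θ' * (M K' / M (K'+1)) := mul_nonneg b1 (hτ _).le
      nlinarith
    refine (b4 0 le_rfl).trans ?_
    have h5 : Real.exp (-((K'+1:ℕ):ℝ) + θ') ≤ Real.exp (-(m:ℝ)) := by
      apply Real.exp_le_exp.mpr
      have : ((m+1:ℕ):ℝ) ≤ ((K'+1:ℕ):ℝ) := by exact_mod_cast hK
      push_cast at this ⊢
      linarith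
    have := hM 0
    simp only [Nat.cast_zero, Real.exp_zero, mul_one]
    gcongr
  have hlim : Filter.Tendsto (fun m : ℕ => Real.exp (-(m:ℝ)) * M 0) Filter.atTop (nhds 0) := by
    have := (Real.tendsto_exp_neg_atTop_nhds_zero.comp
      (tendsto_natCast_atTop_atTop (R := ℝ))).mul_const (M 0)
    simpa using this
  have := ge_of_tendsto' hlim hmain
  exact abs_eq_zero.mp (le_antisymm this (abs_nonneg _))

theorem stmt_14 (a b : ℝ) (hab : a < b) (M : ℕ → ℝ) (hMpos : ∀ n, 0 < M n)
    (hM0 : M 0 = 1)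
    (hlogconvex : ∀ n : ℕ, 1 ≤ n → (M n) ^ 2 ≤ M (n - 1) * M (n + 1))
    (hdiv : ¬ Summable (fun n : ℕ => M n / M (n + 1)))
    (f : ℝ → ℝ) (hf : ContDiffOn ℝ (⊤ : ℕ∞) f (Icc a b))
    (hbound : ∀ n : ℕ, ∀ t ∈ Icc a b, |iteratedDerivWithin n f (Icc a b) t| ≤ M n)
    (hpos : ∀ n : ℕ, 0 < iteratedDerivWithin n f (Icc a b) a) :
    ∀ n : ℕ, ∀ x ∈ Icc a b, 0 < iteratedDerivWithin n f (Icc a b) x := by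
  intro n x hx
  by_contra hcon
  push Not at hcon
  have hd : ∀ n, ∀ x ∈ Icc a b, HasDerivWithinAt (iteratedDerivWithin n f (Icc a b))
      (iteratedDerivWithin (n+1) f (Icc a b) x) (Icc a b) x := by
    intro n x hx
    rw [iteratedDerivWithin_succ]
    exact (hf.differentiableOn_iteratedDerivWithin (by exact_mod_cast ENat.coe_lt_top n)
      (uniqueDiffOn_Icc hab) x hx).hasDerivWithinAt
  have hcont : ∀ n, ContinuousOn (iteratedDerivWithin n f (Icc a b)) (Icc a b) :=
    fun n x hx => (hd n x hx).continuousWithinAt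
  have ivt : ∀ n, ∀ z ∈ Icc a b, iteratedDerivWithin n f (Icc a b) z ≤ 0 →
      ∃ y ∈ Icc a b, y ≤ z ∧ iteratedDerivWithin n f (Icc a b) y = 0 := by
    intro n z hz h
    obtain ⟨y, hy, hy0⟩ := intermediate_value_Icc' hz.1
      ((hcont n).mono (Icc_subset_Icc_right hz.2)) ⟨h, (hpos n).le⟩
    exact ⟨y, ⟨hy.1, hy.2.trans hz.2⟩, hy.2, hy0⟩
  have next : ∀ n, ∀ z ∈ Icc a b, iteratedDerivWithin n f (Icc a b) z = 0 →
      ∃ y ∈ Icc a b, y ≤ z ∧ iteratedDerivWithin (n+1) f (Icc a b) y = 0 := by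
    intro n z hz h
    have haz : a < z := by
      rcases hz.1.lt_or_eq with h1 | h1
      · exact h1
      · have := hpos n
        rw [h1] at this
        subst h1
        linarith
    obtain ⟨c, hc, hce⟩ := exists_hasDerivAt_eq_slope (iteratedDerivWithin n f (Icc a b))
      (iteratedDerivWithin (n+1) f (Icc a b)) haz
      ((hcont n).mono (Icc_subset_Icc_right hz.2))
      (fun t ht => (hd n t ⟨ht.1.le, ht.2.le.trans hz.2⟩).hasDerivAt
        (Icc_mem_nhds ht.1 (ht.2.trans_le hz.2)))
    have hc0 : iteratedDerivWithin (n+1) f (Icc a b) c ≤ 0 := by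
      rw [hce, h]
      apply div_nonpos_of_nonpos_of_nonneg
      · linarith [hpos n]
      · linarith
    obtain ⟨y, hy, hyc, hy0⟩ := ivt (n+1) c ⟨hc.1.le, hc.2.le.trans hz.2⟩ hc0
    exact ⟨y, hy, hyc.trans hc.2.le, hy0⟩
  obtain ⟨z0, hz0, -, hz00⟩ := ivt n x hx hcon
  choose! F hF1 hF2 hF3 using next
  let X : ℕ → ℝ := fun k => Nat.rec z0 (fun k z => F (n+k) z) k
  have hX : ∀ k, X k ∈ Icc a b ∧ iteratedDerivWithin (n+k) f (Icc a b) (X k) = 0 := by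
    intro k
    induction k with
    | zero => exact ⟨hz0, hz00⟩
    | succ k ih => exact ⟨hF1 _ _ ih.1 ih.2, hF3 _ _ ih.1 ih.2⟩
  have := dc_bang a b (fun k => iteratedDerivWithin (n+k) f (Icc a b)) (fun k => M (n+k))
    (fun k => hMpos _) (fun k => hlogconvex (n+k+1) (by omega))
    (by
      intro hs
      apply hdiv
      rw [← summable_nat_add_iff n]
      refine hs.congr ?_
      intro k
      rw [add_comm k n, add_assoc])
    (fun k => hd (n+k)) (fun k => hbound (n+k)) X (fun k => (hX k).1)
    (fun k => hF2 _ _ (hX k).1 (hX k).2) (fun k => (hX k).2)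
  exact absurd this (hpos n).ne'
end

section
/- (Carleman) Let [a,b] ⊂ ℝ with a < b and let M = (M_n)_{n∈ℕ} be a log-convex sequence of positive real numbers with M_0 = 1 such that ∑_{n=1}^∞ M_{n-1}/M_n = ∞. Then the Borel mapping at the point a is not surjective: there exists a real sequence (g_n)_{n∈ℕ} such that no f ∈ C_M([a,b]) satisfies f^(n)(a) = n!·g_n for all n ∈ ℕ. In fact, if (g_n) is any sequence of positive reals with limsup_{n→∞} g_n^{1/n} = ∞ (so that the power series ∑ g_n x^n has radius of convergence 0), then no f ∈ C_M([a,b]) satisfies f^(n)(a) = n!·g_n for all n. -/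
open Set

theorem carl_claim (a b : ℝ) (M : ℕ → ℝ) (hMpos : ∀ n, 0 < M n)
    (hmono : Monotone (fun n => M (n + 1) / M n))
    (F : ℕ → ℝ → ℝ)
    (hF : ∀ n, ∀ x ∈ Icc a b, HasDerivWithinAt (F n) (F (n + 1) x) (Icc a b) x)
    (hbd : ∀ n, ∀ x ∈ Icc a b, |F n x| ≤ M n)
    (z : ℕ → ℝ) (hz : Antitone z) (hza : ∀ n, a < z n) (hz0 : ∀ n, F n (z n) = 0)
    (K : ℕ) (x0 : ℝ) (hx0 : a ≤ x0)
    (hQ : ∀ n, z n ≤ x0 → x0 ≤ b → |F n x0| ≤ Real.exp ((n : ℝ) - (K + 1)) * M n) :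
    ∀ d n, K + 1 ≤ n + d → ∀ x, z n ≤ x → x0 ≤ x → x ≤ b →
      |F n x| ≤ Real.exp ((n : ℝ) - (K + 1) +
        Real.exp 1 * (M (K + 1) / M K) * (x - x0)) * M n := by
  have hmu : 0 < Real.exp 1 * (M (K + 1) / M K) :=
    mul_pos (Real.exp_pos _) (div_pos (hMpos _) (hMpos _))
  have htriv : ∀ n, K + 1 ≤ n → ∀ x, z n ≤ x → x0 ≤ x → x ≤ b →
      |F n x| ≤ Real.exp ((n : ℝ) - (K + 1) +
        Real.exp 1 * (M (K + 1) / M K) * (x - x0)) * M n := by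
    intro n hn x _ h2 h3
    have h4 : ((K : ℝ) + 1) ≤ n := by exact_mod_cast hn
    refine (hbd n x ⟨hx0.trans h2, h3⟩).trans ?_
    refine le_mul_of_one_le_left (hMpos n).le (Real.one_le_exp ?_)
    have := mul_nonneg hmu.le (sub_nonneg.2 h2)
    linarith
  intro d
  induction d with
  | zero => intro n hn; exact htriv n (by simpa using hn)
  | succ d ih =>
    intro n hn x hx1 hx2 hx3
    by_cases hnK : K + 1 ≤ n
    · exact htriv n hnK x hx1 hx2 hx3
    set c := Real.exp 1 * (M (K + 1) / M K) with hc
    set p := max x0 (z n) with hp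
    have hpx : p ≤ x := max_le hx2 hx1
    have hap : a ≤ p := hx0.trans (le_max_left _ _)
    have hsub : Icc p x ⊆ Icc a b := Icc_subset_Icc hap hx3
    have hB : ∀ y, HasDerivAt (fun y => Real.exp ((n : ℝ) - (K + 1) + c * (y - x0)) * M n)
        (Real.exp ((n : ℝ) - (K + 1) + c * (y - x0)) * c * M n) y := by
      intro y
      have h1 : HasDerivAt (fun y => (n : ℝ) - (K + 1) + c * (y - x0)) c y := by
        simpa using (((hasDerivAt_id y).sub_const x0).const_mul c).const_add ((n : ℝ) - (K + 1))
      exact h1.exp.mul_const _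
    have key := image_norm_le_of_norm_deriv_right_le_deriv_boundary' (f := F n) (f' := F (n + 1))
      (a := p) (b := x)
      (B := fun y => Real.exp ((n : ℝ) - (K + 1) + c * (y - x0)) * M n)
      (B' := fun y => Real.exp ((n : ℝ) - (K + 1) + c * (y - x0)) * c * M n)
      (fun y hy => ((hF n y (hsub hy)).continuousWithinAt).mono hsub)
      (fun y hy => by
        have h1 := (hF n y (hsub (Ico_subset_Icc_self hy))).mono hsub
        refine h1.mono_of_mem_nhdsWithin ?_
        exact Filter.mem_of_superset (Icc_mem_nhdsGE hy.2) (Icc_subset_Icc_left hy.1))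
      (by
        rw [Real.norm_eq_abs]
        rcases le_total (z n) x0 with h | h
        · have : p = x0 := max_eq_left h
          rw [this]
          simpa using hQ n h (hx2.trans hx3)
        · have : p = z n := max_eq_right h
          rw [this, hz0, abs_zero]
          exact mul_nonneg (Real.exp_pos _).le (hMpos n).le)
      (fun y _ => (hB y).continuousAt.continuousWithinAt)
      (fun y _ => (hB y).hasDerivWithinAt)
      (fun y hy => by
        rw [Real.norm_eq_abs]
        have hzy : z (n + 1) ≤ y := (hz (Nat.le_succ n)).trans ((le_max_right _ _).trans hy.1)
        have h1 := ih (n + 1) (by omega) y hzy ((le_max_left _ _).trans hy.1)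
          (hy.2.le.trans hx3)
        refine h1.trans ?_
        have h2 : M (n + 1) / M n ≤ M (K + 1) / M K := hmono (by omega : n ≤ K)
        rw [div_le_iff₀ (hMpos n)] at h2
        have h3 : Real.exp (((n + 1 : ℕ) : ℝ) - (K + 1) + c * (y - x0)) =
            Real.exp ((n : ℝ) - (K + 1) + c * (y - x0)) * Real.exp 1 := by
          rw [← Real.exp_add]; congr 1; push_cast; ring
        have h4 := mul_le_mul_of_nonneg_left h2 (mul_pos
          (Real.exp_pos ((n : ℝ) - (K + 1) + c * (y - x0))) (Real.exp_pos 1)).le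
        rw [h3]
        refine h4.trans (le_of_eq ?_)
        have h5 : c * M n = Real.exp 1 * (M (K + 1) / M K * M n) := by rw [hc]; ring
        generalize Real.exp ((n : ℝ) - (K + 1) + c * (y - x0)) = E
        linear_combination (-E) * h5)
    simpa [Real.norm_eq_abs] using key ⟨hpx, le_rfl⟩

theorem carl_bang (a b : ℝ) (M : ℕ → ℝ) (hMpos : ∀ n, 0 < M n)
    (hmono : Monotone (fun n => M (n + 1) / M n))
    (hdiv : ¬ Summable (fun n : ℕ => M n / M (n + 1)))
    (F : ℕ → ℝ → ℝ)
    (hF : ∀ n, ∀ x ∈ Icc a b, HasDerivWithinAt (F n) (F (n + 1) x) (Icc a b) x)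
    (hbd : ∀ n, ∀ x ∈ Icc a b, |F n x| ≤ M n)
    (z : ℕ → ℝ) (hz : Antitone z) (hza : ∀ n, a < z n) (hz0 : ∀ n, F n (z n) = 0)
    (y : ℝ) (hy : z 0 ≤ y) (hyb : y ≤ b) : F 0 y = 0 := by
  set S : ℕ → ℝ := fun n => ∑ j ∈ Finset.range n, M j / M (j + 1) / Real.exp 1 with hS
  have hr : ∀ j, 0 ≤ M j / M (j + 1) / Real.exp 1 := fun j =>
    div_nonneg (div_nonneg (hMpos _).le (hMpos _).le) (Real.exp_pos _).le
  have hSm : Monotone S := monotone_nat_of_le_succ (fun n => by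
    simp only [hS, Finset.sum_range_succ]; linarith [hr n])
  have hQ : ∀ N d K, K + d = N → ∀ x, x ≤ b → x ≤ a + (S N - S K) → ∀ n, z n ≤ x →
      |F n x| ≤ Real.exp ((n : ℝ) - K) * M n := by
    intro N d
    induction d with
    | zero =>
      intro K hK x _ hx n hn
      have : K = N := by simpa using hK
      subst this
      have := hza n
      exfalso; linarith
    | succ d ih =>
      intro K hK x hxb hx n hn
      have ih' := ih (K + 1) (by omega)
      set x0 := a + (S N - S (K + 1)) with hx0
      have hax0 : a ≤ x0 := by have := hSm (by omega : K + 1 ≤ N); linarith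
      rcases le_total x x0 with h | h
      · refine (ih' x hxb h n hn).trans ?_
        refine mul_le_mul_of_nonneg_right (Real.exp_le_exp.2 ?_) (hMpos n).le
        push_cast; linarith
      · refine (carl_claim a b M hMpos hmono F hF hbd z hz hza hz0 K x0 hax0
          (fun m h1 h2 => by simpa using ih' x0 h2 le_rfl m h1) (K + 1) n (by omega)
          x hn h hxb).trans ?_
        refine mul_le_mul_of_nonneg_right (Real.exp_le_exp.2 ?_) (hMpos n).le
        have h1 : S (K + 1) = S K + M K / M (K + 1) / Real.exp 1 := Finset.sum_range_succ _ _
        have h2 : x - x0 ≤ M K / M (K + 1) / Real.exp 1 := by linarith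
        have h3 : Real.exp 1 * (M (K + 1) / M K) * (x - x0) ≤
            Real.exp 1 * (M (K + 1) / M K) * (M K / M (K + 1) / Real.exp 1) :=
          mul_le_mul_of_nonneg_left h2
            (mul_nonneg (Real.exp_pos _).le (div_nonneg (hMpos _).le (hMpos _).le))
        have h4 : Real.exp 1 * (M (K + 1) / M K) * (M K / M (K + 1) / Real.exp 1) = 1 := by
          have := (hMpos K).ne'
          have := (hMpos (K + 1)).ne'
          have := (Real.exp_pos 1).ne'
          field_simp
        linarith
  have hStop : Filter.Tendsto S Filter.atTop Filter.atTop := by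
    refine (not_summable_iff_tendsto_nat_atTop_of_nonneg hr).1 ?_
    intro h
    apply hdiv
    have h' := h.mul_right (Real.exp 1)
    refine h'.congr (fun j => ?_)
    have := (Real.exp_pos 1).ne'
    field_simp
  have hall : ∀ K : ℕ, |F 0 y| ≤ Real.exp (-(K : ℝ)) * M 0 := by
    intro K
    obtain ⟨N, hN1, hN2⟩ := ((hStop.eventually_ge_atTop (y - a + S K)).and
      (Filter.eventually_ge_atTop K)).exists
    have := hQ N (N - K) K (by omega) y hyb (by linarith) 0 hy
    simpa using this
  have hlim : Filter.Tendsto (fun K : ℕ => Real.exp (-(K : ℝ)) * M 0) Filter.atTop (nhds 0) := by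
    have := (Real.tendsto_exp_neg_atTop_nhds_zero.comp
      (tendsto_natCast_atTop_atTop (R := ℝ))).mul_const (M 0)
    simpa using this
  have := ge_of_tendsto' hlim hall
  exact abs_eq_zero.1 (le_antisymm this (abs_nonneg _))

theorem carl_nonneg (a b : ℝ) (M : ℕ → ℝ) (hMpos : ∀ n, 0 < M n)
    (hmono : Monotone (fun n => M (n + 1) / M n))
    (hdiv : ¬ Summable (fun n : ℕ => M n / M (n + 1)))
    (F : ℕ → ℝ → ℝ)
    (hF : ∀ n, ∀ x ∈ Icc a b, HasDerivWithinAt (F n) (F (n + 1) x) (Icc a b) x)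
    (hbd : ∀ n, ∀ x ∈ Icc a b, |F n x| ≤ M n)
    (hpos : ∀ n, 0 < F n a) : ∀ y ∈ Icc a b, 0 ≤ F 0 y := by
  intro y hy
  by_contra hneg
  push Not at hneg
  have hzero : ∀ n u, u ∈ Icc a b → F n u < 0 → ∃ w, a < w ∧ w ≤ u ∧ F n w = 0 := by
    intro n u hu hlt
    have hc : ContinuousOn (F n) (Icc a u) := fun x hx =>
      (hF n x ⟨hx.1, hx.2.trans hu.2⟩).continuousWithinAt.mono (Icc_subset_Icc_right hu.2)
    obtain ⟨w, hw, hw0⟩ := intermediate_value_Icc' hu.1 hc ⟨hlt.le, (hpos n).le⟩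
    refine ⟨w, lt_of_le_of_ne hw.1 ?_, hw.2, hw0⟩
    rintro rfl
    exact (hpos n).ne' hw0
  have hstep : ∀ n w, a < w → w ≤ b → F n w = 0 → ∃ v, a < v ∧ v ≤ w ∧ F (n + 1) v = 0 := by
    intro n w haw hwb hw0
    have hc : ContinuousOn (F n) (Icc a w) := fun x hx =>
      (hF n x ⟨hx.1, hx.2.trans hwb⟩).continuousWithinAt.mono (Icc_subset_Icc_right hwb)
    obtain ⟨u, hu, hu'⟩ := exists_hasDerivAt_eq_slope (F n) (F (n + 1)) haw hc (fun x hx =>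
      (hF n x ⟨hx.1.le, hx.2.le.trans hwb⟩).hasDerivAt (Icc_mem_nhds hx.1 (hx.2.trans_le hwb)))
    have hlt : F (n + 1) u < 0 := by
      rw [hu', hw0]
      exact div_neg_of_neg_of_pos (by linarith [hpos n]) (by linarith)
    obtain ⟨v, h1, h2, h3⟩ := hzero (n + 1) u ⟨hu.1.le, hu.2.le.trans hwb⟩ hlt
    exact ⟨v, h1, h2.trans hu.2.le, h3⟩
  obtain ⟨w, hw1, hw2, hw3⟩ := hzero 0 y hy hneg
  choose! g hg1 hg2 hg3 using hstep
  let z : ℕ → ℝ := fun n => Nat.rec w (fun n v => g n v) n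
  have hzs : ∀ n, z (n + 1) = g n (z n) := fun n => rfl
  have hzP : ∀ n, a < z n ∧ z n ≤ b ∧ F n (z n) = 0 := by
    intro n
    induction n with
    | zero => exact ⟨hw1, hw2.trans hy.2, hw3⟩
    | succ n ih =>
      obtain ⟨h1, h2, h3⟩ := ih
      rw [hzs]
      exact ⟨hg1 n _ h1 h2 h3, (hg2 n _ h1 h2 h3).trans h2, hg3 n _ h1 h2 h3⟩
  have hz : Antitone z := antitone_nat_of_succ_le (fun n => by
    obtain ⟨h1, h2, h3⟩ := hzP n
    rw [hzs]; exact hg2 n _ h1 h2 h3)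
  have := carl_bang a b M hMpos hmono hdiv F hF hbd z hz (fun n => (hzP n).1)
    (fun n => (hzP n).2.2) y hw2 hy.2
  linarith

theorem carl_bernstein (a b : ℝ) (F : ℕ → ℝ → ℝ)
    (hF : ∀ n, ∀ x ∈ Icc a b, HasDerivWithinAt (F n) (F (n + 1) x) (Icc a b) x)
    (hnn : ∀ n, ∀ x ∈ Icc a b, 0 ≤ F n x) (A : ℝ) (m : ℕ) :
    ∀ n, A ≤ F (n + m) a → ∀ x ∈ Icc a b, A * ((x - a) ^ m / (Nat.factorial m : ℝ)) ≤ F n x := by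
  have hgen : ∀ n (G G' : ℝ → ℝ), (∀ x, HasDerivAt G (G' x) x) → G a ≤ F n a →
      (∀ x ∈ Icc a b, G' x ≤ F (n + 1) x) → ∀ x ∈ Icc a b, G x ≤ F n x := by
    intro n G G' hG h0 hle x hx
    refine image_le_of_deriv_right_le_deriv_boundary (f := G) (f' := G') (B := F n)
      (B' := F (n + 1)) (a := a) (b := b)
      (fun y _ => (hG y).continuousAt.continuousWithinAt)
      (fun y _ => (hG y).hasDerivWithinAt) h0
      (fun y hy => (hF n y hy).continuousWithinAt)
      (fun y hy => (hF n y (Ico_subset_Icc_self hy)).mono_of_mem_nhdsWithin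
        (Filter.mem_of_superset (Icc_mem_nhdsGE hy.2) (Icc_subset_Icc_left hy.1)))
      (fun y hy => hle y (Ico_subset_Icc_self hy)) hx
  induction m with
  | zero =>
    intro n hA x hx
    have := hgen n (fun _ => A) (fun _ => 0) (fun x => hasDerivAt_const x A) (by simpa using hA)
      (fun y hy => hnn _ y hy) x hx
    simpa using this
  | succ m ih =>
    intro n hA x hx
    refine hgen n (fun x => A * ((x - a) ^ (m + 1) / (Nat.factorial (m + 1) : ℝ)))
      (fun x => A * ((x - a) ^ m / (Nat.factorial m : ℝ))) ?_ ?_ ?_ x hx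
    · intro y
      have h1 := ((((hasDerivAt_id y).sub_const a).pow (m + 1)).div_const
        (Nat.factorial (m + 1) : ℝ)).const_mul A
      refine h1.congr_deriv ?_
      have : (Nat.factorial m : ℝ) ≠ 0 := by exact_mod_cast Nat.factorial_ne_zero m
      have h2 : (m : ℝ) + 1 ≠ 0 := by positivity
      rw [Nat.factorial_succ]
      push_cast
      simp only [id, Nat.add_sub_cancel, mul_one]
      field_simp
    · simpa using hnn n a ⟨le_rfl, hx.1.trans hx.2⟩
    · exact ih (n + 1) (by rwa [show n + 1 + m = n + (m + 1) by omega])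

theorem carl_main (a b : ℝ) (hab : a < b) (M : ℕ → ℝ) (hMpos : ∀ n, 0 < M n)
    (hlogconvex : ∀ n : ℕ, 1 ≤ n → (M n) ^ 2 ≤ M (n - 1) * M (n + 1))
    (hdiv : ¬ Summable (fun n : ℕ => M n / M (n + 1)))
    (g : ℕ → ℝ) (hg : ∀ n, 0 < g n)
    (hlim : Filter.limsup (fun n : ℕ => ENNReal.ofReal ((g n) ^ (1 / (n : ℝ))))
        Filter.atTop = ⊤) :
      ¬ ∃ f : ℝ → ℝ, MemCM a b M f ∧
        ∀ n : ℕ, iteratedDerivWithin n f (Icc a b) a = (Nat.factorial n : ℝ) * g n := by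
  rintro ⟨f, ⟨hf, c, C, hc, hC, hbd⟩, hfg⟩
  set F : ℕ → ℝ → ℝ := fun n => iteratedDerivWithin n f (Icc a b) with hFdef
  have hF : ∀ n, ∀ x ∈ Icc a b, HasDerivWithinAt (F n) (F (n + 1) x) (Icc a b) x := by
    intro n x hx
    have hd : DifferentiableOn ℝ (F n) (Icc a b) :=
      hf.differentiableOn_iteratedDerivWithin (by exact_mod_cast ENat.natCast_lt_top n)
        (uniqueDiffOn_Icc hab)
    have := (hd x hx).hasDerivWithinAt
    simpa only [hFdef, iteratedDerivWithin_succ] using this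
  have hpos : ∀ n, 0 < F n a := fun n => by
    simp only [hFdef, hfg]
    exact mul_pos (by exact_mod_cast Nat.factorial_pos n) (hg n)
  have hmono : Monotone (fun n => M (n + 1) / M n) := monotone_nat_of_le_succ (fun n => by
    rw [div_le_div_iff₀ (hMpos _) (hMpos _)]
    have := hlogconvex (n + 1) (by omega)
    simp only [Nat.add_sub_cancel] at this
    nlinarith)
  have hnn : ∀ n, ∀ x ∈ Icc a b, 0 ≤ F n x := by
    intro n
    have hratio : ∀ m, c * C ^ (m + 1 + n) * M (m + 1 + n) / (c * C ^ (m + n) * M (m + n)) =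
        C * (M (m + n + 1) / M (m + n)) := by
      intro m
      have := (hMpos (m + n)).ne'
      rw [show m + 1 + n = m + n + 1 by omega, pow_succ]
      field_simp
    have := carl_nonneg a b (fun m => c * C ^ (m + n) * M (m + n))
      (fun m => mul_pos (mul_pos hc (pow_pos hC _)) (hMpos _))
      (fun i j hij => by
        simp only [hratio]
        exact mul_le_mul_of_nonneg_left (hmono (by omega : i + n ≤ j + n)) hC.le)
      (fun hs => hdiv (by
        rw [← summable_nat_add_iff n]
        refine (hs.mul_left C).congr (fun m => ?_)
        rw [← inv_div, hratio m, mul_inv, inv_div]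
        field_simp))
      (fun m => F (m + n))
      (fun m x hx => by
        have := hF (m + n) x hx
        rwa [show m + n + 1 = m + 1 + n by omega] at this)
      (fun m x hx => hbd (m + n) x hx) (fun m => hpos _)
    simpa using this
  have hb : b ∈ Icc a b := ⟨hab.le, le_rfl⟩
  have hterm : ∀ n, g n * (b - a) ^ n ≤ F 0 b := by
    intro n
    have := carl_bernstein a b F hF hnn (F n a) n 0 (by simp) b hb
    have h1 : F n a = (Nat.factorial n : ℝ) * g n := hfg n
    have h2 : (Nat.factorial n : ℝ) ≠ 0 := by exact_mod_cast Nat.factorial_ne_zero n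
    calc g n * (b - a) ^ n = F n a * ((b - a) ^ n / (Nat.factorial n : ℝ)) := by
          rw [h1]; field_simp
      _ ≤ _ := this
  have hba : 0 < b - a := sub_pos.2 hab
  have hle : ∀ n : ℕ, 1 ≤ n → (g n) ^ (1 / (n : ℝ)) ≤ max 1 (F 0 b) / (b - a) := by
    intro n hn
    have hA : 1 ≤ max 1 (F 0 b) := le_max_left _ _
    have h1 : g n ≤ (max 1 (F 0 b) / (b - a)) ^ n := by
      rw [div_pow, le_div_iff₀ (pow_pos hba n)]
      exact ((hterm n).trans (le_max_right 1 _)).trans (le_self_pow₀ hA (by omega))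
    calc (g n) ^ (1 / (n : ℝ)) ≤ ((max 1 (F 0 b) / (b - a)) ^ n) ^ (1 / (n : ℝ)) :=
          Real.rpow_le_rpow (hg n).le h1 (by positivity)
      _ = _ := by
          rw [one_div]
          exact Real.pow_rpow_inv_natCast (by positivity) (by omega)
  have : Filter.limsup (fun n : ℕ => ENNReal.ofReal ((g n) ^ (1 / (n : ℝ)))) Filter.atTop ≤
      ENNReal.ofReal (max 1 (F 0 b) / (b - a)) := by
    refine Filter.limsup_le_of_le (by isBoundedDefault) ?_
    filter_upwards [Filter.eventually_ge_atTop 1] with n hn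
    exact ENNReal.ofReal_le_ofReal (hle n hn)
  rw [hlim] at this
  exact ENNReal.ofReal_ne_top (top_le_iff.1 this)

/-- Carleman's theorem: the Borel map at `a` is not surjective on a quasi-analytic
Denjoy–Carleman class; in fact no power series of radius of convergence `0` with positive
coefficients is attained. -/
theorem stmt_15 (a b : ℝ) (hab : a < b) (M : ℕ → ℝ) (hMpos : ∀ n, 0 < M n)
    (hM0 : M 0 = 1)
    (hlogconvex : ∀ n : ℕ, 1 ≤ n → (M n) ^ 2 ≤ M (n - 1) * M (n + 1))
    (hdiv : ¬ Summable (fun n : ℕ => M n / M (n + 1))) :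
    (∃ g : ℕ → ℝ, ¬ ∃ f : ℝ → ℝ, MemCM a b M f ∧
        ∀ n : ℕ, iteratedDerivWithin n f (Icc a b) a = (Nat.factorial n : ℝ) * g n) ∧
    (∀ g : ℕ → ℝ, (∀ n, 0 < g n) →
      Filter.limsup (fun n : ℕ => ENNReal.ofReal ((g n) ^ (1 / (n : ℝ))))
        Filter.atTop = ⊤ →
      ¬ ∃ f : ℝ → ℝ, MemCM a b M f ∧
        ∀ n : ℕ, iteratedDerivWithin n f (Icc a b) a = (Nat.factorial n : ℝ) * g n) := by
  have h2 := carl_main a b hab M hMpos hlogconvex hdiv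
  refine ⟨⟨fun n => ((n : ℝ) + 1) ^ n, h2 _ (fun n => by positivity) ?_⟩, h2⟩
  refine Filter.Tendsto.limsup_eq ?_
  have h1 : Filter.Tendsto (fun n : ℕ => ENNReal.ofReal ((n : ℝ) + 1)) Filter.atTop (nhds ⊤) :=
    ENNReal.tendsto_ofReal_atTop.comp
      (Filter.tendsto_atTop_add_const_right _ 1 tendsto_natCast_atTop_atTop)
  refine h1.congr' ?_
  filter_upwards [Filter.eventually_ge_atTop 1] with n hn
  rw [one_div, Real.pow_rpow_inv_natCast (by positivity) (by omega)]
end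

section
/- Let [a,b] ⊂ ℝ with a < b and let f be an infinitely differentiable function on [a,b]. Set M_n(f) = sup_{x∈[a,b]} |f^(n)(x)|. Suppose liminf_{n→∞} (M_n(f))^{1/n}/n < ∞. If c ∈ [a,b] is such that f^(n)(c) = 0 for all n ∈ ℕ, then f is identically zero on [a,b]. -/
open Set

lemma aux_taylor (a b : ℝ) (hab : a < b) (f : ℝ → ℝ)
    (hf : ContDiffOn ℝ (⊤ : ℕ∞) f (Icc a b)) (y x : ℝ) (hy : y ∈ Icc a b) (hx : x ∈ Icc a b)
    (hzero : ∀ n : ℕ, iteratedDerivWithin n f (Icc a b) y = 0) (n : ℕ) (M : ℝ)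
    (hM : ∀ t ∈ Icc a b, |iteratedDerivWithin (n + 1) f (Icc a b) t| ≤ M) :
    |f x| ≤ M * |x - y| ^ (n + 1) / (n + 1).factorial := by
  have hM0 : 0 ≤ M := (abs_nonneg _).trans (hM y hy)
  rcases eq_or_ne y x with rfl | hne
  · have := hzero 0
    simp at this
    simp [this]
  have hsub : uIcc y x ⊆ Icc a b := uIcc_subset_Icc hy hx
  have hu : UniqueDiffOn ℝ (uIcc y x) := uniqueDiffOn_uIcc hne
  have heq : ∀ m : ℕ, ∀ t ∈ uIcc y x,
      iteratedDerivWithin m f (uIcc y x) t = iteratedDerivWithin m f (Icc a b) t := by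
    intro m t ht
    rw [iteratedDerivWithin_eq_iteratedFDerivWithin, iteratedDerivWithin_eq_iteratedFDerivWithin,
      iteratedFDerivWithin_subset hsub hu (uniqueDiffOn_Icc hab) (hf.of_le (by exact_mod_cast le_top)) ht]
  have hf2 : ContDiffOn ℝ (⊤ : ℕ∞) f (uIcc y x) := hf.mono hsub
  obtain ⟨t, ht, h⟩ := taylor_mean_remainder_lagrange (n := n) hne
    (hf2.of_le (by exact_mod_cast le_top))
    ((hf2.differentiableOn_iteratedDerivWithin (m := n)
      (by exact_mod_cast WithTop.coe_lt_top n) hu).mono Ioo_subset_Icc_self)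
  have ht' : t ∈ uIcc y x := ⟨ht.1.le, ht.2.le⟩
  rw [taylor_within_apply, Finset.sum_eq_zero, sub_zero, heq _ _ ht'] at h
  · rw [h, abs_div, abs_mul, abs_pow, Nat.abs_cast]
    gcongr
    exact hM t (hsub ht')
  · intro k _
    rw [heq k y left_mem_uIcc, hzero, smul_zero]

lemma aux_pow (n : ℕ) (C d : ℝ) (hC : 0 ≤ C) (hd : 0 ≤ d) :
    (C * n) ^ n * d ^ n / n.factorial ≤ (C * Real.exp 1 * d) ^ n := by
  have h := Real.pow_div_factorial_le_exp _ (Nat.cast_nonneg (α := ℝ) n) n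
  have e : Real.exp (n : ℝ) = Real.exp 1 ^ n := by rw [← Real.exp_nat_mul]; simp
  rw [e] at h
  calc (C * n) ^ n * d ^ n / n.factorial = (C * d) ^ n * ((n : ℝ) ^ n / n.factorial) := by
        rw [mul_pow, mul_pow]; ring
    _ ≤ (C * d) ^ n * Real.exp 1 ^ n := by gcongr
    _ = _ := by rw [← mul_pow]; ring

theorem stmt_16 (a b : ℝ) (hab : a < b) (f : ℝ → ℝ)
    (hf : ContDiffOn ℝ (⊤ : ℕ∞) f (Icc a b))
    (Mf : ℕ → ℝ)
    (hMf : ∀ n : ℕ, Mf n = sSup ((fun x => |iteratedDerivWithin n f (Icc a b) x|) '' Icc a b))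
    (hliminf : Filter.liminf
      (fun n : ℕ => ENNReal.ofReal ((Mf n) ^ (1 / (n : ℝ)) / n)) Filter.atTop < ⊤)
    (c : ℝ) (hc : c ∈ Icc a b)
    (hzero : ∀ n : ℕ, iteratedDerivWithin n f (Icc a b) c = 0) :
    ∀ x ∈ Icc a b, f x = 0 := by
  have hle : ∀ n, ∀ t ∈ Icc a b, |iteratedDerivWithin n f (Icc a b) t| ≤ Mf n := by
    intro n t ht
    rw [hMf]
    have hcont : ContinuousOn (fun x => |iteratedDerivWithin n f (Icc a b) x|) (Icc a b) :=
      (hf.continuousOn_iteratedDerivWithin (m := n) (by exact_mod_cast le_top)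
        (uniqueDiffOn_Icc hab)).abs
    exact le_csSup (isCompact_Icc.image_of_continuousOn hcont).bddAbove ⟨t, ht, rfl⟩
  have hM0 : ∀ n, 0 ≤ Mf n := fun n => (abs_nonneg _).trans (hle n c hc)
  obtain ⟨K, hK1, hK2⟩ := exists_between hliminf
  have hfreq := Filter.frequently_lt_of_liminf_lt (by isBoundedDefault) hK1
  obtain ⟨C, hC0, hCK⟩ : ∃ C : ℝ, 0 < C ∧ K ≤ ENNReal.ofReal C := by
    refine ⟨K.toReal + 1, by positivity, ?_⟩
    rw [ENNReal.le_ofReal_iff_toReal_le hK2.ne (by positivity)]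
    linarith
  have hfr : ∃ᶠ n in Filter.atTop, Mf n ≤ (C * n) ^ n ∧ 1 ≤ n := by
    refine (hfreq.and_eventually (Filter.eventually_ge_atTop 1)).mono ?_
    rintro n ⟨h, hn⟩
    refine ⟨?_, hn⟩
    have h2 := (ENNReal.ofReal_lt_ofReal_iff hC0).1 (h.trans_le hCK)
    have hn0 : (0 : ℝ) < n := by exact_mod_cast hn
    rw [div_lt_iff₀ hn0] at h2
    calc Mf n = (Mf n ^ (1 / (n : ℝ))) ^ n := by
          rw [one_div, Real.rpow_inv_natCast_pow (hM0 n) (by omega)]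
      _ ≤ _ := by
          have := Real.rpow_nonneg (hM0 n) (1 / (n : ℝ))
          gcongr
  have hE : 0 < C * Real.exp 1 := by positivity
  set δ : ℝ := 1 / (4 * (C * Real.exp 1)) with hδ
  have hδ0 : 0 < δ := by positivity
  have hloc : ∀ y ∈ Icc a b, (∀ n : ℕ, iteratedDerivWithin n f (Icc a b) y = 0) →
      ∀ x ∈ Icc a b, |x - y| < 2 * δ → f x = 0 := by
    intro y hy hz x hx hxy
    by_contra hne
    have hpos : 0 < |f x| := abs_pos.2 hne
    have htend := tendsto_pow_atTop_nhds_zero_of_lt_one (r := (1 / 2 : ℝ)) (by norm_num)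
      (by norm_num)
    obtain ⟨n, ⟨h1, hn⟩, h2⟩ := (hfr.and_eventually (htend.eventually_lt_const hpos)).exists
    obtain ⟨m, rfl⟩ := Nat.exists_eq_add_of_le' hn
    have h3 := aux_taylor a b hab f hf y x hy hx hz m _ (fun t ht => (hle _ t ht).trans h1)
    have h4 := aux_pow (m + 1) C |x - y| hC0.le (abs_nonneg _)
    have h5 : C * Real.exp 1 * |x - y| ≤ 1 / 2 := by
      calc C * Real.exp 1 * |x - y| ≤ C * Real.exp 1 * (2 * δ) := by gcongr
        _ = 1 / 2 := by rw [hδ]; field_simp; norm_num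
    have h6 : (C * Real.exp 1 * |x - y|) ^ (m + 1) ≤ (1 / 2) ^ (m + 1) := by gcongr
    linarith
  have hstep : ∀ y ∈ Icc a b, (∀ n : ℕ, iteratedDerivWithin n f (Icc a b) y = 0) →
      ∀ x ∈ Icc a b, |x - y| ≤ δ → ∀ n : ℕ, iteratedDerivWithin n f (Icc a b) x = 0 := by
    intro y hy hz x hx hxy n
    have hev : f =ᶠ[nhdsWithin x (Icc a b)] (fun _ => (0 : ℝ)) := by
      have : ∀ᶠ z in nhds x, |z - y| < 2 * δ :=
        (by fun_prop : Continuous fun z : ℝ => |z - y|).continuousAt.eventually_lt_const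
          (by linarith)
      filter_upwards [self_mem_nhdsWithin, nhdsWithin_le_nhds this] with z hz1 hz2
      exact hloc y hy hz z hz1 hz2
    rw [hev.iteratedDerivWithin_eq (hev.self_of_nhdsWithin hx)]
    simp
  have hind : ∀ k : ℕ, ∀ x ∈ Icc a b, |x - c| ≤ k * δ →
      ∀ n : ℕ, iteratedDerivWithin n f (Icc a b) x = 0 := by
    intro k
    induction k with
    | zero =>
      intro x hx h
      have : x = c := by
        have := abs_nonpos_iff.1 (by simpa using h : |x - c| ≤ 0)
        linarith
      rw [this]; exact hzero
    | succ k ih =>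
      intro x hx h
      push_cast at h
      have hk : (0 : ℝ) < k + 1 := by positivity
      have hy : c + (k / (k + 1) : ℝ) * (x - c) ∈ Icc a b := by
        have := (convex_Icc a b).add_smul_sub_mem hc hx
          (t := (k / (k + 1) : ℝ)) ⟨by positivity, by rw [div_le_one hk]; linarith⟩
        simpa using this
      refine hstep _ hy (ih _ hy ?_) x hx ?_
      · rw [add_sub_cancel_left, abs_mul, abs_of_nonneg (by positivity)]
        calc (k / (k + 1) : ℝ) * |x - c| ≤ (k / (k + 1) : ℝ) * ((k + 1) * δ) := by gcongr
          _ = k * δ := by field_simp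
      · have : x - (c + (k / (k + 1) : ℝ) * (x - c)) = (x - c) / (k + 1) := by field_simp; ring
        rw [this, abs_div, abs_of_pos hk, div_le_iff₀ hk]
        linarith
  intro x hx
  obtain ⟨k, hk⟩ := exists_nat_ge (|x - c| / δ)
  rw [div_le_iff₀ hδ0] at hk
  simpa using hind k x hx hk 0
end

section
/- Let (x_n)_{n∈ℕ} be a strictly decreasing sequence of real numbers and define the polynomials Q recursively by Q(x) = 1 (empty list of nodes) and Q(x, x_0, x_1, …, x_{n-1}) = ∫_{x_0}^{x} Q(t, x_1, …, x_{n-1}) dt. Then for every n ≥ 1 and every real x with x ≥ x_0: (x − x_0)^n / n! ≤ Q(x, x_0, x_1, …, x_{n-1}) ≤ (x − x_n)^n / n!. -/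
open Set intervalIntegral

/-- The Gontcharoff polynomial `Q(x, x₀, …, x_{n-1})` associated to a list of nodes,
defined by `Q(x) = 1` and `Q(x, x₀, …, x_{n-1}) = ∫_{x₀}^{x} Q(t, x₁, …, x_{n-1}) dt`. -/
noncomputable def Qpoly : List ℝ → ℝ → ℝ
  | [], _ => 1
  | x₀ :: rest, y => ∫ t in x₀..y, Qpoly rest t

theorem Qpoly_continuous (l : List ℝ) : Continuous (Qpoly l) := by
  induction l with
  | nil =>
    have : Qpoly [] = fun _ => (1 : ℝ) := by funext y; simp [Qpoly]
    rw [this]; exact continuous_const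
  | cons a l ih =>
    have : Qpoly (a :: l) = fun y => ∫ t in a..y, Qpoly l t := by funext y; simp [Qpoly]
    rw [this]
    exact intervalIntegral.continuous_primitive (fun a b => ih.intervalIntegrable a b) a

theorem integral_shift_pow (a b c : ℝ) (n : ℕ) :
    ∫ t in a..b, (t - c) ^ n / (Nat.factorial n : ℝ)
      = ((b - c) ^ (n + 1) - (a - c) ^ (n + 1)) / (Nat.factorial (n + 1) : ℝ) := by
  rw [intervalIntegral.integral_div,
    intervalIntegral.integral_comp_sub_right (fun t => t ^ n) c, integral_pow,
    Nat.factorial_succ]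
  push_cast
  rw [div_div]

theorem Qpoly_bounds (n : ℕ) : ∀ x : ℕ → ℝ, StrictAnti x → ∀ y : ℝ, x 0 ≤ y →
      (y - x 0) ^ n / (Nat.factorial n : ℝ) ≤ Qpoly ((List.range n).map x) y ∧
        Qpoly ((List.range n).map x) y ≤ (y - x n) ^ n / (Nat.factorial n : ℝ) := by
  induction n with
  | zero => intro x hx y hy; simp [Qpoly]
  | succ n ih =>
    intro x hx y hy
    have hx' : StrictAnti (fun k => x (k + 1)) := fun a b h => hx (by omega)
    have hl : (List.range (n + 1)).map x
        = x 0 :: (List.range n).map (fun k => x (k + 1)) := by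
      simp [List.range_succ_eq_map, Function.comp_def]
    have h01 : x 1 < x 0 := hx (by omega)
    have h0n : x (n + 1) < x 0 := hx (by omega)
    have hc := (Qpoly_continuous ((List.range n).map (fun k => x (k + 1)))).intervalIntegrable
      (μ := MeasureTheory.volume) (x 0) y
    have hp : ∀ c : ℝ, IntervalIntegrable (fun t => (t - c) ^ n / (Nat.factorial n : ℝ))
        MeasureTheory.volume (x 0) y := fun c =>
      Continuous.intervalIntegrable (by fun_prop) _ _
    rw [hl]
    simp only [Qpoly]
    constructor
    · have h := intervalIntegral.integral_mono_on hy (hp (x 0)) hc (fun t ht => by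
        refine le_trans ?_ (ih _ hx' t (by simpa using h01.le.trans ht.1)).1
        have h1 : 0 ≤ t - x 0 := sub_nonneg.2 ht.1
        have h2 : t - x 0 ≤ t - x (0 + 1) := by rw [zero_add]; linarith
        gcongr)
      rw [integral_shift_pow] at h
      simpa using h
    · have h := intervalIntegral.integral_mono_on hy hc (hp (x (n + 1))) (fun t ht =>
        (ih _ hx' t (by simpa using h01.le.trans ht.1)).2)
      rw [integral_shift_pow] at h
      refine h.trans ?_
      have h1 : 0 ≤ (x 0 - x (n + 1)) ^ (n + 1) := pow_nonneg (by linarith) _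
      gcongr
      linarith

theorem stmt_17 (x : ℕ → ℝ) (hx : StrictAnti x) :
    ∀ n : ℕ, 1 ≤ n → ∀ y : ℝ, x 0 ≤ y →
      (y - x 0) ^ n / (Nat.factorial n : ℝ) ≤ Qpoly ((List.range n).map x) y ∧
        Qpoly ((List.range n).map x) y ≤ (y - x n) ^ n / (Nat.factorial n : ℝ) := by
  intro n _ y hy
  exact Qpoly_bounds n x hx y hy
end

section
/- (Generalized Taylor theorem) Let [a,b] ⊂ ℝ with a < b, let f be infinitely differentiable on [a,b], and let (x_n)_{n∈ℕ} be a strictly decreasing sequence of points of [a,b] with x_0 < b. Then for every m ∈ ℕ and every x ∈ (x_0, b] there exists ξ ∈ (x_m, x) such that f(x) = f(x_0) + f'(x_1)·Q(x, x_0) + f''(x_2)·Q(x, x_0, x_1) + ⋯ + f^(m)(x_m)·Q(x, x_0, …, x_{m-1}) + f^(m+1)(ξ)·Q(x, x_0, x_1, …, x_m). -/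
open Set intervalIntegral

theorem Qpoly_hasDerivAt (z : ℝ) (l : List ℝ) (y : ℝ) :
    HasDerivAt (Qpoly (z :: l)) (Qpoly l y) y := by
  have : Qpoly (z :: l) = fun y => ∫ t in z..y, Qpoly l t := by funext y; simp [Qpoly]
  rw [this]
  have h := Qpoly_continuous l
  exact intervalIntegral.integral_hasDerivAt_right (h.intervalIntegrable _ _)
    (h.stronglyMeasurableAtFilter _ _) h.continuousAt

theorem Qpoly_range_succ (k : ℕ) (x : ℕ → ℝ) :
    (List.range (k + 1)).map x = x 0 :: (List.range k).map (fun n => x (n + 1)) := by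
  rw [List.range_succ_eq_map, List.map_cons, List.map_map]
  rfl

theorem Qpoly_pos (n : ℕ) : ∀ (x : ℕ → ℝ), StrictAnti x → ∀ y, x 0 < y →
    0 < Qpoly ((List.range n).map x) y := by
  induction n with
  | zero => intro x hx y hy; simp [Qpoly]
  | succ n ih =>
    intro x hx y hy
    rw [Qpoly_range_succ]
    simp only [Qpoly]
    apply intervalIntegral.intervalIntegral_pos_of_pos_on
      ((Qpoly_continuous _).intervalIntegrable _ _) _ hy
    intro t ht
    refine ih (fun n => x (n + 1)) (fun i j hij => hx (by omega)) t ?_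
    exact (hx (by omega : 0 < 0 + 1)).trans ht.1

theorem taylor_aux (a b : ℝ) (m : ℕ) : ∀ (F : ℕ → ℝ → ℝ) (x : ℕ → ℝ) (y c : ℝ),
    (∀ k, ContinuousOn (F k) (Icc a b)) →
    (∀ k, ∀ t ∈ Ioo a b, HasDerivAt (F k) (F (k + 1) t) t) →
    (∀ n, x n ∈ Icc a b) → StrictAnti x → y ∈ Ioc (x 0) b →
    F 0 y = (∑ k ∈ Finset.range (m + 1), F k (x k) * Qpoly ((List.range k).map x) y)
      + c * Qpoly ((List.range (m + 1)).map x) y →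
    ∃ ξ ∈ Ioo (x m) y, F (m + 1) ξ = c := by
  induction m with
  | zero =>
    intro F x y c hc hd hmem hx hy h
    obtain ⟨ξ, hξ, e⟩ := exists_hasDerivAt_eq_slope (F 0) (F 1) hy.1
      ((hc 0).mono (Icc_subset_Icc (hmem 0).1 hy.2))
      (fun t ht => hd 0 t ⟨(hmem 0).1.trans_lt ht.1, ht.2.trans_le hy.2⟩)
    refine ⟨ξ, hξ, ?_⟩
    simp [Qpoly] at h
    have : y - x 0 ≠ 0 := (sub_pos.2 hy.1).ne'
    rw [zero_add, e, h]
    field_simp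
    ring
  | succ m ih =>
    intro F x y c hc hd hmem hx hy h
    have hstep : ∃ η ∈ Ioo (x 0) y, F 1 η =
        (∑ k ∈ Finset.range (m + 1), F (k + 1) (x (k + 1)) *
          Qpoly ((List.range k).map (fun n => x (n + 1))) η)
        + c * Qpoly ((List.range (m + 1)).map (fun n => x (n + 1))) η := by
      set G : ℝ → ℝ := fun t => F 0 t - ((∑ k ∈ Finset.range (m + 1), F (k + 1) (x (k + 1)) *
          Qpoly (x 0 :: (List.range k).map (fun n => x (n + 1))) t)
        + c * Qpoly (x 0 :: (List.range (m + 1)).map (fun n => x (n + 1))) t) with hG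
      have hGc : ContinuousOn G (Icc (x 0) y) := by
        refine ((hc 0).mono (Icc_subset_Icc (hmem 0).1 hy.2)).sub (Continuous.continuousOn ?_)
        refine Continuous.add (continuous_finsetSum _ fun k _ => ?_) ?_
        · exact continuous_const.mul (Qpoly_continuous _)
        · exact continuous_const.mul (Qpoly_continuous _)
      have hG0 : G (x 0) = F 0 (x 0) := by simp [hG, Qpoly]
      have hGy : G y = F 0 (x 0) := by
        rw [Finset.sum_range_succ'] at h
        simp only [Qpoly_range_succ _ x] at h
        simp only [hG]
        rw [h]
        simp only [List.range_zero, List.map_nil]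
        have : Qpoly [] y = 1 := by simp [Qpoly]
        rw [this]
        ring
      obtain ⟨η, hη, e⟩ := exists_hasDerivAt_eq_zero (f := G) hy.1 hGc (hG0.trans hGy.symm)
        (fun t ht => (hd 0 t ⟨(hmem 0).1.trans_lt ht.1, ht.2.trans_le hy.2⟩).sub
          ((HasDerivAt.fun_sum (fun k _ => (Qpoly_hasDerivAt (x 0) _ t).const_mul
            (F (k + 1) (x (k + 1))))).add ((Qpoly_hasDerivAt (x 0) _ t).const_mul c)))
      exact ⟨η, hη, sub_eq_zero.1 e⟩
    obtain ⟨η, hη, e⟩ := hstep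
    obtain ⟨ξ, hξ, hfin⟩ := ih (fun k => F (k + 1)) (fun n => x (n + 1)) η c
      (fun k => hc _) (fun k => hd _) (fun n => hmem _) (fun i j hij => hx (by omega))
      ⟨(hx (by omega : 0 < 0 + 1)).trans hη.1, hη.2.le.trans hy.2⟩ e
    exact ⟨ξ, ⟨hξ.1, hξ.2.trans hη.2⟩, hfin⟩

/-- Generalized Taylor theorem with nodes `x₀ > x₁ > x₂ > ⋯`. -/
theorem stmt_18 (a b : ℝ) (hab : a < b) (f : ℝ → ℝ)
    (hf : ContDiffOn ℝ (⊤ : ℕ∞) f (Icc a b))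
    (x : ℕ → ℝ) (hmem : ∀ n, x n ∈ Icc a b) (hx : StrictAnti x) (hx0 : x 0 < b) :
    ∀ m : ℕ, ∀ y ∈ Ioc (x 0) b, ∃ ξ ∈ Ioo (x m) y,
      f y = (∑ k ∈ Finset.range (m + 1),
          iteratedDerivWithin k f (Icc a b) (x k) * Qpoly ((List.range k).map x) y)
        + iteratedDerivWithin (m + 1) f (Icc a b) ξ * Qpoly ((List.range (m + 1)).map x) y := by
  intro m y hy
  have hu := uniqueDiffOn_Icc hab
  have hQ := (Qpoly_pos (m + 1) x hx y hy.1).ne'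
  obtain ⟨ξ, hξ, e⟩ := taylor_aux a b m (fun k => iteratedDerivWithin k f (Icc a b)) x y
    ((f y - ∑ k ∈ Finset.range (m + 1),
          iteratedDerivWithin k f (Icc a b) (x k) * Qpoly ((List.range k).map x) y) /
      Qpoly ((List.range (m + 1)).map x) y)
    (fun k => hf.continuousOn_iteratedDerivWithin (by exact_mod_cast le_top) hu)
    (fun k t ht => by
      have h1 := (hf.differentiableOn_iteratedDerivWithin (m := k)
        (by exact_mod_cast ENat.natCast_lt_top k) hu) t (Ioo_subset_Icc_self ht)
      have h2 := h1.hasDerivWithinAt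
      rw [← iteratedDerivWithin_succ] at h2
      exact h2.hasDerivAt (Icc_mem_nhds ht.1 ht.2))
    hmem hx hy (by
      simp only [iteratedDerivWithin_zero]
      rw [div_mul_cancel₀ _ hQ]
      ring)
  refine ⟨ξ, hξ, ?_⟩
  rw [e, div_mul_cancel₀ _ hQ]
  ring
end

section
/- Let [a,b] ⊂ ℝ with a < b, let (n_k)_{k∈ℕ} be a strictly increasing sequence of natural numbers, and let f be an infinitely differentiable function on [a,b] for which there exist positive constants A, B with sup_{x∈[a,b]} |f^(n_k)(x)| ≤ B·A^{n_k}·(n_k)! for all k ∈ ℕ. Let (x_n)_{n∈ℕ} be a strictly decreasing sequence of points of [a,b] such that the series ∑_{j=0}^∞ |x_j − x_{j+1}| converges. If f^(n)(x_n) = 0 for all n ∈ ℕ, then f is identically zero on [a,b]. -/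
open Set

/-- One integration step. -/
theorem gon_step {a b : ℝ} (h h' : ℝ → ℝ)
    (hd : ∀ t ∈ Icc a b, HasDerivWithinAt h (h' t) (Icc a b) t)
    (c y : ℝ) (hc : c ∈ Icc a b) (hy : y ∈ Icc a b) (h0 : h c = 0)
    (M L : ℝ) (hM : 0 ≤ M) (hL : 0 ≤ L) (N : ℕ)
    (hb : ∀ t ∈ Icc a b, |h' t| ≤ M * (|t - c| + L) ^ N / (N.factorial : ℝ)) :
    |h y| ≤ M * (|y - c| + L) ^ (N + 1) / ((N + 1).factorial : ℝ) := by
  have hmaps : MapsTo (fun s : ℝ => c + s * (y - c)) (Icc 0 1) (Icc a b) := by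
    intro s hs
    have := (convex_Icc a b).add_smul_sub_mem hc hy hs
    simpa using this
  have hlin : ∀ s : ℝ, HasDerivWithinAt (fun s : ℝ => c + s * (y - c)) (y - c) (Icc 0 1) s := by
    intro s
    simpa using (((hasDerivAt_id s).mul_const (y - c)).const_add c).hasDerivWithinAt
  have hphi : ∀ s ∈ Icc (0:ℝ) 1, HasDerivWithinAt (fun s : ℝ => h (c + s * (y - c)))
      (h' (c + s * (y - c)) * (y - c)) (Icc 0 1) s := by
    intro s hs
    exact (hd _ (hmaps hs)).comp s (hlin s) hmaps
  have key := image_norm_le_of_norm_deriv_right_le_deriv_boundary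
    (f := fun s : ℝ => h (c + s * (y - c)))
    (f' := fun s : ℝ => h' (c + s * (y - c)) * (y - c)) (a := 0) (b := 1)
    (B := fun s => M * (s * |y - c| + L) ^ (N + 1) / ((N + 1).factorial : ℝ))
    (B' := fun s => M * (s * |y - c| + L) ^ N / (N.factorial : ℝ) * |y - c|)
    (fun s hs => (hphi s hs).continuousWithinAt)
    (fun s hs => (hphi s ⟨hs.1, hs.2.le⟩).mono_of_mem_nhdsWithin
      (Icc_mem_nhdsGE_of_mem hs))
    (by simp only [zero_mul, add_zero, h0, norm_zero, zero_add]; positivity)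
    (by
      intro s
      have h1 : HasDerivAt (fun s : ℝ => s * |y - c| + L) (|y - c|) s := by
        simpa using ((hasDerivAt_id s).mul_const (|y - c|)).add_const L
      have h2 := ((h1.pow (N + 1)).const_mul M).div_const ((N + 1).factorial : ℝ)
      refine h2.congr_deriv ?_
      have : (N.factorial : ℝ) ≠ 0 := by positivity
      have : (N : ℝ) + 1 ≠ 0 := by positivity
      rw [Nat.factorial_succ]
      push_cast
      field_simp)
    (by
      intro s hs
      have := hb _ (hmaps ⟨hs.1, hs.2.le⟩)
      have e : |c + s * (y - c) - c| = s * |y - c| := by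
        rw [add_sub_cancel_left, abs_mul, abs_of_nonneg hs.1]
      rw [e] at this
      rw [Real.norm_eq_abs, abs_mul]
      exact mul_le_mul_of_nonneg_right this (abs_nonneg _))
    (right_mem_Icc.2 zero_le_one)
  simpa using key

/-- Goncharov type estimate. -/
theorem gon_bound {a b : ℝ} (F : ℕ → ℝ → ℝ)
    (hd : ∀ n, ∀ t ∈ Icc a b, HasDerivWithinAt (F n) (F (n + 1) t) (Icc a b) t)
    (M : ℝ) (hM : 0 ≤ M) (N : ℕ) : ∀ (m : ℕ) (z : ℕ → ℝ), Antitone z →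
    (∀ i, z i ∈ Icc a b) → (∀ i, F (m + i) (z i) = 0) →
    (∀ t ∈ Icc a b, |F (m + N) t| ≤ M) → ∀ y ∈ Icc a b,
    |F m y| ≤ M * (|y - z 0| + (z 0 - z N)) ^ N / (N.factorial : ℝ) := by
  induction N with
  | zero =>
    intro m z _ _ _ hb y hy
    simpa using hb y hy
  | succ N ih =>
    intro m z hz hmem h0 hb y hy
    refine gon_step (F m) (F (m + 1)) (hd m) (z 0) y (hmem 0) hy (by simpa using h0 0) M
      (z 0 - z (N + 1)) hM (sub_nonneg.2 (hz (Nat.zero_le _))) N ?_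
    intro t ht
    have := ih (m + 1) (fun i => z (i + 1)) (fun i j hij => hz (by omega))
      (fun i => hmem _)
      (fun i => by have := h0 (i + 1); rwa [show m + (i + 1) = m + 1 + i by ring] at this)
      (by rwa [show m + 1 + N = m + (N + 1) by ring]) t ht
    refine this.trans ?_
    have h1 : z (N + 1) ≤ z 1 := hz (by omega)
    have h2 : z 1 ≤ z 0 := hz (by omega)
    have h3 : |t - z 1| ≤ |t - z 0| + (z 0 - z 1) := by
      have := abs_sub_le t (z 0) (z 1)
      rwa [abs_of_nonneg (sub_nonneg.2 h2)] at this
    have h4 : 0 ≤ |t - z 1| + (z 1 - z (N + 1)) := add_nonneg (abs_nonneg _) (by linarith)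
    simp only [zero_add]
    gcongr M * ?_ ^ N / _
    linarith

theorem gon_vanish {a b : ℝ} (F : ℕ → ℝ → ℝ)
    (hd : ∀ n, ∀ t ∈ Icc a b, HasDerivWithinAt (F n) (F (n + 1) t) (Icc a b) t)
    (nseq : ℕ → ℕ) (hn : StrictMono nseq) (A B : ℝ) (hA : 0 < A) (hB : 0 < B)
    (hbound : ∀ k : ℕ, ∀ x ∈ Icc a b, |F (nseq k) x| ≤
        B * A ^ (nseq k) * (Nat.factorial (nseq k) : ℝ))
    (m : ℕ) (z : ℕ → ℝ) (hz : Antitone z) (hmem : ∀ i, z i ∈ Icc a b)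
    (h0 : ∀ i, F (m + i) (z i) = 0) (y : ℝ) (hy : y ∈ Icc a b)
    (hδ : ∀ N, A * (|y - z 0| + (z 0 - z N)) ≤ 1 / 2) : F m y = 0 := by
  have hlim : Filter.Tendsto (fun n : ℕ => B * (2 * A) ^ m * ((n : ℝ) ^ m * (1 / 2 : ℝ) ^ n))
      Filter.atTop (nhds 0) := by
    have := tendsto_pow_const_mul_const_pow_of_abs_lt_one m (r := (1 / 2 : ℝ))
      (by rw [abs_of_pos] <;> norm_num)
    simpa using this.const_mul (B * (2 * A) ^ m)
  have hlim2 := hlim.comp hn.tendsto_atTop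
  have hle : ∀ᶠ k in Filter.atTop, |F m y| ≤
      ((fun n : ℕ => B * (2 * A) ^ m * ((n : ℝ) ^ m * (1 / 2 : ℝ) ^ n)) ∘ nseq) k := by
    filter_upwards [hn.tendsto_atTop.eventually_ge_atTop m] with k hk
    simp only [Function.comp]
    have hb := hbound k
    generalize nseq k = n at hk hb
    obtain ⟨N, rfl⟩ := Nat.exists_eq_add_of_le hk
    have h1 := gon_bound F hd (B * A ^ (m + N) * (Nat.factorial (m + N) : ℝ)) (by positivity)
      N m z hz hmem h0 hb y hy
    refine h1.trans ?_
    have hd0 : 0 ≤ |y - z 0| + (z 0 - z N) :=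
      add_nonneg (abs_nonneg _) (sub_nonneg.2 (hz (Nat.zero_le _)))
    have h2 := hδ N
    generalize |y - z 0| + (z 0 - z N) = δ at hd0 h2
    have h3 : ((m + N).factorial : ℝ) ≤ (N.factorial : ℝ) * ((m + N : ℕ) : ℝ) ^ m := by
      have e := Nat.factorial_mul_descFactorial (n := m + N) (k := m) hk
      rw [Nat.add_sub_cancel_left] at e
      rw [← e]
      have := Nat.descFactorial_le_pow (m + N) m
      exact_mod_cast Nat.mul_le_mul_left _ this
    have h4 : (A * δ) ^ N ≤ (1 / 2) ^ N := by gcongr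
    have hN : (0 : ℝ) < N.factorial := by positivity
    calc B * A ^ (m + N) * ((m + N).factorial : ℝ) * δ ^ N / (N.factorial : ℝ)
        = B * A ^ m * (A * δ) ^ N * (((m + N).factorial : ℝ) / N.factorial) := by
          rw [mul_pow, pow_add]; ring
      _ ≤ B * A ^ m * (1 / 2) ^ N * ((m + N : ℕ) : ℝ) ^ m := by
          gcongr
          rw [div_le_iff₀ hN]; linarith
      _ = B * (2 * A) ^ m * (((m + N : ℕ) : ℝ) ^ m * (1 / 2 : ℝ) ^ (m + N)) := by
          have : (2 : ℝ) ^ m * (1 / 2) ^ m = 1 := by rw [← mul_pow]; norm_num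
          rw [mul_pow, pow_add]
          linear_combination (-(B * A ^ m * (1 / 2) ^ N * ((m + N : ℕ) : ℝ) ^ m)) * this
  have := ge_of_tendsto hlim2 hle
  exact abs_nonpos_iff.1 this

theorem stmt_19 (a b : ℝ) (hab : a < b) (nseq : ℕ → ℕ) (hn : StrictMono nseq)
    (f : ℝ → ℝ) (hf : ContDiffOn ℝ (⊤ : ℕ∞) f (Icc a b))
    (A B : ℝ) (hA : 0 < A) (hB : 0 < B)
    (hbound : ∀ k : ℕ, ∀ x ∈ Icc a b,
      |iteratedDerivWithin (nseq k) f (Icc a b) x| ≤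
        B * A ^ (nseq k) * (Nat.factorial (nseq k) : ℝ))
    (x : ℕ → ℝ) (hmem : ∀ n, x n ∈ Icc a b) (hx : StrictAnti x)
    (hconv : Summable (fun j : ℕ => |x j - x (j + 1)|))
    (hzero : ∀ n : ℕ, iteratedDerivWithin n f (Icc a b) (x n) = 0) :
    ∀ y ∈ Icc a b, f y = 0 := by
  have hd : ∀ n, ∀ t ∈ Icc a b, HasDerivWithinAt (iteratedDerivWithin n f (Icc a b))
      (iteratedDerivWithin (n + 1) f (Icc a b) t) (Icc a b) t := by
    intro n t ht
    rw [iteratedDerivWithin_succ]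
    exact ((hf.differentiableOn_iteratedDerivWithin (by exact_mod_cast ENat.natCast_lt_top n)
      (uniqueDiffOn_Icc hab)) t ht).hasDerivWithinAt
  have hf0 : iteratedDerivWithin 0 f (Icc a b) = f := iteratedDerivWithin_zero
  generalize hF : (fun n => iteratedDerivWithin n f (Icc a b)) = F
  have hFn : ∀ n, iteratedDerivWithin n f (Icc a b) = F n := fun n => by rw [← hF]
  simp only [hFn] at hd hbound hzero hf0
  have hanti := hx.antitone
  have hbdd : BddBelow (range x) := ⟨a, by rintro _ ⟨n, rfl⟩; exact (hmem n).1⟩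
  have hlim := tendsto_atTop_ciInf hanti hbdd
  set l := ⨅ i, x i with hl
  have hlx : ∀ n, l ≤ x n := fun n => ciInf_le hbdd n
  obtain ⟨m, hm⟩ := (hlim.eventually_lt_const
    (show l < l + 1 / (2 * A) by linarith [show 0 < 1 / (2 * A) by positivity])).exists
  have hm' : A * (x m - l) ≤ 1 / 2 := by
    have : x m - l ≤ 1 / (2 * A) := by linarith
    calc A * (x m - l) ≤ A * (1 / (2 * A)) := by gcongr
      _ = 1 / 2 := by field_simp
  have hxm : ∀ r, m ≤ r → F r (x m) = 0 := by
    intro r hr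
    refine gon_vanish F hd nseq hn A B hA hB hbound r (fun i => x (r + i))
      (fun i j hij => hanti (by omega)) (fun i => hmem _) (fun i => hzero _) (x m) (hmem m) ?_
    intro N
    simp only [add_zero]
    rw [abs_of_nonneg (sub_nonneg.2 (hanti hr))]
    refine le_trans ?_ hm'
    gcongr
    linarith [hlx (r + N)]
  have hprop : ∀ j : ℕ, ∀ y ∈ Icc a b, A * |y - x m| ≤ j / 2 → ∀ r, m ≤ r → F r y = 0 := by
    intro j
    induction j with
    | zero =>
      intro y _ hj r hr
      have h1 : |y - x m| ≤ 0 := by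
        by_contra! h
        have := mul_pos hA h
        simp at hj
        linarith
      have : y = x m := by linarith [abs_nonpos_iff.1 h1]
      rw [this]; exact hxm r hr
    | succ j ih =>
      intro y hy hj r hr
      have hj1 : (0 : ℝ) < (j : ℝ) + 1 := by positivity
      set s : ℝ := j / (j + 1) with hs
      have hs0 : 0 ≤ s := by positivity
      have hs1 : s ≤ 1 := by rw [hs, div_le_one hj1]; linarith
      have hc : x m + s * (y - x m) ∈ Icc a b := by
        simpa using (convex_Icc a b).add_smul_sub_mem (hmem m) hy ⟨hs0, hs1⟩
      push_cast at hj
      have hc0 := ih _ hc (by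
        rw [add_sub_cancel_left, abs_mul, abs_of_nonneg hs0]
        calc A * (s * |y - x m|) = s * (A * |y - x m|) := by ring
          _ ≤ s * ((j + 1) / 2) := by gcongr
          _ = j / 2 := by rw [hs]; field_simp)
      refine gon_vanish F hd nseq hn A B hA hB hbound r (fun _ => x m + s * (y - x m))
        antitone_const (fun _ => hc) (fun i => hc0 _ (by omega)) y hy ?_
      intro N
      have e : y - (x m + s * (y - x m)) = (1 - s) * (y - x m) := by ring
      rw [sub_self, add_zero, e, abs_mul, abs_of_nonneg (by linarith)]
      calc A * ((1 - s) * |y - x m|) = (1 - s) * (A * |y - x m|) := by ring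
        _ ≤ (1 - s) * ((j + 1) / 2) := by gcongr
        _ = 1 / 2 := by rw [hs]; field_simp; try ring
  have hFm : ∀ t ∈ Icc a b, |F (0 + m) t| ≤ 0 := by
    intro t ht
    obtain ⟨j, hj⟩ := exists_nat_ge (2 * (A * |t - x m|))
    rw [zero_add, hprop j t ht (by linarith) m le_rfl, abs_zero]
  intro y hy
  have := gon_bound F hd 0 le_rfl m 0 x hanti hmem (fun i => by rw [zero_add]; exact hzero i)
    hFm y hy
  rw [← hf0]
  rw [zero_mul, zero_div] at this
  exact abs_nonpos_iff.1 this
end
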